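/- Let q be a power of an odd prime p and let t₀ := diag(−1,1,−1) ∈ SU_3(q). Let ϑ be an irreducible complex character of the Borel subgroup B of SU_3(q) of degree q²−q whose character field is not contained in ℝ. If ϑ(t₀) = q−1, then ϑ has unitary discriminant q when q ≡ 1 (mod 4) and −1 when q ≡ 3 (mod 4); if ϑ(t₀) = −(q−1), then ϑ has unitary discriminant 1 when q ≡ 1 (mod 4) and −q when q ≡ 3 (mod 4). -/

import Mathlib

open Matrix

noncomputable section

namespace Paper

/-- The character of a matrix representation. -/
def charOf {G : Type} [Group G] {n : ℕ} (ρ : G →* GL (Fin n) ℂ) : G → ℂ :=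
  fun g => Matrix.trace ((ρ g : Matrix (Fin n) (Fin n) ℂ))

/-- Irreducibility of a complex matrix representation. -/
def IsIrredRep {G : Type} [Group G] {n : ℕ} (ρ : G →* GL (Fin n) ℂ) : Prop :=
  0 < n ∧ ∀ W : Submodule ℂ (Fin n → ℂ),
    (∀ (g : G), ∀ v ∈ W, (ρ g : Matrix (Fin n) (Fin n) ℂ).mulVec v ∈ W) → W = ⊥ ∨ W = ⊤

/-- `χ` is an irreducible complex character of `G`. -/
def IsIrrChar {G : Type} [Group G] (χ : G → ℂ) : Prop :=
  ∃ (n : ℕ) (ρ : G →* GL (Fin n) ℂ), IsIrredRep ρ ∧ χ = charOf ρ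

/-- The character field `ℚ(χ)`, as a subfield of `ℂ`. -/
def charField {G : Type} [Group G] (χ : G → ℂ) : Subfield ℂ :=
  Subfield.closure (Set.range χ)

/-- The subfield of real numbers inside `ℂ`. -/
def realsIn : Subfield ℂ := Subfield.closure (Set.range ((↑) : ℝ → ℂ))

/-- The character field of `χ` is not contained in `ℝ`. -/
def NotReal {G : Type} [Group G] (χ : G → ℂ) : Prop := ¬ charField χ ≤ realsIn

/-- `χ` has unitary discriminant `d`. -/
def HasUnitaryDisc {G : Type} [Group G] (χ : G → ℂ) (d : ℂ) : Prop :=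
  ∀ (n : ℕ) (ρ : G →* GL (Fin n) ℂ),
    χ = charOf ρ →
    (∀ g i j, ((ρ g : Matrix (Fin n) (Fin n) ℂ)) i j ∈ charField χ) →
    ∀ H : Matrix (Fin n) (Fin n) ℂ,
      (∀ i j, H i j ∈ charField χ) →
      IsUnit H.det →
      H.conjTranspose = H →
      (∀ g, ((ρ g : Matrix (Fin n) (Fin n) ℂ)).conjTranspose * H *
        (ρ g : Matrix (Fin n) (Fin n) ℂ) = H) →
      ∃ z ∈ charField χ, z ≠ 0 ∧
        (-1 : ℂ) ^ (n * (n - 1) / 2) * H.det = d * (z * (starRingEnd ℂ) z)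

/-- `χ` has orthogonal discriminant `d`. -/
def HasOrthDisc {G : Type} [Group G] (χ : G → ℂ) (d : ℂ) : Prop :=
  ∀ (n : ℕ) (ρ : G →* GL (Fin n) ℂ),
    χ = charOf ρ →
    (∀ g i j, ((ρ g : Matrix (Fin n) (Fin n) ℂ)) i j ∈ charField χ) →
    ∀ H : Matrix (Fin n) (Fin n) ℂ,
      (∀ i j, H i j ∈ charField χ) →
      IsUnit H.det →
      H.transpose = H →
      (∀ g, ((ρ g : Matrix (Fin n) (Fin n) ℂ)).transpose * H *
        (ρ g : Matrix (Fin n) (Fin n) ℂ) = H) →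
      ∃ z ∈ charField χ, z ≠ 0 ∧
        (-1 : ℂ) ^ (n * (n - 1) / 2) * H.det = d * z ^ 2

/-- `χ` is a rational character. -/
def IsRationalChar {G : Type} [Group G] (χ : G → ℂ) : Prop :=
  ∀ g, ∃ r : ℚ, χ g = (r : ℂ)

/-- `χ` is the character of a representation over `ℚ`. -/
def RealizableOverQ {G : Type} [Group G] (χ : G → ℂ) : Prop :=
  ∃ (n : ℕ) (ρ : G →* GL (Fin n) ℂ), χ = charOf ρ ∧
    ∀ g i j, ∃ r : ℚ, ((ρ g : Matrix (Fin n) (Fin n) ℂ)) i j = (r : ℂ)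

end Paper

namespace Paper

variable (p k : ℕ) (F : Type) [Field F] [Fintype F] [ExpChar F p]

/-- The Gram matrix `Ω` (anti-diagonal ones). -/
def Om : Matrix (Fin 3) (Fin 3) F :=
  Matrix.of fun i j => if (i : ℕ) + (j : ℕ) = 2 then 1 else 0

/-- Entrywise `q`-power Frobenius `Φ` on `3×3` matrices, where `q = p^k`. -/
def Phi : Matrix (Fin 3) (Fin 3) F →+* Matrix (Fin 3) (Fin 3) F :=
  (iterateFrobenius F p k).mapMatrix

/-- The special unitary group `SU₃(q) = {g ∈ SL₃(F_{q²}) : Φ(g)ᵀ·Ω·g = Ω}`. -/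
def SU3 : Subgroup (Matrix.SpecialLinearGroup (Fin 3) F) where
  carrier := {g | (Phi p k F g.val)ᵀ * Om F * g.val = Om F}
  one_mem' := by
    show (Phi p k F (1 : Matrix.SpecialLinearGroup (Fin 3) F).val)ᵀ * Om F *
        (1 : Matrix.SpecialLinearGroup (Fin 3) F).val = Om F
    simp
  mul_mem' := by
    intro a b ha hb
    show (Phi p k F (a.val * b.val))ᵀ * Om F * (a.val * b.val) = Om F
    have ha' : (Phi p k F a.val)ᵀ * Om F * a.val = Om F := ha
    have hb' : (Phi p k F b.val)ᵀ * Om F * b.val = Om F := hb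
    calc (Phi p k F (a.val * b.val))ᵀ * Om F * (a.val * b.val)
        = (Phi p k F b.val)ᵀ * ((Phi p k F a.val)ᵀ * Om F * a.val) * b.val := by
          rw [_root_.map_mul, Matrix.transpose_mul]; simp only [Matrix.mul_assoc]
      _ = (Phi p k F b.val)ᵀ * Om F * b.val := by rw [ha']
      _ = Om F := hb'
  inv_mem' := by
    intro a ha
    show (Phi p k F (a⁻¹).val)ᵀ * Om F * (a⁻¹).val = Om F
    have ha' : (Phi p k F a.val)ᵀ * Om F * a.val = Om F := ha
    have h1 : a.val * (a⁻¹).val = 1 := by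
      rw [← Matrix.SpecialLinearGroup.coe_mul, mul_inv_cancel,
        Matrix.SpecialLinearGroup.coe_one]
    nth_rewrite 1 [← ha']
    calc (Phi p k F (a⁻¹).val)ᵀ * ((Phi p k F a.val)ᵀ * Om F * a.val) * (a⁻¹).val
        = (Phi p k F a.val * Phi p k F (a⁻¹).val)ᵀ * Om F * (a.val * (a⁻¹).val) := by
          rw [Matrix.transpose_mul]; simp only [Matrix.mul_assoc]
      _ = Om F := by rw [← _root_.map_mul, h1, _root_.map_one, Matrix.transpose_one,
            Matrix.one_mul, Matrix.mul_one]

end Paper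

namespace Paper

variable (p k : ℕ) (F : Type) [Field F] [Fintype F] [ExpChar F p]

/-- The Borel subgroup of `SU₃(q)`: the upper triangular matrices in `SU₃(q)`. -/
def Borel : Subgroup ↥(SU3 p k F) where
  carrier := {g | Matrix.BlockTriangular ((g : Matrix.SpecialLinearGroup (Fin 3) F) :
    Matrix (Fin 3) (Fin 3) F) id}
  one_mem' := by
    show Matrix.BlockTriangular ((1 : Matrix.SpecialLinearGroup (Fin 3) F) :
      Matrix (Fin 3) (Fin 3) F) id
    rw [Matrix.SpecialLinearGroup.coe_one]
    exact Matrix.blockTriangular_one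
  mul_mem' := by
    intro a b ha hb
    exact Matrix.BlockTriangular.mul ha hb
  inv_mem' := by
    intro a ha
    show Matrix.BlockTriangular (((a⁻¹ : ↥(SU3 p k F)) : Matrix.SpecialLinearGroup (Fin 3) F) :
      Matrix (Fin 3) (Fin 3) F) id
    have hcoe : (((a⁻¹ : ↥(SU3 p k F)) : Matrix.SpecialLinearGroup (Fin 3) F) :
        Matrix (Fin 3) (Fin 3) F)
        = (((a : ↥(SU3 p k F)) : Matrix.SpecialLinearGroup (Fin 3) F) :
          Matrix (Fin 3) (Fin 3) F)⁻¹ := by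
      rw [show ((a⁻¹ : ↥(SU3 p k F)) : Matrix.SpecialLinearGroup (Fin 3) F)
        = ((a : ↥(SU3 p k F)) : Matrix.SpecialLinearGroup (Fin 3) F)⁻¹ from rfl]
      rw [Matrix.SpecialLinearGroup.coe_inv, Matrix.inv_def,
        ((a : ↥(SU3 p k F)) : Matrix.SpecialLinearGroup (Fin 3) F).2]
      simp
    rw [hcoe]
    haveI : Invertible (((a : ↥(SU3 p k F)) : Matrix.SpecialLinearGroup (Fin 3) F) :
        Matrix (Fin 3) (Fin 3) F) := by
      apply Matrix.invertibleOfIsUnitDet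
      rw [((a : ↥(SU3 p k F)) : Matrix.SpecialLinearGroup (Fin 3) F).2]
      exact isUnit_one
    exact Matrix.blockTriangular_inv_of_blockTriangular ha

end Paper

/-!
Over the character field `L` every invariant Hermitian form is anisotropic. The involution `t₀`
commutes with the root subgroup `A ≅ (𝔽_q, +)` and the torus, hence splits the space into
orthogonal eigenspaces, whose dimensions are determined by `ϑ(t₀) = ±(q - 1)`.

On both eigenspaces the torus contains an element `s` inverting `A`. Put `y = -s⁻²`. For a
nontrivial `x ∈ A` the product `∏ i ≤ p / 2, (Y x⁻ⁱ - xⁱ)`, taken over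
`Y = y, y ^ p, y ^ (p ^ 2), …`, is an endomorphism `b` for which the space is the direct sum of
`W = ker (s - b)` and `ker (s + b)`. When `t₀ = -1`, the isometry `s` maps `W` onto its orthogonal
complement, and the discriminant is `1`. When `t₀ = 1` and `q ≡ 3 (mod 4)`, the same holds for `s`
times the quadratic Gauss sum of `x`, which is a similitude of ratio `p`. When `t₀ = 1` and
`q ≡ 1 (mod 4)`, the group `A` and a torus element of order `2(q - 1)` act as a Frobenius group,
whose fixed vectors yield a basis with an explicit Gram matrix.

The construction of `b` breaks down on the eigenspace `s² = -1`. As `ϑ` is not real, `L` contains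
a root of unity `w` with `w ^ (q + 1) = 1` and `w² ≠ 1`, and there `s` is replaced by `w * s`.
-/

namespace Paper

/-! ### Anisotropic Hermitian forms and their discriminants -/

section Hermitian

open Module LinearMap

variable {L V ι κ : Type*} [Field L] [StarRing L] [AddCommGroup V] [Module L V]
  {B : V →ₗ⋆[L] V →ₗ[L] L}

/-- `a` and `d` agree up to a norm `z * star z` of `L` over the fixed field of `star`. -/
def NormEquiv (a d : L) : Prop := ∃ z : L, z ≠ 0 ∧ a = d * (z * star z)

theorem NormEquiv.refl (a : L) : NormEquiv a a := ⟨1, one_ne_zero, by simp⟩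

theorem NormEquiv.symm {a d : L} : NormEquiv a d → NormEquiv d a := by
  rintro ⟨z, hz, rfl⟩
  have hz' : star z ≠ 0 := star_ne_zero.2 hz
  exact ⟨z⁻¹, inv_ne_zero hz, by rw [star_inv₀]; field_simp⟩

theorem NormEquiv.trans {a b c : L} : NormEquiv a b → NormEquiv b c → NormEquiv a c := by
  rintro ⟨z, hz, rfl⟩ ⟨y, hy, rfl⟩
  exact ⟨y * z, mul_ne_zero hy hz, by rw [star_mul]; ring⟩

theorem NormEquiv.mul {a b c d : L} : NormEquiv a b → NormEquiv c d →
    NormEquiv (a * c) (b * d) := by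
  rintro ⟨z, hz, rfl⟩ ⟨y, hy, rfl⟩
  exact ⟨z * y, mul_ne_zero hz hy, by rw [star_mul]; ring⟩

theorem NormEquiv.ne_zero {a d : L} : NormEquiv a d → d ≠ 0 → a ≠ 0 := by
  rintro ⟨z, hz, rfl⟩ hd
  exact mul_ne_zero hd (mul_ne_zero hz (star_ne_zero.2 hz))

theorem normEquiv_mul_sq {r : L} (hr : r ≠ 0) (hstar : star r = r) (a : L) :
    NormEquiv (a * r ^ 2) a :=
  ⟨r, hr, by rw [hstar, sq]⟩

theorem normEquiv_pow_of_mod_two {r : L} (hr : r ≠ 0) (hstar : star r = r) {m n : ℕ}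
    (h : m % 2 = n % 2) : NormEquiv (r ^ m) (r ^ n) := by
  wlog hmn : n ≤ m
  · exact (this hr hstar h.symm (by omega)).symm
  obtain ⟨c, rfl⟩ : ∃ c, m = n + 2 * c := ⟨(m - n) / 2, by omega⟩
  rw [pow_add, pow_mul']
  exact normEquiv_mul_sq (pow_ne_zero c hr) (by rw [star_pow, hstar]) _

/-- A Hermitian form without nonzero isotropic vectors. -/
structure IsAnisotropicHermitian (B : V →ₗ⋆[L] V →ₗ[L] L) : Prop where
  isSymm : B.IsSymm
  anisotropic : ∀ v, B v v = 0 → v = 0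

/-- The determinant of some (equivalently, every) Gram matrix of `B` is `d` up to norms. -/
def HasDisc (B : V →ₗ⋆[L] V →ₗ[L] L) (d : L) : Prop :=
  ∃ (n : ℕ) (b : Basis (Fin n) L V), NormEquiv (toMatrix₂ b b B).det d

theorem HasDisc.congr {d d' : L} : HasDisc B d → NormEquiv d d' → HasDisc B d' := by
  rintro ⟨n, b, hb⟩ h
  exact ⟨n, b, hb.trans h⟩

section Basis

variable [Fintype ι] [DecidableEq ι] [Fintype κ] [DecidableEq κ]

theorem toMatrix₂_eq_conjTranspose_mul_mul (b : Basis ι L V) (c : Basis κ L V) :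
    toMatrix₂ c c B = (b.toMatrix c)ᴴ * toMatrix₂ b b B * b.toMatrix c := by
  ext i j
  simp only [toMatrix₂_apply, Matrix.mul_apply, Matrix.conjTranspose_apply]
  conv_lhs => rw [← b.sum_toMatrix_smul_self c i, ← b.sum_toMatrix_smul_self c j]
  simp only [map_sum, LinearMap.sum_apply, map_smulₛₗ, LinearMap.smul_apply, smul_eq_mul,
    RingHom.id_apply, starRingEnd_apply]
  exact Finset.sum_congr rfl fun k _ => mul_comm _ _

theorem normEquiv_det_toMatrix₂ (b c : Basis ι L V) :
    NormEquiv (toMatrix₂ c c B).det (toMatrix₂ b b B).det := by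
  refine ⟨(b.toMatrix c).det, ?_, ?_⟩
  · exact left_ne_zero_of_mul_eq_one (by
      rw [← Matrix.det_mul, b.toMatrix_mul_toMatrix_flip c, Matrix.det_one])
  · rw [toMatrix₂_eq_conjTranspose_mul_mul b c, Matrix.det_mul, Matrix.det_mul,
      Matrix.det_conjTranspose]
    ring

theorem det_toMatrix₂_reindex (b : Basis ι L V) (e : ι ≃ κ) :
    (toMatrix₂ (b.reindex e) (b.reindex e) B).det = (toMatrix₂ b b B).det := by
  rw [← Matrix.det_submatrix_equiv_self e.symm (toMatrix₂ b b B)]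
  congr 1
  ext i j
  simp [toMatrix₂_apply]

theorem hasDisc_of_basis (b : Basis ι L V) {d : L} (h : NormEquiv (toMatrix₂ b b B).det d) :
    HasDisc B d :=
  ⟨_, b.reindex (Fintype.equivFin ι), by rwa [det_toMatrix₂_reindex]⟩

theorem HasDisc.normEquiv_det {d : L} (h : HasDisc B d) (c : Basis κ L V) :
    NormEquiv (toMatrix₂ c c B).det d := by
  obtain ⟨n, b, hb⟩ := h
  rw [← det_toMatrix₂_reindex c (b.indexEquiv c).symm]
  exact (normEquiv_det_toMatrix₂ b _).trans hb

end Basis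

namespace IsAnisotropicHermitian

theorem domRestrict₁₂ (hB : IsAnisotropicHermitian B) (W : Submodule L V) :
    IsAnisotropicHermitian (B.domRestrict₁₂ W W) :=
  ⟨hB.isSymm.domRestrict W, fun v hv => Subtype.ext (hB.anisotropic v hv)⟩

theorem disjoint_of_orthogonal (hB : IsAnisotropicHermitian B) {W₁ W₂ : Submodule L V}
    (h : ∀ v ∈ W₁, ∀ w ∈ W₂, B v w = 0) : Disjoint W₁ W₂ :=
  Submodule.disjoint_def.2 fun v h₁ h₂ => hB.anisotropic v (h v h₁ v h₂)

theorem isCompl_orthogonalBilin [FiniteDimensional L V] (hB : IsAnisotropicHermitian B)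
    (W : Submodule L V) : IsCompl W (W.orthogonalBilin B) := by
  refine ⟨hB.disjoint_of_orthogonal fun v hv w hw => hw v hv, ?_⟩
  let b := Module.finBasis L W
  let coords : V →ₗ[L] (Fin (finrank L W) → L) := LinearMap.pi fun i => B (b i)
  have coords_eq_zero {v : V} (hv : coords v = 0) : ∀ w ∈ W, B w v = 0 := fun w hw => by
    lift w to W using hw
    rw [← b.sum_repr w]
    simp only [AddSubmonoidClass.coe_finsetSum, Submodule.coe_smul, map_sum, LinearMap.sum_apply,
      map_smulₛₗ, LinearMap.smul_apply]
    exact Finset.sum_eq_zero fun i _ => by rw [show B (b i) v = 0 from congrFun hv i, smul_zero]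
  have inj : Function.Injective (coords ∘ₗ W.subtype) :=
    (injective_iff_map_eq_zero _).2 fun w hw =>
      Subtype.ext (hB.anisotropic w (coords_eq_zero hw w w.2))
  have surj := (injective_iff_surjective_of_finrank_eq_finrank (by simp)).1 inj
  rw [codisjoint_iff, eq_top_iff]
  intro v _
  obtain ⟨w, hw⟩ := surj (coords v)
  refine Submodule.mem_sup.2 ⟨w, w.2, v - w, ?_, by abel⟩
  exact coords_eq_zero (by rw [map_sub, sub_eq_zero]; exact hw.symm)

theorem star_det_toMatrix₂ [Fintype ι] [DecidableEq ι] (hB : IsAnisotropicHermitian B)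
    (b : Basis ι L V) : star (toMatrix₂ b b B).det = (toMatrix₂ b b B).det := by
  rw [← Matrix.det_conjTranspose, ((isSymm_iff_isHermitian_toMatrix b).1 hB.isSymm).eq]

theorem det_toMatrix₂_ne_zero [Fintype ι] [DecidableEq ι] (hB : IsAnisotropicHermitian B)
    (b : Basis ι L V) : (toMatrix₂ b b B).det ≠ 0 := by
  intro h
  obtain ⟨v, hv, h0⟩ := Matrix.exists_mulVec_eq_zero_iff.2 h
  have := star_dotProduct_toMatrix₂_mulVec (B := B) b v v
  rw [h0, dotProduct_zero] at this
  exact hv (b.equivFun.symm.map_eq_zero_iff.1 (hB.anisotropic _ this.symm))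

end IsAnisotropicHermitian

theorem HasDisc.mul_of_isCompl (hB : B.IsSymm) {W₁ W₂ : Submodule L V} (hc : IsCompl W₁ W₂)
    (ho : ∀ v ∈ W₁, ∀ w ∈ W₂, B v w = 0) {d₁ d₂ : L} (h₁ : HasDisc (B.domRestrict₁₂ W₁ W₁) d₁)
    (h₂ : HasDisc (B.domRestrict₁₂ W₂ W₂) d₂) : HasDisc B (d₁ * d₂) := by
  obtain ⟨m, b, hb⟩ := h₁
  obtain ⟨n, c, hc'⟩ := h₂
  let e := (b.prod c).map (Submodule.prodEquivOfIsCompl W₁ W₂ hc)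
  have gram_eq : toMatrix₂ e e B = Matrix.fromBlocks (toMatrix₂ b b (B.domRestrict₁₂ W₁ W₁)) 0 0
      (toMatrix₂ c c (B.domRestrict₁₂ W₂ W₂)) := by
    ext (i | i) (j | j)
    · simp [e, toMatrix₂_apply, domRestrict₁₂_apply]
    · simpa [e, toMatrix₂_apply, Submodule.coe_prodEquivOfIsCompl] using ho _ (b i).2 _ (c j).2
    · simpa [e, toMatrix₂_apply, Submodule.coe_prodEquivOfIsCompl] using
        hB.eq_iff.1 (ho _ (b j).2 _ (c i).2)
    · simp [e, toMatrix₂_apply, domRestrict₁₂_apply]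
  refine hasDisc_of_basis e ?_
  rw [gram_eq, Matrix.det_fromBlocks_zero₁₂]
  exact hb.mul hc'

theorem hasDisc_of_similitude [FiniteDimensional L V] (hB : IsAnisotropicHermitian B) {r : L}
    (hr : r ≠ 0) {u : V →ₗ[L] V} (hu : ∀ v w, B (u v) (u w) = r * B v w) {F : Submodule L V}
    (horth : ∀ v ∈ F, ∀ w ∈ F, B (u v) w = 0) (hdim : finrank L V = 2 * finrank L F) :
    HasDisc B (r ^ finrank L F) := by
  have u_injective : Function.Injective u := (injective_iff_map_eq_zero u).2 fun v hv =>
    hB.anisotropic v (by simpa [hv, hr] using hu v v)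
  have orth : ∀ v ∈ F.map u, ∀ w ∈ F, B v w = 0 := by
    rintro _ ⟨v, hv, rfl⟩ w hw
    exact horth v hv w hw
  have disj := hB.disjoint_of_orthogonal orth
  let b := Module.finBasis L F
  let e := F.equivMapOfInjective u u_injective
  have hcompl : IsCompl (F.map u) F := ⟨disj, codisjoint_iff.2 (Submodule.eq_top_of_disjoint _ _
    (by rw [← e.finrank_eq, hdim, two_mul]) disj)⟩
  set G := toMatrix₂ b b (B.domRestrict₁₂ F F)
  have gram_map : toMatrix₂ (b.map e) (b.map e) (B.domRestrict₁₂ (F.map u) (F.map u)) = r • G := by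
    ext i j
    simp [G, e, toMatrix₂_apply, domRestrict₁₂_apply, hu]
  refine (HasDisc.mul_of_isCompl hB.isSymm hcompl orth
    (hasDisc_of_basis (b.map e) (by rw [gram_map]; exact NormEquiv.refl _))
    (hasDisc_of_basis b (NormEquiv.refl G.det))).congr ?_
  have hF := hB.domRestrict₁₂ F
  rw [Matrix.det_smul, Fintype.card_fin, mul_assoc, ← sq]
  exact normEquiv_mul_sq (hF.det_toMatrix₂_ne_zero b) (hF.star_det_toMatrix₂ b) _

end Hermitian

/-! ### Half of the geometric sum, and quadratic Gauss sums -/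

section Cyclotomic

open Polynomial

variable {R S : Type*} [CommRing R] [CommRing S] {p : ℕ}

theorem pow_eq_one_of_geom_sum_eq_zero {A : Type*} [Ring A] {x : A} {n : ℕ}
    (h : ∑ i ∈ Finset.range n, x ^ i = 0) : x ^ n = 1 := by
  rw [← sub_eq_zero, ← geom_sum_mul, h, zero_mul]

theorem exists_primitiveRoot_lift (hp : p.Prime) {x : R} (hx : ∑ i ∈ Finset.range p, x ^ i = 0) :
    ∃ (D : Type) (_ : CommRing D) (_ : IsDomain D) (_ : CharZero D) (ζ : D) (f : D →+* R),
      IsPrimitiveRoot ζ p ∧ f ζ = x := by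
  have : Fact p.Prime := ⟨hp⟩
  have : IsDomain (AdjoinRoot (cyclotomic p ℤ)) :=
    AdjoinRoot.isDomain_of_prime (cyclotomic.irreducible hp.pos).prime
  have : CharZero (AdjoinRoot (cyclotomic p ℤ)) :=
    charZero_of_injective_ringHom (AdjoinRoot.of.injective_of_degree_ne_zero
      (degree_cyclotomic_pos p ℤ hp.pos).ne')
  have hroot : eval₂ (Int.castRingHom R) x (cyclotomic p ℤ) = 0 := by
    rw [cyclotomic_prime]
    simpa [eval₂_finsetSum] using hx
  refine ⟨_, inferInstance, ‹_›, ‹_›, AdjoinRoot.root (cyclotomic p ℤ),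
    AdjoinRoot.lift (Int.castRingHom R) x hroot, ?_, AdjoinRoot.lift_root _⟩
  have : NeZero (p : AdjoinRoot (cyclotomic p ℤ)) := ⟨Nat.cast_ne_zero.2 hp.ne_zero⟩
  rw [← isRoot_cyclotomic_iff, ← map_cyclotomic p (AdjoinRoot.of (cyclotomic p ℤ))]
  exact AdjoinRoot.isRoot_root _

theorem prod_X_sub_C_mul_X_sub_C_of_isPrimitiveRoot {D : Type*} [CommRing D] [IsDomain D] {m : ℕ}
    {ω : D} (h : IsPrimitiveRoot ω (2 * m + 1)) :
    ∏ i ∈ Finset.range m, ((X - C (ω ^ (i + 1))) * (X - C (ω ^ (2 * m + 1 - (i + 1))))) =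
      ∑ i ∈ Finset.range (2 * m + 1), (X : D[X]) ^ i := by
  have hX : (X : D[X]) - 1 ≠ 0 := by simpa using X_sub_C_ne_zero (1 : D)
  apply mul_right_cancel₀ hX
  have all_roots := X_pow_sub_C_eq_prod h (by omega) (one_pow (2 * m + 1))
  rw [Finset.prod_range_succ', two_mul, Finset.prod_range_add] at all_roots
  rw [geom_sum_mul, ← C_1, two_mul, all_roots, Finset.prod_mul_distrib]
  simp only [mul_one, pow_zero]
  congr 2
  rw [← Finset.prod_range_reflect]
  refine Finset.prod_congr rfl fun i hi => ?_
  have := Finset.mem_range.1 hi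
  rw [show m + m + 1 - (m - 1 - i + 1) = m + i + 1 by omega]

/-- The product of `Y * x⁻ⁱ - xⁱ` for `1 ≤ i ≤ p / 2`, where `x'` stands for `x⁻¹`; for a root `x`
of the `p`-th cyclotomic polynomial it is one of two conjugate factors of `1 + Y + ⋯ + Y ^ (p - 1)`
(see `halfGeomSum_mul_swap`). -/
def halfGeomSum (p : ℕ) (x x' Y : R) : R :=
  ∏ i ∈ Finset.range (p / 2), (Y * x' ^ (i + 1) - x ^ (i + 1))

/-- The product of the `halfGeomSum`s at `y, y ^ p, …, y ^ (p ^ (k - 1))`: one of two conjugate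
factors of `1 + y + ⋯ + y ^ (p ^ k - 1)`. -/
def halfGeomSumTower (p k : ℕ) (x x' y : R) : R :=
  ∏ j ∈ Finset.range k, halfGeomSum p x x' (y ^ p ^ j)

theorem halfGeomSum_mul_swap (hp : p.Prime) (hodd : Odd p) {x x' : R} (hx : x * x' = 1)
    (hsum : ∑ i ∈ Finset.range p, x ^ i = 0) (Y : R) :
    halfGeomSum p x x' Y * halfGeomSum p x' x Y = ∑ i ∈ Finset.range p, Y ^ i := by
  obtain ⟨m, rfl⟩ := hodd
  obtain ⟨D, _, _, _, ζ, f, hζ, rfl⟩ := exists_primitiveRoot_lift hp hsum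
  have hω : IsPrimitiveRoot (ζ ^ 2) (2 * m + 1) := hζ.pow_of_coprime 2 (by simp)
  have key := congrArg (eval₂ f Y) (prod_X_sub_C_mul_X_sub_C_of_isPrimitiveRoot hω)
  simp only [eval₂_finsetProd, eval₂_finsetSum, eval₂_mul, eval₂_sub, eval₂_X, eval₂_C,
    eval₂_pow, map_pow] at key
  rw [← key, halfGeomSum, halfGeomSum, ← Finset.prod_mul_distrib,
    show (2 * m + 1) / 2 = m by omega]
  refine Finset.prod_congr rfl fun i hi => ?_
  have hi' := Finset.mem_range.1 hi
  have cancel : f ζ ^ (i + 1) * x' ^ (i + 1) = 1 := by rw [← mul_pow, hx, one_pow]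
  have reflect : (f ζ ^ 2) ^ (2 * m + 1 - (i + 1)) = (x' ^ (i + 1)) ^ 2 := by
    have h : (f ζ ^ 2) ^ (2 * m + 1 - (i + 1)) * (f ζ ^ (i + 1)) ^ 2 = 1 := by
      rw [← pow_mul, ← pow_mul, ← pow_add,
        show 2 * (2 * m + 1 - (i + 1)) + (i + 1) * 2 = (2 * m + 1) * 2 by omega, pow_mul,
        ← map_pow, hζ.pow_eq_one, map_one, one_pow]
    calc _ = (f ζ ^ 2) ^ (2 * m + 1 - (i + 1)) * (f ζ ^ (i + 1) * x' ^ (i + 1)) ^ 2 := by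
            rw [cancel, one_pow, mul_one]
      _ = _ := by rw [mul_pow, ← mul_assoc, h, one_mul]
  rw [reflect, ← pow_mul, mul_comm 2, pow_mul]
  linear_combination (Y ^ 2 - f ζ ^ (i + 1) * x' ^ (i + 1)) * cancel

theorem sub_one_mul_halfGeomSumTower_mul_swap (hp : p.Prime) (hodd : Odd p) {x x' : R}
    (hx : x * x' = 1) (hsum : ∑ i ∈ Finset.range p, x ^ i = 0) (k : ℕ) (y : R) :
    (y - 1) * (halfGeomSumTower p k x x' y * halfGeomSumTower p k x' x y) = y ^ p ^ k - 1 := by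
  induction k with
  | zero => simp [halfGeomSumTower]
  | succ k ih =>
    unfold halfGeomSumTower at ih ⊢
    rw [Finset.prod_range_succ, Finset.prod_range_succ, pow_succ p, pow_mul,
      ← geom_sum_mul (y ^ p ^ k) p, ← halfGeomSum_mul_swap hp hodd hx hsum, ← ih]
    ring

theorem halfGeomSum_swap {x x' Y Y' : R} (hY : Y * Y' = 1) :
    halfGeomSum p x' x Y' = (-Y') ^ (p / 2) * halfGeomSum p x x' Y := by
  rw [halfGeomSum, halfGeomSum, ← Finset.card_range (p / 2), ← Finset.prod_const,
    Finset.card_range, ← Finset.prod_mul_distrib]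
  exact Finset.prod_congr rfl fun i _ => by linear_combination (x' ^ (i + 1)) * hY

theorem sum_pow_mul_half_of_odd (hodd : Odd p) (k : ℕ) :
    ∑ j ∈ Finset.range k, p ^ j * (p / 2) = p ^ k / 2 := by
  obtain ⟨m, rfl⟩ := hodd
  have h := geom_sum_mul_add (2 * m) k
  rw [← Finset.sum_mul, ← h, show (2 * m + 1) / 2 = m by omega, mul_left_comm]
  omega

theorem halfGeomSumTower_swap (hodd : Odd p) (k : ℕ) {x x' y y' : R} (hy : y * y' = 1) :
    halfGeomSumTower p k x' x y' = (-y') ^ (p ^ k / 2) * halfGeomSumTower p k x x' y := by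
  rw [halfGeomSumTower, halfGeomSumTower, ← sum_pow_mul_half_of_odd hodd,
    ← Finset.prod_pow_eq_pow_sum, ← Finset.prod_mul_distrib]
  refine Finset.prod_congr rfl fun j _ => ?_
  rw [halfGeomSum_swap (Y := y ^ p ^ j) (by rw [← mul_pow, hy, one_pow]), pow_mul,
    hodd.pow.neg_pow]

theorem map_halfGeomSumTower (f : R →+* S) (k : ℕ) (x x' y : R) :
    f (halfGeomSumTower p k x x' y) = halfGeomSumTower p k (f x) (f x') (f y) := by
  simp [halfGeomSumTower, halfGeomSum]

theorem halfGeomSumTower_mem (T : Subring R) {x x' y : R} (hx : x ∈ T) (hx' : x' ∈ T) (hy : y ∈ T)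
    (k : ℕ) : halfGeomSumTower p k x x' y ∈ T :=
  T.prod_mem fun _ _ => T.prod_mem fun _ _ => T.sub_mem
    (T.mul_mem (T.pow_mem hy _) (T.pow_mem hx' _)) (T.pow_mem hx _)

variable [Fact p.Prime]

/-- The quadratic Gauss sum of `p`, with `x` in place of a primitive `p`-th root of unity. -/
def quadraticGaussSum (p : ℕ) [Fact p.Prime] (x : R) : R :=
  ∑ a : ZMod p, (quadraticChar (ZMod p) a : R) * x ^ a.val

theorem map_quadraticGaussSum (f : R →+* S) (x : R) :
    f (quadraticGaussSum p x) = quadraticGaussSum p (f x) := by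
  simp [quadraticGaussSum]

theorem quadraticGaussSum_mem (T : Subring R) {x : R} (hx : x ∈ T) : quadraticGaussSum p x ∈ T :=
  T.sum_mem fun _ _ => T.mul_mem (intCast_mem T _) (T.pow_mem hx _)

theorem quadraticGaussSum_eq_gaussSum {x : R} (hx : x ^ p = 1) :
    quadraticGaussSum p x = gaussSum ((quadraticChar (ZMod p)).ringHomComp (Int.castRingHom R))
      (AddChar.zmodChar p hx) := rfl

theorem quadraticGaussSum_sq (hodd : Odd p) {x : R} (hx : ∑ i ∈ Finset.range p, x ^ i = 0) :
    quadraticGaussSum p x ^ 2 = quadraticChar (ZMod p) (-1) * p := by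
  obtain ⟨D, _, _, _, ζ, f, hζ, rfl⟩ := exists_primitiveRoot_lift Fact.out hx
  have hchar : ringChar (ZMod p) ≠ 2 := by
    rw [ZMod.ringChar_zmod_n]
    rintro rfl
    exact absurd hodd (by decide)
  have key := gaussSum_sq
    ((MulChar.ringHomComp_ne_one_iff (Int.castRingHom D).injective_int).2
      (quadraticChar_ne_one hchar)) ((quadraticChar_isQuadratic (ZMod p)).comp _)
    (AddChar.zmodChar_primitive_of_primitive_root p hζ)
  rw [← quadraticGaussSum_eq_gaussSum hζ.pow_eq_one] at key
  rw [← map_quadraticGaussSum, ← map_pow, key]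
  simp

theorem quadraticGaussSum_inv {x x' : R} (hx : x * x' = 1) (hxp : x ^ p = 1) :
    quadraticGaussSum p x' = quadraticChar (ZMod p) (-1) * quadraticGaussSum p x := by
  have hxp' : x' ^ p = 1 := by rw [← one_pow p, ← hx, mul_pow, hxp, one_mul]
  have shift : (AddChar.zmodChar p hxp).mulShift (-1) = AddChar.zmodChar p hxp' := by
    rw [← AddChar.inv_mulShift, inv_eq_iff_mul_eq_one]
    ext a
    rw [AddChar.mul_apply, AddChar.zmodChar_apply, AddChar.zmodChar_apply, ← mul_pow, hx, one_pow,
      AddChar.one_apply]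
  have key := gaussSum_mulShift_eq ((quadraticChar (ZMod p)).ringHomComp (Int.castRingHom R))
    (AddChar.zmodChar p hxp) (-1)
  rw [((quadraticChar_isQuadratic (ZMod p)).comp _).inv] at key
  rw [quadraticGaussSum_eq_gaussSum hxp', quadraticGaussSum_eq_gaussSum hxp, ← shift]
  simpa using key

end Cyclotomic

/-! ### Dihedral actions by isometries -/

section Dihedral

open Module LinearMap

variable {L V R : Type*} [Field L] [AddCommGroup V] [Module L V] [CommRing R]
  {φ : R →+* Module.End L V} {s : Module.End L V} {x x' y y' : R}

/-- The pairs `(a, b)` for which `s` carries the action of `a` through `φ` to that of `b`. -/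
def intertwinedPairs (φ : R →+* Module.End L V) (s : Module.End L V) : Subring (R × R) where
  carrier := {a | s * φ a.1 = φ a.2 * s}
  zero_mem' := by simp
  one_mem' := by simp
  add_mem' {a b} ha hb := by
    simp only [Set.mem_ofPred_eq, Prod.fst_add, Prod.snd_add, map_add, mul_add, add_mul] at *
    rw [ha, hb]
  neg_mem' {a} ha := by
    simp only [Set.mem_ofPred_eq, Prod.fst_neg, Prod.snd_neg, map_neg, mul_neg, neg_mul] at *
    rw [ha]
  mul_mem' {a b} ha hb := by
    simp only [Set.mem_ofPred_eq, Prod.fst_mul, Prod.snd_mul, map_mul] at *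
    rw [← mul_assoc, ha, mul_assoc, hb, mul_assoc]

theorem mem_intertwinedPairs {a b : R} :
    (a, b) ∈ intertwinedPairs φ s ↔ s * φ a = φ b * s := Iff.rfl

theorem halfGeomSumTower_pair_mem {T : Subring (R × R)} {p : ℕ} {a a' b b' c c' : R}
    (ha : (a, a') ∈ T) (hb : (b, b') ∈ T) (hc : (c, c') ∈ T) (k : ℕ) :
    (halfGeomSumTower p k a b c, halfGeomSumTower p k a' b' c') ∈ T := by
  convert halfGeomSumTower_mem (p := p) T ha hb hc k
  · exact (map_halfGeomSumTower (RingHom.fst R R) k (a, a') (b, b') (c, c')).symm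
  · exact (map_halfGeomSumTower (RingHom.snd R R) k (a, a') (b, b') (c, c')).symm

theorem quadraticGaussSum_pair_mem {T : Subring (R × R)} {p : ℕ} [Fact p.Prime] {a a' : R}
    (ha : (a, a') ∈ T) : (quadraticGaussSum p a, quadraticGaussSum p a') ∈ T := by
  convert quadraticGaussSum_mem (p := p) T ha
  · exact (map_quadraticGaussSum (RingHom.fst R R) (a, a')).symm
  · exact (map_quadraticGaussSum (RingHom.snd R R) (a, a')).symm

section Swap

variable {b b' κ : Module.End L V}

theorem isCompl_ker_sub_ker_add [FiniteDimensional L V] [NeZero (2 : L)]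
    (hs : Function.Injective s) (h : b * b' = s * s) (h' : b' * b = s * s) (hb' : s * b' = b * s) :
    IsCompl (ker (s - b)) (ker (s + b)) := by
  have h2 : (2 : L) ≠ 0 := two_ne_zero
  refine ⟨Submodule.disjoint_def.2 fun v hv hv' => ?_,
    codisjoint_iff.2 (eq_top_iff.2 fun v _ => ?_)⟩
  · rw [mem_ker, LinearMap.sub_apply, sub_eq_zero] at hv
    rw [mem_ker, LinearMap.add_apply, ← hv, ← two_smul L] at hv'
    exact (injective_iff_map_eq_zero s).1 hs v ((smul_eq_zero.1 hv').resolve_left h2)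
  · have hs_surj := LinearMap.surjective_of_injective hs
    obtain ⟨u, rfl⟩ := hs_surj.comp hs_surj v
    set w := (2 : L)⁻¹ • b u
    have sub_mem : (s + b') w ∈ ker (s - b) := by
      have : (s - b) * (s + b') = 0 := by rw [sub_mul, mul_add, mul_add, hb', h]; abel
      exact LinearMap.congr_fun this w
    have add_mem : (b' - s) w ∈ ker (s + b) := by
      have : (s + b) * (b' - s) = 0 := by rw [add_mul, mul_sub, mul_sub, hb', h]; abel
      exact LinearMap.congr_fun this w
    refine Submodule.mem_sup.2 ⟨_, sub_mem, _, add_mem, ?_⟩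
    calc (s + b') w + (b' - s) w = (2 : L) • b' w := by
          rw [LinearMap.add_apply, LinearMap.sub_apply, two_smul]; abel
      _ = (b' * b) u := by rw [map_smul, smul_inv_smul₀ h2, Module.End.mul_apply]
      _ = (s ∘ s) u := by rw [h']; rfl

theorem finrank_eq_two_mul_finrank_ker [FiniteDimensional L V]
    (hcompl : IsCompl (ker (s - b)) (ker (s + b))) (hκ : Function.Injective κ)
    (hs : κ * s = -(s * κ)) (hb : κ * b = b * κ) :
    finrank L V = 2 * finrank L (ker (s - b)) := by
  have hs' (v : V) : s (κ v) = -κ (s v) := by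
    rw [eq_neg_iff_add_eq_zero, add_comm, ← eq_neg_iff_add_eq_zero]
    exact LinearMap.congr_fun hs v
  have hb' (v : V) : b (κ v) = κ (b v) := (LinearMap.congr_fun hb v).symm
  have maps_sub : ∀ v ∈ ker (s - b), κ v ∈ ker (s + b) := fun v hv => by
    rw [mem_ker, LinearMap.add_apply, hs', hb', neg_add_eq_sub, ← map_sub, ← neg_sub,
      ← LinearMap.sub_apply, mem_ker.1 hv, neg_zero, map_zero]
  have maps_add : ∀ v ∈ ker (s + b), κ v ∈ ker (s - b) := fun v hv => by
    rw [mem_ker, LinearMap.sub_apply, hs', hb', ← neg_add', ← map_add, ← LinearMap.add_apply,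
      mem_ker.1 hv, map_zero, neg_zero]
  have le := LinearMap.finrank_le_finrank_of_injective
    (f := κ.restrict maps_sub) (fun v w hvw => Subtype.ext (hκ (congrArg Subtype.val hvw)))
  have ge := LinearMap.finrank_le_finrank_of_injective
    (f := κ.restrict maps_add) (fun v w hvw => Subtype.ext (hκ (congrArg Subtype.val hvw)))
  rw [← Submodule.finrank_add_eq_of_isCompl hcompl]
  omega

end Swap

variable [StarRing L] {B : V →ₗ⋆[L] V →ₗ[L] L}

/-- `f` is an isometry of the sesquilinear form `B`. -/
def IsUnitary (B : V →ₗ⋆[L] V →ₗ[L] L) (f : Module.End L V) : Prop :=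
  ∀ v w, B (f v) (f w) = B v w

theorem IsUnitary.mul {f g : Module.End L V} (hf : IsUnitary B f) (hg : IsUnitary B g) :
    IsUnitary B (f * g) := fun v w => (hf _ _).trans (hg v w)

theorem IsUnitary.pow {f : Module.End L V} (hf : IsUnitary B f) (n : ℕ) : IsUnitary B (f ^ n) := by
  induction n with
  | zero => exact fun _ _ => rfl
  | succ n ih => rw [pow_succ]; exact ih.mul hf

theorem IsUnitary.neg {f : Module.End L V} (hf : IsUnitary B f) : IsUnitary B (-f) :=
  fun v w => by simpa using hf v w

theorem IsUnitary.apply_left {f g : Module.End L V} (hf : IsUnitary B f) (hfg : f * g = 1)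
    (v w : V) : B (f v) w = B v (g w) := by
  rw [← hf v (g w), ← Module.End.mul_apply, hfg, Module.End.one_apply]

/-- The pairs `(a, b)` for which `b` acts through `φ` as the `B`-adjoint of `a`. -/
def adjointPairs (B : V →ₗ⋆[L] V →ₗ[L] L) (φ : R →+* Module.End L V) : Subring (R × R) where
  carrier := {a | ∀ v w, B (φ a.1 v) w = B v (φ a.2 w)}
  zero_mem' := by simp
  one_mem' := by simp
  add_mem' ha hb v w := by simp [ha v w, hb v w]
  neg_mem' ha v w := by simpa using ha v w
  mul_mem' {a b} ha hb v w := by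
    rw [Prod.fst_mul, Prod.snd_mul, mul_comm a.2, map_mul, map_mul, Module.End.mul_apply,
      Module.End.mul_apply, ha, hb]

/-- `V` has some even dimension `2 * d`, and `B` has discriminant `r ^ d`. -/
def HasEvenDisc (B : V →ₗ⋆[L] V →ₗ[L] L) (r : L) : Prop :=
  ∃ d, finrank L V = 2 * d ∧ HasDisc B (r ^ d)

/-- The commutative ring `R` acts on `V` through `φ`, its units `x` and `y` act by isometries, and
`s` is an isometry which inverts `x` and has square `-y⁻¹`; here `x'`, `y'` stand for `x⁻¹`, `y⁻¹`.
-/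
structure IsDihedralAction (B : V →ₗ⋆[L] V →ₗ[L] L) (φ : R →+* Module.End L V)
    (s : Module.End L V) (x x' y y' : R) : Prop where
  isUnitary_s : IsUnitary B s
  isUnitary_x : IsUnitary B (φ x)
  isUnitary_y : IsUnitary B (φ y)
  x_mul : x * x' = 1
  y_mul : y * y' = 1
  s_mul_s : s * s = φ (-y')
  s_mul_x : s * φ x = φ x' * s

namespace IsDihedralAction

variable (h : IsDihedralAction B φ s x x' y y')

include h

theorem adjoint_x : (x, x') ∈ adjointPairs B φ :=
  h.isUnitary_x.apply_left (by rw [← map_mul, h.x_mul, map_one])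

theorem adjoint_y : (y, y') ∈ adjointPairs B φ :=
  h.isUnitary_y.apply_left (by rw [← map_mul, h.y_mul, map_one])

theorem adjoint_x' : (x', x) ∈ adjointPairs B φ := fun v w => by
  rw [← h.isUnitary_x, ← Module.End.mul_apply, ← map_mul, h.x_mul, map_one, Module.End.one_apply]

theorem intertwined_x : (x, x') ∈ intertwinedPairs φ s := h.s_mul_x

theorem intertwined_x' : (x', x) ∈ intertwinedPairs φ s := calc
  s * φ x' = φ (x * x') * (s * φ x') := by rw [h.x_mul, map_one, one_mul]
  _ = φ x * (φ x' * s) * φ x' := by simp only [map_mul, mul_assoc]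
  _ = φ x * s * φ (x * x') := by rw [← h.s_mul_x, map_mul]; simp only [mul_assoc]
  _ = φ x * s := by rw [h.x_mul, map_one, mul_one]

theorem intertwined_y' : (y', y') ∈ intertwinedPairs φ s := by
  rw [mem_intertwinedPairs, ← neg_neg y', map_neg, ← h.s_mul_s, mul_neg, neg_mul, mul_assoc]

theorem intertwined_y : (y, y) ∈ intertwinedPairs φ s := calc
  s * φ y = φ (y * y') * (s * φ y) := by rw [h.y_mul, map_one, one_mul]
  _ = φ y * (φ y' * s) * φ y := by simp only [map_mul, mul_assoc]
  _ = φ y * s * φ (y * y') := by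
    rw [← mem_intertwinedPairs.1 h.intertwined_y', mul_comm y, map_mul]; simp only [mul_assoc]
  _ = φ y * s := by rw [h.y_mul, map_one, mul_one]

theorem s_injective : Function.Injective s := by
  have isUnit_sq : φ y * -(s * s) = 1 := by rw [h.s_mul_s, ← map_neg, ← map_mul, neg_neg, h.y_mul,
    map_one]
  refine (injective_iff_map_eq_zero s).2 fun v hv => ?_
  simpa [hv] using (LinearMap.congr_fun isUnit_sq v).symm

theorem tower_intertwined (p k : ℕ) :
    s * φ (halfGeomSumTower p k x' x y) = φ (halfGeomSumTower p k x x' y) * s :=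
  halfGeomSumTower_pair_mem h.intertwined_x' h.intertwined_x h.intertwined_y k

variable {p k : ℕ} {ε : ℤ}

theorem tower_adjoint (hodd : Odd p) (hy : (-y') ^ ((p ^ k + 1) / 2) = -ε) :
    (halfGeomSumTower p k x x' y, ε * y * halfGeomSumTower p k x x' y) ∈ adjointPairs B φ := by
  have half : (-y') ^ (p ^ k / 2) = ε * y := by
    have : (p ^ k + 1) / 2 = p ^ k / 2 + 1 := by
      have := hodd.pow (n := k)
      grind
    rw [this, pow_succ] at hy
    linear_combination (-y) * hy - (-y') ^ (p ^ k / 2) * h.y_mul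
  rw [← half, ← halfGeomSumTower_swap hodd k h.y_mul]
  exact halfGeomSumTower_pair_mem h.adjoint_x h.adjoint_x' h.adjoint_y k

theorem tower_mul_swap (hp : p.Prime) (hodd : Odd p) (hε : ε ^ 2 = 1)
    (hsum : ∑ i ∈ Finset.range p, x ^ i = 0) (hy : (-y') ^ ((p ^ k + 1) / 2) = -ε)
    (hker : ∀ v, s (s v) = -v → v = 0) :
    φ (halfGeomSumTower p k x x' y * halfGeomSumTower p k x' x y) = s * s := by
  set b := halfGeomSumTower p k x x' y
  set b' := halfGeomSumTower p k x' x y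
  have even : (p ^ k + 1) / 2 * 2 = p ^ k + 1 :=
    Nat.div_mul_cancel (hodd.pow (n := k)).add_one.two_dvd
  have y'_pow : y' ^ (p ^ k + 1) = 1 := by
    rw [← (hodd.pow (n := k)).add_one.neg_pow, ← even, pow_mul, hy, neg_sq]
    exact_mod_cast congrArg (Int.cast : ℤ → R) hε
  have y_pow : y ^ p ^ k = y' := calc
    y ^ p ^ k = y ^ p ^ k * y' ^ (p ^ k + 1) := by rw [y'_pow, mul_one]
    _ = (y * y') ^ p ^ k * y' := by ring
    _ = y' := by rw [h.y_mul, one_pow, one_mul]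
  have telescope := sub_one_mul_halfGeomSumTower_mul_swap hp hodd h.x_mul hsum k y
  have key : (-y' + 1) * (b * b' + y') = 0 := by
    linear_combination y' * telescope + y' * y_pow - b * b' * h.y_mul
  ext v
  have fixed := hker (φ (b * b' + y') v) (by
    rw [eq_neg_iff_add_eq_zero, ← Module.End.mul_apply, h.s_mul_s]
    simpa [add_mul] using LinearMap.congr_fun (congrArg φ key) v)
  rw [h.s_mul_s, map_neg]
  rw [map_add] at fixed
  exact eq_neg_of_add_eq_zero_left fixed

theorem x_sub_injective [CharZero L] (hp : p ≠ 0) (hodd : Odd p)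
    (hsum : ∑ i ∈ Finset.range p, x ^ i = 0) : Function.Injective (φ (x - x')) := by
  refine (injective_iff_map_eq_zero _).2 fun v hv => ?_
  have x_sq : φ (x ^ 2) v = v := by
    have : φ (x * (x - x') + 1) v = v := by
      rw [map_add, map_mul, map_one, LinearMap.add_apply, Module.End.mul_apply, hv, map_zero,
        zero_add, Module.End.one_apply]
    rwa [show x * (x - x') + 1 = x ^ 2 by linear_combination -h.x_mul] at this
  have x_fix : φ x v = v := by
    obtain ⟨m, rfl⟩ := hodd
    have even_pow (m : ℕ) : φ ((x ^ 2) ^ m) v = v := by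
      rw [map_pow, Module.End.pow_apply]
      exact Function.iterate_fixed x_sq m
    have x_pow : φ (x ^ (2 * m + 1)) v = v := by
      rw [pow_eq_one_of_geom_sum_eq_zero hsum, map_one, Module.End.one_apply]
    rwa [pow_succ', pow_mul, map_mul, Module.End.mul_apply, even_pow] at x_pow
  have x_pow_fix (i : ℕ) : φ (x ^ i) v = v := by
    rw [map_pow, Module.End.pow_apply]
    exact Function.iterate_fixed x_fix i
  have sum_fix : (p : L) • v = 0 := by
    have := LinearMap.congr_fun (congrArg φ hsum) v
    simpa only [map_sum, LinearMap.sum_apply, x_pow_fix, Finset.sum_const, Finset.card_range,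
      ← Nat.cast_smul_eq_nsmul L, map_zero, LinearMap.zero_apply] using this
  exact (smul_eq_zero.1 sum_fix).resolve_left (Nat.cast_ne_zero.2 hp)

theorem apply_mul_s_eq_zero [NeZero (2 : L)] (hodd : Odd p)
    (hε : (ε : R) * ε = 1) (hy : (-y') ^ ((p ^ k + 1) / 2) = -ε) {c : R}
    (hc_adj : (c, ε * c) ∈ adjointPairs B φ) (hc_int : (c, ε * c) ∈ intertwinedPairs φ s) {v w : V}
    (sv : s v = φ (halfGeomSumTower p k x x' y) v) (sw : s w = φ (halfGeomSumTower p k x x' y) w) :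
    B (φ c (s v)) w = 0 := by
  set b := halfGeomSumTower p k x x' y
  have sym : B (φ c (s v)) w = B v (φ (c * y) (s w)) := calc
    B (φ c (s v)) w = B v (φ (ε * c * (ε * y * b)) w) := by
      rw [sv, ← Module.End.mul_apply, ← map_mul]
      exact (adjointPairs B φ).mul_mem hc_adj (h.tower_adjoint hodd hy) v w
    _ = B v (φ (c * y) (s w)) := by
      rw [sw, ← Module.End.mul_apply, ← map_mul]
      congr 3
      linear_combination c * y * b * hε
  have s_inv : s (-φ y (s w)) = w := by
    have : s * (φ y * s) = -1 := by
      rw [← mul_assoc, h.intertwined_y, mul_assoc, h.s_mul_s, ← map_mul, mul_neg, h.y_mul,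
        map_neg, map_one]
    rw [map_neg]
    simpa using congrArg Neg.neg (LinearMap.congr_fun this w)
  have skew : B (φ c (s v)) w = -B v (φ (c * y) (s w)) := calc
    B (φ c (s v)) w = B (s v) ((φ (ε * c) * s) (-φ y (s w))) := by
      rw [hc_adj, Module.End.mul_apply, s_inv]
    _ = B v (φ c (-φ y (s w))) := by
      rw [← mem_intertwinedPairs.1 hc_int, Module.End.mul_apply, h.isUnitary_s]
    _ = -B v (φ (c * y) (s w)) := by
      rw [map_neg, map_neg, map_mul, Module.End.mul_apply]
  have twice : (2 : L) * B (φ c (s v)) w = 0 := by linear_combination sym + skew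
  exact (mul_eq_zero.1 twice).resolve_left two_ne_zero

theorem hasEvenDisc [CharZero L] [FiniteDimensional L V] (hB : IsAnisotropicHermitian B)
    (hp : p.Prime) (hodd : Odd p) (hε : ε ^ 2 = 1)
    (hsum : ∑ i ∈ Finset.range p, x ^ i = 0) (hy : (-y') ^ ((p ^ k + 1) / 2) = -ε)
    (hker : ∀ v, s (s v) = -v → v = 0) {c : R} {r : ℕ} (hr : r ≠ 0) (hc : c ^ 2 = ε * r)
    (hc_adj : (c, ε * c) ∈ adjointPairs B φ) (hc_int : (c, ε * c) ∈ intertwinedPairs φ s) :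
    HasEvenDisc B (r : L) := by
  set b := halfGeomSumTower p k x x' y
  set b' := halfGeomSumTower p k x' x y
  have mul_swap := h.tower_mul_swap hp hodd hε hsum hy hker
  have hcompl : IsCompl (ker (s - φ b)) (ker (s + φ b)) :=
    isCompl_ker_sub_ker_add h.s_injective (by rw [← map_mul, mul_swap])
      (by rw [← map_mul, mul_comm, mul_swap]) (h.tower_intertwined p k)
  have hdim := finrank_eq_two_mul_finrank_ker hcompl (h.x_sub_injective hp.ne_zero hodd hsum)
    (by
      rw [map_sub, sub_mul, mul_sub, h.intertwined_x', h.s_mul_x]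
      abel)
    (by rw [← map_mul, mul_comm, map_mul])
  have ε_mul : (ε : R) * ε = 1 := by rw [← sq]; exact_mod_cast congrArg (Int.cast : ℤ → R) hε
  refine ⟨_, hdim, hasDisc_of_similitude hB (u := φ c * s) (Nat.cast_ne_zero.2 hr) ?_ ?_ hdim⟩
  · intro v w
    calc B (φ c (s v)) (φ c (s w)) = B (s v) (φ (ε * c ^ 2) (s w)) := by
          rw [hc_adj, ← Module.End.mul_apply, ← map_mul, mul_assoc, sq]
      _ = B (s v) ((r : L) • s w) := by
          rw [hc, ← mul_assoc, ε_mul, one_mul, map_natCast, Nat.cast_smul_eq_nsmul]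
          rfl
      _ = r * B v w := by rw [map_smul, h.isUnitary_s, smul_eq_mul]
  · exact fun v hv w hw => h.apply_mul_s_eq_zero hodd ε_mul hy hc_adj hc_int (sub_eq_zero.1 hv)
      (sub_eq_zero.1 hw)

end IsDihedralAction

/-- `ε * r` is the square of an element of `ℤ[ζ_p]` which is multiplied by the sign `ε` under
`ζ_p ↦ ζ_p⁻¹`: either `1 = 1²`, or `-p` as the square of the Gauss sum when `p ≡ 3 (mod 4)`. -/
def IsCyclotomicSquare (p : ℕ) (ε : ℤ) (r : ℕ) : Prop :=
  ε = 1 ∧ r = 1 ∨ ε = -1 ∧ r = p ∧ p % 4 = 3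

namespace IsCyclotomicSquare

variable {p : ℕ} {ε : ℤ} {r : ℕ} (h : IsCyclotomicSquare p ε r)

include h

theorem sign_sq : ε ^ 2 = 1 := by
  rcases h with ⟨rfl, -⟩ | ⟨rfl, -⟩ <;> rfl

theorem ne_zero : r ≠ 0 := by
  rcases h with ⟨-, rfl⟩ | ⟨-, rfl, h4⟩
  · exact one_ne_zero
  · rintro rfl
    exact absurd h4 (by decide)

theorem exists_sq_eq [Fact p.Prime] (hxx' : x * x' = 1) (hsum : ∑ i ∈ Finset.range p, x ^ i = 0) :
    ∃ c : R, c ^ 2 = ε * r ∧ ∀ T : Subring (R × R), (x, x') ∈ T → (c, ε * c) ∈ T := by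
  rcases h with ⟨rfl, rfl⟩ | ⟨rfl, rfl, h4⟩
  · exact ⟨1, by simp, fun T _ => by
      rw [Int.cast_one, one_mul]
      exact T.one_mem⟩
  · have hodd : Odd r := Nat.odd_iff.2 (by omega)
    have neg_one : quadraticChar (ZMod r) (-1) = -1 := by
      rw [quadraticChar_neg_one_iff_not_isSquare]
      exact fun hsq => ZMod.exists_sq_eq_neg_one_iff.1 hsq h4
    refine ⟨quadraticGaussSum r x, by rw [quadraticGaussSum_sq hodd hsum, neg_one], ?_⟩
    intro T hT
    rw [← neg_one, ← quadraticGaussSum_inv hxx' (pow_eq_one_of_geom_sum_eq_zero hsum)]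
    exact quadraticGaussSum_pair_mem hT

end IsCyclotomicSquare

theorem IsUnitary.injective (hB : IsAnisotropicHermitian B) {f : Module.End L V}
    (hf : IsUnitary B f) : Function.Injective f :=
  (injective_iff_map_eq_zero f).2 fun v hv => hB.anisotropic v (by rw [← hf, hv]; simp)

variable {p k : ℕ} {ε : ℤ} {f g : Module.End L V}

/-- An isometry `f` of order dividing `p`, inverted by an isometry `g` with
`g ^ (p ^ k + 1) = -ε`. -/
structure IsDihedralPair (B : V →ₗ⋆[L] V →ₗ[L] L) (p k : ℕ) (ε : ℤ)
    (f g : Module.End L V) : Prop where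
  isUnitary_left : IsUnitary B f
  isUnitary_right : IsUnitary B g
  pow_eq_one : f ^ p = 1
  semiconjBy : SemiconjBy g f (f ^ (p - 1))
  pow_eq_neg : g ^ (p ^ k + 1) = -(ε : Module.End L V)

omit [StarRing L] in
theorem coe_restrict_pow_apply {W : Submodule L V} (hf : ∀ v ∈ W, f v ∈ W) (n : ℕ) (v : W) :
    ((f.restrict hf ^ n) v : V) = (f ^ n) v := by
  rw [Module.End.pow_restrict]
  rfl

omit [StarRing L] in
theorem coe_sum_pow_restrict_apply {W : Submodule L V} (hf : ∀ v ∈ W, f v ∈ W) (n : ℕ) (v : W) :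
    ((∑ i ∈ Finset.range n, f.restrict hf ^ i) v : V) = (∑ i ∈ Finset.range n, f ^ i) v := by
  simp only [LinearMap.sum_apply, AddSubmonoidClass.coe_finsetSum, coe_restrict_pow_apply]

namespace IsDihedralPair

theorem restrict (h : IsDihedralPair B p k ε f g) {W : Submodule L V} (hf : ∀ v ∈ W, f v ∈ W)
    (hg : ∀ v ∈ W, g v ∈ W) :
    IsDihedralPair (B.domRestrict₁₂ W W) p k ε (f.restrict hf) (g.restrict hg) where
  isUnitary_left v w := h.isUnitary_left v w
  isUnitary_right v w := h.isUnitary_right v w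
  pow_eq_one := by
    rw [Module.End.pow_restrict]
    exact LinearMap.ext fun v => Subtype.ext (LinearMap.congr_fun h.pow_eq_one v)
  semiconjBy := by
    rw [Module.End.pow_restrict]
    exact LinearMap.ext fun v => Subtype.ext (LinearMap.congr_fun h.semiconjBy v)
  pow_eq_neg := by
    rw [Module.End.pow_restrict]
    refine LinearMap.ext fun v => Subtype.ext ?_
    simpa using LinearMap.congr_fun h.pow_eq_neg v

theorem smul (h : IsDihedralPair B p k ε f g) {w : L} (hw : w * star w = 1)
    (hw_pow : w ^ (p ^ k + 1) = 1) : IsDihedralPair B p k ε f (w • g) where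
  isUnitary_left := h.isUnitary_left
  isUnitary_right v v' := by
    have key := h.isUnitary_right v v'
    simp only [LinearMap.smul_apply, map_smulₛₗ, smul_eq_mul, RingHom.id_apply, starRingEnd_apply]
    linear_combination B (g v) (g v') * hw + key
  pow_eq_one := h.pow_eq_one
  semiconjBy := by
    rw [SemiconjBy, smul_mul_assoc, mul_smul_comm, h.semiconjBy.eq]
  pow_eq_neg := by rw [smul_pow, hw_pow, one_smul, h.pow_eq_neg]

end IsDihedralPair

variable [FiniteDimensional L V]

theorem IsUnitary.apply_mem_orthogonalBilin (hB : IsAnisotropicHermitian B) {f : Module.End L V}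
    (hf : IsUnitary B f) {W : Submodule L V} (hW : ∀ v ∈ W, f v ∈ W) :
    ∀ v ∈ W.orthogonalBilin B, f v ∈ W.orthogonalBilin B := by
  intro v hv w hw
  have surj : Function.Surjective (f.restrict hW) := LinearMap.surjective_of_injective
    fun _ _ h => Subtype.ext (hf.injective hB (congrArg Subtype.val h))
  obtain ⟨⟨w', hw'⟩, h⟩ := surj ⟨w, hw⟩
  rw [← show f w' = w from congrArg Subtype.val h]
  exact (hf w' v).trans (hv w' hw')

omit [FiniteDimensional L V] in
theorem HasEvenDisc.of_subsingleton [Subsingleton V] (r : L) : HasEvenDisc B r :=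
  ⟨0, finrank_zero_of_subsingleton, 0, Basis.empty V, by simpa using NormEquiv.refl _⟩

theorem HasEvenDisc.of_orthogonalBilin (hB : IsAnisotropicHermitian B) {r : L} (W : Submodule L V)
    (h : HasEvenDisc (B.domRestrict₁₂ W W) r)
    (h' : HasEvenDisc (B.domRestrict₁₂ (W.orthogonalBilin B) (W.orthogonalBilin B)) r) :
    HasEvenDisc B r := by
  obtain ⟨d, hd, h⟩ := h
  obtain ⟨d', hd', h'⟩ := h'
  have hc := hB.isCompl_orthogonalBilin W
  refine ⟨d + d', ?_, ?_⟩
  · rw [← Submodule.finrank_add_eq_of_isCompl hc, hd, hd', mul_add]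
  · rw [pow_add]
    exact h.mul_of_isCompl hB.isSymm hc (fun v hv w hw => hw v hv) h'

theorem commute_sq_of_semiconjBy {M : Type*} [Monoid M] {f g : M} {p : ℕ} (hp : p ≠ 0)
    (hf : f ^ p = 1) (h : SemiconjBy g f (f ^ (p - 1))) : Commute (g * g) f := by
  have key := (h.pow_right (p - 1)).mul_left h
  rw [← pow_mul] at key
  obtain ⟨n, rfl⟩ := Nat.exists_eq_succ_of_ne_zero hp
  cases n with
  | zero =>
    obtain rfl : f = 1 := by simpa using hf
    exact Commute.one_right _
  | succ n =>
    rwa [show (n + 1 + 1 - 1) * (n + 1 + 1 - 1) = (n + 2) * n + 1 by simp; ring, pow_succ, pow_mul,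
      hf, one_pow, one_mul] at key

variable [CharZero L] [Fact p.Prime] {r : ℕ}

namespace IsDihedralPair

variable (h : IsDihedralPair B p k ε f g)

include h

open Subring in
open scoped IsMulCommutative in
theorem hasEvenDisc_of_ker (hB : IsAnisotropicHermitian B) (hodd : Odd p)
    (hεr : IsCyclotomicSquare p ε r) (hsum : ∑ i ∈ Finset.range p, f ^ i = 0)
    (hker : ∀ v, g (g v) = -v → v = 0) : HasEvenDisc B (r : L) := by
  have hp : p.Prime := Fact.out
  have comm := commute_sq_of_semiconjBy hp.ne_zero h.pow_eq_one h.semiconjBy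
  have : IsMulCommutative (closure {f, g * g}) := isMulCommutative_closure (by
    rintro _ (rfl | rfl) _ (rfl | rfl) <;> simp only [comm.eq])
  let x : closure {f, g * g} := ⟨f, subset_closure (by simp)⟩
  let z : closure {f, g * g} := ⟨g * g, subset_closure (by simp)⟩
  have even : 2 * ((p ^ k + 1) / 2) = p ^ k + 1 :=
    Nat.mul_div_cancel' (hodd.pow (n := k)).add_one.two_dvd
  have z_pow : z ^ ((p ^ k + 1) / 2) = -ε := Subtype.ext (by
    have key := h.pow_eq_neg
    rw [← even, pow_mul, sq] at key
    simpa using key)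
  have x_sum : ∑ i ∈ Finset.range p, x ^ i = 0 := Subtype.ext (by simpa using hsum)
  have x_mul : x * x ^ (p - 1) = 1 := by
    rw [← pow_succ', Nat.sub_add_cancel hp.one_le, pow_eq_one_of_geom_sum_eq_zero x_sum]
  have z_mul : z ^ p ^ k * z = 1 := by
    rw [← pow_succ, ← even, mul_comm, pow_mul, z_pow, neg_sq]
    exact_mod_cast congrArg (Int.cast : ℤ → closure {f, g * g}) hεr.sign_sq
  have action : IsDihedralAction B (closure {f, g * g}).subtype g x (x ^ (p - 1))
      (-z ^ p ^ k) (-z) :=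
    { isUnitary_s := h.isUnitary_right
      isUnitary_x := h.isUnitary_left
      isUnitary_y := ((h.isUnitary_right.mul h.isUnitary_right).pow _).neg
      x_mul := x_mul
      y_mul := by rw [neg_mul_neg, z_mul]
      s_mul_s := by
        rw [neg_neg]
        rfl
      s_mul_x := h.semiconjBy }
  obtain ⟨c, hc, hmem⟩ := hεr.exists_sq_eq action.x_mul x_sum
  exact action.hasEvenDisc hB hp hodd hεr.sign_sq x_sum (by rw [neg_neg, z_pow]) hker hεr.ne_zero hc
    (hmem _ action.adjoint_x) (hmem _ action.intertwined_x)

theorem hasEvenDisc (hB : IsAnisotropicHermitian B) (hodd : Odd p)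
    (hεr : IsCyclotomicSquare p ε r) (hsum : ∑ i ∈ Finset.range p, f ^ i = 0) {w : L}
    (hw : w * star w = 1) (hw_pow : w ^ (p ^ k + 1) = 1) (hw_sq : w ^ 2 ≠ 1) :
    HasEvenDisc B (r : L) := by
  set W := ker (g * g + 1)
  have mem_W (v : V) : v ∈ W ↔ g (g v) = -v := by
    rw [eq_neg_iff_add_eq_zero]; rfl
  have comm := commute_sq_of_semiconjBy (NeZero.ne p) h.pow_eq_one h.semiconjBy
  have f_mem : ∀ v ∈ W, f v ∈ W := fun v hv => by
    rw [mem_W] at hv ⊢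
    rw [← map_neg, ← hv]
    exact LinearMap.congr_fun comm v
  have g_mem : ∀ v ∈ W, g v ∈ W := fun v hv => by
    rw [mem_W] at hv ⊢
    rw [hv, map_neg]
  have sum_restrict {U : Submodule L V} (hU : ∀ v ∈ U, f v ∈ U) :
      ∑ i ∈ Finset.range p, f.restrict hU ^ i = 0 :=
    LinearMap.ext fun v => Subtype.ext <| by
      rw [coe_sum_pow_restrict_apply, hsum]
      rfl
  have f_mem' := h.isUnitary_left.apply_mem_orthogonalBilin hB f_mem
  have g_mem' := h.isUnitary_right.apply_mem_orthogonalBilin hB g_mem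
  refine .of_orthogonalBilin hB W ?_ ?_
  · refine ((h.restrict f_mem g_mem).smul hw hw_pow).hasEvenDisc_of_ker (hB.domRestrict₁₂ W) hodd
      hεr (sum_restrict f_mem) fun v hv => ?_
    have g_sq : g (g (v : V)) = -v := (mem_W v).1 v.2
    have w_smul : w ^ 2 • v = v := by
      refine Subtype.ext (neg_injective ?_)
      have : w • g (w • g (v : V)) = -v := congrArg Subtype.val hv
      rwa [map_smul, g_sq, smul_smul, ← sq, smul_neg] at this
    by_contra hv0
    exact hw_sq (smul_left_injective L hv0 (by simpa using w_smul))
  · refine (h.restrict f_mem' g_mem').hasEvenDisc_of_ker (hB.domRestrict₁₂ _) hodd hεr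
      (sum_restrict f_mem') fun v hv => ?_
    have v_mem : (v : V) ∈ W := (mem_W v).2 (congrArg Subtype.val hv)
    exact Subtype.ext (hB.anisotropic v (v.2 v v_mem))

omit [FiniteDimensional L V] [CharZero L] in
theorem apply_mem_ker_sub_one : ∀ v ∈ ker (f - 1), g v ∈ ker (f - 1) := by
  intro v hv
  have fv : f v = v := sub_eq_zero.1 hv
  refine sub_eq_zero.2 ?_
  have semiconj : g v = (f ^ (p - 1)) (g v) := by
    simpa [fv] using LinearMap.congr_fun h.semiconjBy v
  rw [semiconj, ← Module.End.mul_apply, ← pow_succ', Nat.sub_add_cancel NeZero.one_le,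
    h.pow_eq_one, ← semiconj]

end IsDihedralPair

omit [FiniteDimensional L V] [CharZero L] [Fact p.Prime] in
theorem sum_pow_restrict_eq_zero (hB : IsAnisotropicHermitian B) (hf : f ^ p = 1)
    (hmem : ∀ v ∈ (ker (f - 1)).orthogonalBilin B, f v ∈ (ker (f - 1)).orthogonalBilin B) :
    ∑ i ∈ Finset.range p, f.restrict hmem ^ i = 0 := by
  refine LinearMap.ext fun v => Subtype.ext ?_
  set u := (∑ i ∈ Finset.range p, f.restrict hmem ^ i) v
  have fixed : (u : V) ∈ ker (f - 1) := by
    rw [mem_ker, coe_sum_pow_restrict_apply, ← Module.End.mul_apply, mul_geom_sum, hf, sub_self,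
      LinearMap.zero_apply]
  exact hB.anisotropic u (u.2 u fixed)

variable {ι : Type*} {X : ι → Module.End L V}

theorem hasEvenDisc_of_commute (hB : IsAnisotropicHermitian B) (hodd : Odd p)
    (hεr : IsCyclotomicSquare p ε r) (hX : ∀ i, IsDihedralPair B p k ε (X i) g)
    (hcomm : ∀ i j, Commute (X i) (X j)) (hfix : ∀ v, (∀ i, X i v = v) → v = 0) {w : L}
    (hw : w * star w = 1) (hw_pow : w ^ (p ^ k + 1) = 1) (hw_sq : w ^ 2 ≠ 1) :
    HasEvenDisc B (r : L) := by
  induction hn : finrank L V using Nat.strong_induction_on generalizing V with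
  | _ n ih =>
  by_cases htriv : ∀ a, ker (X a - 1) = ⊤
  · have zero (v : V) : v = 0 := hfix v fun a => by
      have : v ∈ ker (X a - 1) := htriv a ▸ Submodule.mem_top
      exact sub_eq_zero.1 this
    have : Subsingleton V := ⟨fun v w => (zero v).trans (zero w).symm⟩
    exact .of_subsingleton _
  push Not at htriv
  obtain ⟨a, ha⟩ := htriv
  set W := ker (X a - 1)
  have mem_W (v : V) : v ∈ W ↔ X a v = v := sub_eq_zero
  have X_mem (i) : ∀ v ∈ W, X i v ∈ W := fun v hv => by
    rw [mem_W] at hv ⊢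
    rw [← Module.End.mul_apply, (hcomm a i).eq, Module.End.mul_apply, hv]
  have g_mem := (hX a).apply_mem_ker_sub_one
  refine .of_orthogonalBilin hB W ?_ ?_
  · exact ih _ (hn ▸ Submodule.finrank_lt ha) (hB.domRestrict₁₂ W)
      (fun i => (hX i).restrict (X_mem i) g_mem)
      (fun i j => LinearMap.ext fun v => Subtype.ext (LinearMap.congr_fun (hcomm i j) v))
      (fun v hv => Subtype.ext (hfix v fun i => congrArg Subtype.val (hv i))) rfl
  · have X_mem' := (hX a).isUnitary_left.apply_mem_orthogonalBilin hB (X_mem a)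
    have g_mem' := (hX a).isUnitary_right.apply_mem_orthogonalBilin hB g_mem
    exact ((hX a).restrict X_mem' g_mem').hasEvenDisc (hB.domRestrict₁₂ _) hodd hεr
      (sum_pow_restrict_eq_zero hB (hX a).pow_eq_one X_mem') hw hw_pow hw_sq

end Dihedral

/-! ### Frobenius actions by isometries -/

section Frobenius

open Module LinearMap

theorem det_one_off_diagonal {L ι : Type*} [Field L] [CharZero L] [Fintype ι] [DecidableEq ι]
    [Nonempty ι] :
    (Matrix.of fun a b : ι => if a = b then (1 : L) else -(Fintype.card ι : L)⁻¹).det =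
      ((Fintype.card ι + 1) / Fintype.card ι) ^ Fintype.card ι / (Fintype.card ι + 1) := by
  set N := Fintype.card ι
  have hN : (N : L) ≠ 0 := Nat.cast_ne_zero.2 Fintype.card_ne_zero
  have hN' : (N : L) + 1 ≠ 0 := N.cast_add_one_ne_zero
  have rank_one : (Matrix.of fun a b : ι => if a = b then (1 : L) else -(N : L)⁻¹) =
      (((N : L) + 1) / N) • (1 + Matrix.replicateCol Unit (fun _ : ι => -((N : L) + 1)⁻¹) *
        Matrix.replicateRow Unit (fun _ : ι => (1 : L))) := by
    ext a b
    simp only [Matrix.of_apply, Matrix.smul_apply, Matrix.add_apply, Matrix.one_apply,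
      Matrix.mul_apply, Matrix.replicateCol_apply, Matrix.replicateRow_apply, smul_eq_mul,
      Finset.univ_unique, Finset.sum_const, Finset.card_singleton, one_smul]
    split_ifs <;> field_simp <;> ring
  rw [rank_one, Matrix.det_smul, Matrix.det_one_add_replicateCol_mul_replicateRow, div_eq_mul_inv]
  simp only [dotProduct, Finset.sum_const, Finset.card_univ, nsmul_eq_mul]
  field_simp
  ring

variable {L V A ι : Type*} [Field L] [StarRing L] [AddCommGroup V] [Module L V]
  {B : V →ₗ⋆[L] V →ₗ[L] L}

theorem linearIndependent_of_det_ne_zero [Fintype ι] [DecidableEq ι] {b : ι → V}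
    (h : (Matrix.of fun i j => B (b i) (b j)).det ≠ 0) : LinearIndependent L b := by
  rw [Fintype.linearIndependent_iff]
  intro c hc
  refine congrFun (Matrix.eq_zero_of_mulVec_eq_zero h (funext fun i => ?_))
  have : B (b i) (∑ j, c j • b j) = 0 := by rw [hc, map_zero]
  simpa [Matrix.mulVec, dotProduct, mul_comm] using this

variable {G : Type*} [Group G] [AddCommGroup A] [Fintype A] [DistribMulAction G A]

/-- A representation by isometries of `B` of a Frobenius group: the kernel is the group `A` of
order `N + 1`, acting through `X` without nonzero fixed vectors, and the complement is generated
by `s`, which permutes `A` in the way `g` does. -/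
structure IsFrobeniusAction (B : V →ₗ⋆[L] V →ₗ[L] L) (N : ℕ) (X : AddChar A (Module.End L V))
    (s : Module.End L V) (g : G) : Prop where
  isUnitary_left : ∀ a, IsUnitary B (X a)
  isUnitary_right : IsUnitary B s
  pow_eq_one : s ^ N = 1
  semiconjBy : ∀ a, SemiconjBy s (X a) (X (g • a))
  sum_eq_zero : ∑ a, X a = 0
  card_eq : Fintype.card A = N + 1
  eq_zero_of_pow_smul_eq : ∀ i, 0 < i → i < N → ∀ a : A, g ^ i • a = a → a = 0

namespace IsFrobeniusAction

variable {N : ℕ} {X : AddChar A (Module.End L V)} {s : Module.End L V} {g : G}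
  (h : IsFrobeniusAction B N X s g)
include h

theorem semiconjBy_pow (i : ℕ) (a : A) : SemiconjBy (s ^ i) (X a) (X (g ^ i • a)) := by
  induction i with
  | zero => simp
  | succ i ih =>
    rw [pow_succ', pow_succ', mul_smul]
    exact (h.semiconjBy _).mul_left ih

theorem sum_range_pow_smul {a : A} (ha : a ≠ 0) : ∑ i ∈ Finset.range N, X (g ^ i • a) = -1 := by
  classical
  have inj : Set.InjOn (fun i => g ^ i • a) (Finset.range N) := by
    intro i hi j hj hij
    dsimp only at hij
    simp only [Finset.coe_range, Set.mem_Iio] at hi hj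
    wlog hlt : i < j generalizing i j with swap
    · exact (not_lt.1 hlt).eq_or_lt.elim Eq.symm fun hji => (swap hij.symm hj hi hji).symm
    obtain ⟨m, rfl⟩ := Nat.exists_eq_add_of_lt hlt
    rw [add_assoc, pow_add, mul_smul] at hij
    exact absurd (h.eq_zero_of_pow_smul_eq (m + 1) (by omega) (by omega) a
      (MulAction.injective (g ^ i) hij).symm) ha
  have image_eq : (Finset.range N).image (fun i => g ^ i • a) = Finset.univ.erase 0 := by
    refine Finset.eq_of_subset_of_card_le (fun b hb => ?_) ?_
    · obtain ⟨i, -, rfl⟩ := Finset.mem_image.1 hb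
      simpa [smul_eq_zero_iff_eq] using ha
    · rw [Finset.card_image_of_injOn inj, Finset.card_erase_of_mem (Finset.mem_univ _),
        Finset.card_univ, h.card_eq, Finset.card_range, Nat.add_sub_cancel]
  rw [← Finset.sum_image inj (f := X), image_eq, eq_neg_iff_add_eq_zero, ← h.sum_eq_zero,
    ← Finset.sum_erase_add _ _ (Finset.mem_univ 0), X.map_zero_eq_one]

theorem apply_apply [CharZero L] (hN : N ≠ 0) {v w : V} (hv : s v = v) (hw : s w = w) (a b : A)
    [Decidable (a = b)] :
    B (X a v) (X b w) = (if a = b then 1 else -(N : L)⁻¹) * B v w := by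
  split_ifs with hab
  · rw [hab, h.isUnitary_left, one_mul]
  have fixed {u : V} (hu : s u = u) (i : ℕ) : (s ^ i) u = u := by
    rw [Module.End.pow_apply]
    exact Function.iterate_fixed hu i
  have const (i : ℕ) : B v (X (g ^ i • (b - a)) w) = B v (X (b - a) w) := by
    rw [← (h.isUnitary_right.pow i) v (X (b - a) w), fixed hv, ← Module.End.mul_apply,
      (h.semiconjBy_pow i _).eq, Module.End.mul_apply, fixed hw]
  have sum_const : N * B v (X (b - a) w) = -B v w := calc
    N * B v (X (b - a) w) = B v ((∑ i ∈ Finset.range N, X (g ^ i • (b - a))) w) := by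
      simp [LinearMap.sum_apply, const]
    _ = -B v w := by simp [h.sum_range_pow_smul (sub_ne_zero.2 (Ne.symm hab))]
  calc B (X a v) (X b w) = B v (X (b - a) w) := by
        rw [← h.isUnitary_left a v, ← Module.End.mul_apply, ← X.map_add_eq_mul, add_sub_cancel]
    _ = -(N : L)⁻¹ * B v w := by
        rw [neg_mul, ← mul_neg, ← sum_const, inv_mul_cancel_left₀ (Nat.cast_ne_zero.2 hN)]

theorem trace_pow [FiniteDimensional L V] [CharZero L] {i : ℕ} (hi : 0 < i) (hiN : i < N) :
    LinearMap.trace L V (s ^ i) = 0 := by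
  have conj (a : A) :
      LinearMap.trace L V (X (a - g ^ i • a) * s ^ i) = LinearMap.trace L V (s ^ i) := by
    rw [sub_eq_add_neg, X.map_add_eq_mul, ← smul_neg, mul_assoc, ← (h.semiconjBy_pow i (-a)).eq,
      trace_mul_comm, mul_assoc, ← X.map_add_eq_mul, neg_add_cancel, X.map_zero_eq_one, mul_one]
  have bij : Function.Bijective fun a => a - g ^ i • a :=
    Finite.injective_iff_bijective.1 fun a b hab => sub_eq_zero.1 <|
      h.eq_zero_of_pow_smul_eq i hi hiN _ <| by
        rw [smul_sub]
        exact (sub_eq_sub_iff_sub_eq_sub.1 hab).symm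
  have sum_conj : (Fintype.card A : L) * LinearMap.trace L V (s ^ i) = 0 := calc
    (Fintype.card A : L) * LinearMap.trace L V (s ^ i)
        = LinearMap.trace L V ((∑ a, X (a - g ^ i • a)) * s ^ i) := by
      simp [Finset.sum_mul, conj]
    _ = 0 := by rw [bij.sum_comp X, h.sum_eq_zero, zero_mul, map_zero]
  exact (mul_eq_zero.1 sum_conj).resolve_left (Nat.cast_ne_zero.2 (by simp [h.card_eq]))

theorem finrank_eq [FiniteDimensional L V] [CharZero L] (hN : N ≠ 0) :
    finrank L V = N * finrank L (ker (s - 1)) := by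
  have hN' : (N : L) ≠ 0 := Nat.cast_ne_zero.2 hN
  have isProj : IsProj (ker (s - 1)) ((N : L)⁻¹ • ∑ i ∈ Finset.range N, s ^ i) := by
    refine ⟨fun v => ?_, fun v hv => ?_⟩
    · rw [mem_ker, ← Module.End.mul_apply, mul_smul_comm, mul_geom_sum, h.pow_eq_one, sub_self,
        smul_zero, LinearMap.zero_apply]
    · have fixed : s v = v := sub_eq_zero.1 (mem_ker.1 hv)
      simp only [LinearMap.smul_apply, LinearMap.sum_apply, Module.End.pow_apply,
        Function.iterate_fixed fixed, Finset.sum_const, Finset.card_range,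
        ← Nat.cast_smul_eq_nsmul L, inv_smul_smul₀ hN']
  have trace_eq : (N : L) * finrank L (ker (s - 1)) = finrank L V := calc
    (N : L) * finrank L (ker (s - 1)) = ∑ i ∈ Finset.range N, LinearMap.trace L V (s ^ i) := by
      rw [← isProj.trace, map_smul, map_sum, smul_eq_mul, mul_inv_cancel_left₀ hN']
    _ = finrank L V := by
      rw [Finset.sum_eq_single_of_mem 0 (by simpa using hN.bot_lt) fun i hi hi0 =>
        h.trace_pow hi0.bot_lt (Finset.mem_range.1 hi), pow_zero, trace_one]
  exact_mod_cast trace_eq.symm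

theorem det_gram [CharZero L] [DecidableEq A] (hN : N ≠ 0) {d : ℕ}
    (e : Basis (Fin d) L (ker (s - 1))) :
    (Matrix.of fun i j : {a : A // a ≠ 0} × Fin d => B (X i.1 (e i.2)) (X j.1 (e j.2))).det =
      (((N + 1 : L) / N) ^ N / (N + 1)) ^ d * (toMatrix₂ e e (B.domRestrict₁₂ _ _)).det ^ N := by
  have card_ne_zero : Fintype.card {a : A // a ≠ 0} = N := by
    rw [Fintype.card_subtype_compl, h.card_eq, Fintype.card_subtype_eq, Nat.add_sub_cancel]
  have : Nonempty {a : A // a ≠ 0} := Fintype.card_pos_iff.1 (card_ne_zero ▸ hN.bot_lt)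
  have gram_eq : (Matrix.of fun i j : {a : A // a ≠ 0} × Fin d =>
      B (X i.1 (e i.2)) (X j.1 (e j.2))) = Matrix.kroneckerMap (· * ·)
        (Matrix.of fun a b => if a = b then 1 else -(Fintype.card {a : A // a ≠ 0} : L)⁻¹)
        (toMatrix₂ e e (B.domRestrict₁₂ _ _)) := by
    ext i j
    simp only [Matrix.of_apply, Matrix.kroneckerMap_apply, toMatrix₂_apply,
      domRestrict₁₂_apply, card_ne_zero, Subtype.ext_iff]
    exact h.apply_apply hN (sub_eq_zero.1 (e i.2).2) (sub_eq_zero.1 (e j.2).2) _ _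
  rw [gram_eq, Matrix.det_kronecker, det_one_off_diagonal, card_ne_zero, Fintype.card_fin]

theorem normEquiv_det_gram [CharZero L] [DecidableEq A]
    (hB : IsAnisotropicHermitian B) (hN : N ≠ 0) (hNe : Even N) {d : ℕ}
    (e : Basis (Fin d) L (ker (s - 1))) :
    NormEquiv (Matrix.of fun i j : {a : A // a ≠ 0} × Fin d =>
      B (X i.1 (e i.2)) (X j.1 (e j.2))).det ((N + 1 : L) ^ d) := by
  have hW := hB.domRestrict₁₂ (ker (s - 1))
  have hN' : (N : L) ≠ 0 := Nat.cast_ne_zero.2 hN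
  have hN1 : (N + 1 : L) ≠ 0 := N.cast_add_one_ne_zero
  rw [h.det_gram hN e]
  set D := (toMatrix₂ e e (B.domRestrict₁₂ _ _)).det
  have hD : D ≠ 0 := hW.det_toMatrix₂_ne_zero e
  have star_D : star D = D := hW.star_det_toMatrix₂ e
  set c : L := (N + 1) / N
  have hc : c ≠ 0 := div_ne_zero hN1 hN'
  have star_c : star c = c := by simp [c]
  obtain ⟨M, hM⟩ := hNe
  set z := (c ^ M / (N + 1)) ^ d * D ^ M
  have star_z : star z = z := by
    simp only [z, star_mul', star_pow, star_div₀, star_add, star_natCast, star_one, star_D, star_c]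
  have hz : z ≠ 0 :=
    mul_ne_zero (pow_ne_zero _ (div_ne_zero (pow_ne_zero _ hc) hN1)) (pow_ne_zero _ hD)
  refine ⟨z, hz, ?_⟩
  have split_sq : c ^ N / (N + 1) = (N + 1) * (c ^ M / (N + 1)) ^ 2 := by
    rw [hM, pow_add]
    field_simp
  have split_D : D ^ N = (D ^ M) ^ 2 := by rw [hM, ← pow_mul, mul_two]
  rw [split_sq, split_D, star_z, mul_pow]
  ring

theorem hasDisc [FiniteDimensional L V] [CharZero L] (hB : IsAnisotropicHermitian B) (hN : N ≠ 0)
    (hNe : Even N) : HasDisc B ((N + 1 : L) ^ finrank L (ker (s - 1))) := by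
  classical
  let e := Module.finBasis L (ker (s - 1))
  have det_gram := h.normEquiv_det_gram hB hN hNe e
  have li := linearIndependent_of_det_ne_zero (B := B) (det_gram.ne_zero
    (pow_ne_zero _ N.cast_add_one_ne_zero))
  let b := basisOfLinearIndependentOfCardEqFinrank' _ li <| by
    rw [Fintype.card_prod, Fintype.card_subtype_compl, h.card_eq, Fintype.card_subtype_eq,
      Nat.add_sub_cancel, Fintype.card_fin, h.finrank_eq hN]
  refine hasDisc_of_basis b ?_
  convert det_gram
  ext i j
  simp [b, toMatrix₂_apply]

end IsFrobeniusAction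

end Frobenius

/-! ### The field with `q ^ 2` elements -/

section FiniteField

variable {F : Type*} [Field F] [StarRing F]

instance : DistribMulAction Fˣ (skewAdjoint F) where
  smul τ b := ⟨τ * b * star (τ : F), skewAdjoint.conjugate b.2 τ⟩
  one_smul b := Subtype.ext <| show ((1 : Fˣ) : F) * b * star ((1 : Fˣ) : F) = b by simp
  mul_smul τ κ b := Subtype.ext <|
    show ((τ * κ : Fˣ) : F) * b * star ((τ * κ : Fˣ) : F) =
        τ * (κ * b * star (κ : F)) * star (τ : F) by
      rw [Units.val_mul, star_mul]
      ring
  smul_zero τ := Subtype.ext <| show (τ : F) * 0 * star (τ : F) = 0 by ring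
  smul_add τ b c := Subtype.ext <| show
    (τ : F) * (b + c) * star (τ : F) = τ * b * star (τ : F) + τ * c * star (τ : F) by ring

theorem coe_units_smul (τ : Fˣ) (b : skewAdjoint F) :
    ((τ • b : skewAdjoint F) : F) = ((τ * star τ : Fˣ) : F) * b := by
  change (τ : F) * b * star (τ : F) = τ * star (τ : F) * b
  ring

theorem units_smul_eq_of_mul_star_eq_one {τ : Fˣ} (hτ : τ * star τ = 1) (b : skewAdjoint F) :
    τ • b = b :=
  Subtype.ext (by rw [coe_units_smul, hτ, Units.val_one, one_mul])

theorem units_smul_eq_neg_of_mul_star_eq_neg_one {τ : Fˣ} (hτ : τ * star τ = -1)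
    (b : skewAdjoint F) : τ • b = -b :=
  Subtype.ext (by rw [coe_units_smul, hτ, Units.val_neg, Units.val_one, neg_one_mul,
    NegMemClass.coe_neg])

variable [Fintype F] {q : ℕ}

instance : Fintype (skewAdjoint F) := Fintype.ofFinite _

instance : Fintype (unitary Fˣ) := Fintype.ofFinite _

/-- `F` is the field with `q ^ 2` elements, `q` odd, and its star operation is `y ↦ y ^ q`. -/
structure IsFrobeniusStar (F : Type*) [Field F] [StarRing F] [Fintype F] (q : ℕ) : Prop where
  odd : Odd q
  one_lt : 1 < q
  card_eq : Fintype.card F = q ^ 2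
  star_eq : ∀ y : F, star y = y ^ q

namespace IsFrobeniusStar

variable (h : IsFrobeniusStar F q)
include h

theorem two_ne_zero : (2 : F) ≠ 0 := by
  refine Ring.two_ne_zero fun char_two => ?_
  have even_card := FiniteField.even_card_iff_char_two.1 char_two
  rw [h.card_eq, ← Nat.even_iff] at even_card
  exact Nat.not_even_iff_odd.2 h.odd.pow even_card

theorem card_units : Nat.card Fˣ = (q - 1) * (q + 1) := by
  classical
  rw [Nat.card_eq_fintype_card, Fintype.card_units, h.card_eq, mul_comm, ← Nat.sq_sub_sq, one_pow]

theorem star_units (y : Fˣ) : star y = y ^ q :=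
  Units.ext (h.star_eq y)

theorem mul_star_units (y : Fˣ) : y * star y = y ^ (q + 1) := by
  rw [h.star_units, pow_succ']

theorem star_units_eq_iff {y : Fˣ} : star y = y ↔ y ^ (q - 1) = 1 := by
  rw [h.star_units, ← Nat.sub_add_cancel h.one_lt.le, pow_succ, mul_eq_right, Nat.add_sub_cancel]

theorem mem_unitary_units_iff {y : Fˣ} : y ∈ unitary Fˣ ↔ y ^ (q + 1) = 1 := by
  rw [Unitary.mem_iff_self_mul_star, h.mul_star_units]

theorem exists_mul_star_eq {y : Fˣ} (hy : star y = y) : ∃ κ : Fˣ, κ * star κ = y := by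
  have pos : 0 < q + 1 := q.succ_pos
  have range_le : (powMonoidHom (q + 1) : Fˣ →* Fˣ).range ≤ (powMonoidHom (q - 1)).ker := by
    rintro _ ⟨κ, rfl⟩
    rw [MonoidHom.mem_ker, powMonoidHom_apply, powMonoidHom_apply, ← pow_mul, mul_comm,
      ← h.card_units, pow_card_eq_one']
  have range_eq := Subgroup.eq_of_le_of_card_ge range_le <| by
    rw [IsCyclic.card_powMonoidHom_ker, IsCyclic.card_powMonoidHom_range, h.card_units,
      Nat.gcd_mul_right_left, Nat.gcd_mul_left_left, Nat.mul_div_cancel _ pos]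
  obtain ⟨κ, hκ⟩ : y ∈ (powMonoidHom (q + 1) : Fˣ →* Fˣ).range := by
    rw [range_eq]
    exact h.star_units_eq_iff.1 hy
  exact ⟨κ, (h.mul_star_units κ).trans hκ⟩

theorem exists_mul_star_eq_neg_one : ∃ κ : Fˣ, κ * star κ = -1 :=
  h.exists_mul_star_eq (by rw [h.star_units, h.odd.neg_one_pow])

theorem exists_orderOf_eq : ∃ δ : Fˣ, orderOf δ = 2 * (q - 1) ∧ δ ^ (q - 1) = -1 := by
  obtain ⟨g, hg⟩ := IsCyclic.exists_ofOrder_eq_natCard (α := Fˣ)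
  obtain ⟨m, rfl⟩ := h.odd
  have order_eq : orderOf (g ^ (m + 1)) = 2 * (2 * m + 1 - 1) := by
    rw [orderOf_pow' _ m.succ_ne_zero, hg, h.card_units,
      show (2 * m + 1 - 1) * (2 * m + 1 + 1) = 2 * (2 * m + 1 - 1) * (m + 1) by ring,
      Nat.gcd_mul_left_left, Nat.mul_div_cancel _ m.succ_pos]
  have primitive := (IsPrimitiveRoot.orderOf (g ^ (m + 1))).pow
    (by have := h.one_lt; omega) (order_eq.trans (mul_comm _ _))
  refine ⟨_, order_eq, Units.ext ?_⟩
  exact (IsPrimitiveRoot.coe_units_iff.2 primitive).eq_neg_one_of_two_right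

theorem card_unitary : Nat.card (unitary Fˣ) = q + 1 := by
  have ker_eq : (powMonoidHom (q + 1) : Fˣ →* Fˣ).ker.toSubmonoid = unitary Fˣ :=
    Submonoid.ext fun y => h.mem_unitary_units_iff.symm
  rw [← ker_eq]
  refine (IsCyclic.card_powMonoidHom_ker (G := Fˣ) _).trans ?_
  rw [h.card_units, Nat.gcd_mul_left_left]

theorem card_skewAdjoint : Nat.card (skewAdjoint F) = q := by
  obtain ⟨δ, -, hδ⟩ := h.exists_orderOf_eq
  have star_δ : star (δ : F) = -δ := by
    rw [h.star_eq, ← Nat.sub_add_cancel h.one_lt.le, pow_succ]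
    simpa using congrArg (fun y : Fˣ => (y : F) * δ) hδ
  let antisymm : F →+ F := AddMonoidHom.id F - (starAddEquiv : F ≃+ F).toAddMonoidHom
  have range_eq : antisymm.range = skewAdjoint F := by
    ext b
    refine ⟨?_, fun hb => ⟨b / 2, ?_⟩⟩
    · rintro ⟨a, rfl⟩
      simp [antisymm, skewAdjoint.mem_iff]
    · rw [skewAdjoint.mem_iff] at hb
      have := h.two_ne_zero
      change b / 2 - star (b / 2) = b
      rw [star_div₀, hb, star_ofNat]
      field_simp
      ring
  have ker_eq : antisymm.ker = (skewAdjoint F).map (AddMonoidHom.mulLeft (δ : F)) := by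
    ext a
    refine ⟨fun ha => ⟨a / δ, ?_, mul_div_cancel₀ a δ.ne_zero⟩, ?_⟩
    · have ha' : star a = a := (sub_eq_zero.1 ha).symm
      rw [SetLike.mem_coe, skewAdjoint.mem_iff, star_div₀, ha', star_δ, div_neg]
    · rintro ⟨b, hb, rfl⟩
      have hb' : star b = -b := hb
      simp [antisymm, star_δ, hb', mul_comm]
  have key := antisymm.ker.card_mul_index
  rw [AddSubgroup.index_ker, range_eq, ker_eq,
    AddSubgroup.card_map_of_injective δ.isUnit.mul_right_injective,
    Nat.card_eq_fintype_card (α := F), h.card_eq, ← sq] at key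
  exact Nat.pow_left_injective _root_.two_ne_zero key

end IsFrobeniusStar

end FiniteField

/-! ### Actions of the root subgroup and the torus by isometries -/

section RootTorus

open Module LinearMap

variable {L V F : Type*} [Field L] [StarRing L] [AddCommGroup V] [Module L V] [Field F]
  [StarRing F] {B : V →ₗ⋆[L] V →ₗ[L] L} {X : AddChar (skewAdjoint F) (Module.End L V)}
  {T : Representation L Fˣ V}

/-- An action by isometries of the semidirect product of the root subgroup `skewAdjoint F` and the
torus `Fˣ`, without nonzero fixed vectors of the root subgroup. -/
structure IsRootTorusAction (B : V →ₗ⋆[L] V →ₗ[L] L) (X : AddChar (skewAdjoint F) (Module.End L V))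
    (T : Representation L Fˣ V) : Prop where
  isUnitary_root : ∀ b, IsUnitary B (X b)
  isUnitary_torus : ∀ τ, IsUnitary B (T τ)
  semiconjBy : ∀ τ b, SemiconjBy (T τ) (X b) (X (τ • b))
  eq_zero_of_fixed : ∀ v, (∀ b, X b v = v) → v = 0

omit [StarRing L] in
theorem finrank_ker_sub_one [CharZero L] [FiniteDimensional L V] {u : Module.End L V}
    (hu : u ^ 2 = 1) : (2 : L) * finrank L (ker (u - 1)) = finrank L V + trace L V u := by
  have hproj : IsProj (ker (u - 1)) ((2 : L)⁻¹ • (1 + u)) := by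
    refine ⟨fun v => ?_, fun v hv => ?_⟩
    · rw [mem_ker, ← Module.End.mul_apply, mul_smul_comm, sub_mul, mul_add, ← sq, hu]
      simp [add_comm]
    · have fixed : u v = v := sub_eq_zero.1 hv
      simp only [LinearMap.smul_apply, LinearMap.add_apply, Module.End.one_apply, fixed]
      rw [← two_smul L v, smul_smul, inv_mul_cancel₀ two_ne_zero, one_smul]
  rw [← hproj.trace, map_smul, map_add, LinearMap.trace_one, smul_eq_mul,
    mul_inv_cancel_left₀ two_ne_zero]

namespace IsRootTorusAction

theorem restrict (h : IsRootTorusAction B X T) {W : Submodule L V} (hX : ∀ b, ∀ v ∈ W, X b v ∈ W)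
    (hT : ∀ τ, ∀ v ∈ W, T τ v ∈ W) :
    IsRootTorusAction (B.domRestrict₁₂ W W)
      (AddChar.toMonoidHomEquiv.symm (Representation.subrepresentation X.toMonoidHom W hX))
      (T.subrepresentation W hT) where
  isUnitary_root b v w := h.isUnitary_root b v w
  isUnitary_torus τ v w := h.isUnitary_torus τ v w
  semiconjBy τ b := LinearMap.ext fun v => Subtype.ext (LinearMap.congr_fun (h.semiconjBy τ b) v)
  eq_zero_of_fixed v hv := Subtype.ext (h.eq_zero_of_fixed v fun b => congrArg Subtype.val (hv b))

omit [StarRing L] [StarRing F] in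
theorem mem_ker_torus_neg_one {v : V} : v ∈ ker (T (-1) - 1) ↔ T (-1) v = v :=
  sub_eq_zero

omit [StarRing L] [StarRing F] in
theorem torus_apply_mem_ker (τ : Fˣ) : ∀ v ∈ ker (T (-1) - 1), T τ v ∈ ker (T (-1) - 1) := by
  intro v hv
  rw [mem_ker_torus_neg_one] at hv ⊢
  rw [← Module.End.mul_apply, ((Commute.all (-1) τ).map T).eq, Module.End.mul_apply, hv]

variable (h : IsRootTorusAction B X T)
include h

theorem root_apply_mem_ker (b : skewAdjoint F) :
    ∀ v ∈ ker (T (-1) - 1), X b v ∈ ker (T (-1) - 1) := by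
  intro v hv
  rw [mem_ker_torus_neg_one] at hv ⊢
  have commute := h.semiconjBy (-1) b
  rw [units_smul_eq_of_mul_star_eq_one (by simp [Units.ext_iff])] at commute
  rw [← Module.End.mul_apply, commute.eq, Module.End.mul_apply, hv]

variable [Fintype F]

theorem sum_eq_zero : ∑ b, X b = 0 := by
  refine LinearMap.ext fun v => h.eq_zero_of_fixed _ fun b => ?_
  rw [← Module.End.mul_apply, Finset.mul_sum]
  simp only [← AddChar.map_add_eq_mul]
  exact LinearMap.congr_fun (Equiv.sum_comp (Equiv.addLeft b) X) v

theorem isFrobeniusAction {q : ℕ} (hF : IsFrobeniusStar F q) (hq : q % 4 = 1) {δ : Fˣ}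
    (hδ : orderOf δ = 2 * (q - 1)) (hT : T δ ^ (q - 1) = 1) :
    IsFrobeniusAction B (q - 1) X (T δ) δ where
  isUnitary_left := h.isUnitary_root
  isUnitary_right := h.isUnitary_torus δ
  pow_eq_one := hT
  semiconjBy := h.semiconjBy δ
  sum_eq_zero := h.sum_eq_zero
  card_eq := by
    rw [← Nat.card_eq_fintype_card, hF.card_skewAdjoint, Nat.sub_add_cancel hF.one_lt.le]
  eq_zero_of_pow_smul_eq i hi hiq b hb := by
    by_contra hb0
    have b_ne : (b : F) ≠ 0 := fun h0 => hb0 (Subtype.ext h0)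
    have norm_eq : (δ ^ i) * star (δ ^ i) = 1 :=
      Units.ext (mul_right_cancel₀ b_ne (by rw [← coe_units_smul, hb, Units.val_one, one_mul]))
    rw [hF.mul_star_units, ← pow_mul, ← orderOf_dvd_iff_pow_eq_one, hδ] at norm_eq
    obtain ⟨c, rfl⟩ : ∃ c, q = 4 * c + 1 := ⟨q / 4, by omega⟩
    have dvd : 4 * c ∣ i * (2 * c + 1) := by
      rw [Nat.add_sub_cancel] at norm_eq
      exact Nat.dvd_of_mul_dvd_mul_left two_pos (by convert norm_eq using 1; ring)
    have coprime : Nat.Coprime (4 * c) (2 * c + 1) := by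
      rw [show 4 * c = 2 * (2 * c) by ring]
      exact Nat.Coprime.mul_left (by simp) (by simp)
    exact absurd (Nat.le_of_dvd hi (coprime.dvd_of_dvd_mul_right dvd)) (by omega)

variable [CharZero L] [FiniteDimensional L V] (hB : IsAnisotropicHermitian B)
include hB

variable {p k : ℕ} [Fact p.Prime] [CharP F p] (hF : IsFrobeniusStar F (p ^ k)) (hodd : Odd p)
  {w : L} (hw : w * star w = 1) (hw_pow : w ^ (p ^ k + 1) = 1) (hw_sq : w ^ 2 ≠ 1)
include hF hodd hw hw_pow hw_sq

theorem hasEvenDisc_of_torus_pow {ε : ℤ} {r : ℕ} (hεr : IsCyclotomicSquare p ε r)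
    (hT : T (-1) = -(ε : Module.End L V)) : HasEvenDisc B (r : L) := by
  obtain ⟨θ, hθ⟩ := hF.exists_mul_star_eq_neg_one
  have p_smul (b : skewAdjoint F) : p • b = 0 :=
    Subtype.ext (by rw [AddSubgroup.coe_nsmul, nsmul_eq_mul, CharP.cast_eq_zero, zero_mul]; rfl)
  have hX (b : skewAdjoint F) : IsDihedralPair B p k ε (X b) (T θ) :=
    { isUnitary_left := h.isUnitary_root b
      isUnitary_right := h.isUnitary_torus θ
      pow_eq_one := by rw [← AddChar.map_nsmul_eq_pow, p_smul, AddChar.map_zero_eq_one]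
      semiconjBy := by
        have neg_eq : -b = (p - 1) • b := by
          rw [neg_eq_iff_add_eq_zero, ← succ_nsmul', Nat.sub_add_cancel NeZero.one_le, p_smul]
        have := h.semiconjBy θ b
        rwa [units_smul_eq_neg_of_mul_star_eq_neg_one hθ, neg_eq, AddChar.map_nsmul_eq_pow] at this
      pow_eq_neg := by rw [← map_pow, ← hF.mul_star_units, hθ, hT] }
  exact hasEvenDisc_of_commute hB hodd hεr hX
    (fun b c => by
      rw [Commute, SemiconjBy, ← AddChar.map_add_eq_mul, add_comm, AddChar.map_add_eq_mul])
    h.eq_zero_of_fixed hw hw_pow hw_sq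

theorem hasDisc_of_domRestrict {d : L}
    (hd : HasDisc (B.domRestrict₁₂ (ker (T (-1) - 1)) (ker (T (-1) - 1))) d) : HasDisc B d := by
  set W := ker (T (-1) - 1)
  have X_mem (b) := (h.isUnitary_root b).apply_mem_orthogonalBilin hB (h.root_apply_mem_ker b)
  have T_mem (τ) := (h.isUnitary_torus τ).apply_mem_orthogonalBilin hB (torus_apply_mem_ker τ)
  have T_neg_one : T.subrepresentation _ T_mem (-1) = -((1 : ℤ) : Module.End L _) := by
    refine LinearMap.ext fun v => Subtype.ext ?_
    have sum_mem : (v : V) + T (-1) v ∈ W := by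
      rw [mem_ker_torus_neg_one, map_add, ← Module.End.mul_apply, ← map_mul, neg_mul_neg, one_mul,
        map_one, Module.End.one_apply, add_comm]
    have sum_mem' : (v : V) + T (-1) v ∈ W.orthogonalBilin B := add_mem v.2 (T_mem (-1) v v.2)
    have := hB.anisotropic _ (sum_mem' _ sum_mem)
    simpa using eq_neg_of_add_eq_zero_right this
  obtain ⟨e, -, he⟩ := (h.restrict X_mem T_mem).hasEvenDisc_of_torus_pow (hB.domRestrict₁₂ _) hF
    hodd hw hw_pow hw_sq (Or.inl ⟨rfl, rfl⟩) T_neg_one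
  simpa using hd.mul_of_isCompl hB.isSymm (hB.isCompl_orthogonalBilin W)
    (fun v hv w hw => hw v hv) he

theorem hasDisc_of_mod_four_eq_one (hq : p ^ k % 4 = 1) :
    ∃ d, finrank L (ker (T (-1) - 1)) = (p ^ k - 1) * d ∧ HasDisc B (((p ^ k : ℕ) : L) ^ d) := by
  obtain ⟨δ, hδ, δ_pow⟩ := hF.exists_orderOf_eq
  have hq0 : p ^ k - 1 ≠ 0 := Nat.sub_ne_zero_of_lt hF.one_lt
  have T_pow : T.subrepresentation _ torus_apply_mem_ker δ ^ (p ^ k - 1) = 1 := by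
    rw [← map_pow, δ_pow]
    exact LinearMap.ext fun v => Subtype.ext (mem_ker_torus_neg_one.1 v.2)
  have frob :=
    (h.restrict h.root_apply_mem_ker torus_apply_mem_ker).isFrobeniusAction hF hq hδ T_pow
  refine ⟨_, frob.finrank_eq hq0, h.hasDisc_of_domRestrict hB hF hodd hw hw_pow hw_sq ?_⟩
  have := frob.hasDisc (hB.domRestrict₁₂ _) hq0 (by grind)
  rwa [← Nat.cast_add_one, Nat.sub_add_cancel hF.one_lt.le] at this

theorem hasDisc_of_mod_four_eq_three (hp : p % 4 = 3) :
    ∃ d, finrank L (ker (T (-1) - 1)) = 2 * d ∧ HasDisc B ((p : L) ^ d) := by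
  obtain ⟨d, hd, hdisc⟩ :=
    (h.restrict h.root_apply_mem_ker torus_apply_mem_ker).hasEvenDisc_of_torus_pow
      (hB.domRestrict₁₂ _) hF hodd hw hw_pow hw_sq (Or.inr ⟨rfl, rfl, hp⟩) <|
      LinearMap.ext fun v => Subtype.ext <| by simpa using mem_ker_torus_neg_one.1 v.2
  exact ⟨d, hd, h.hasDisc_of_domRestrict hB hF hodd hw hw_pow hw_sq hdisc⟩

end IsRootTorusAction

end RootTorus

/-! ### Characters of finite groups -/

section Character

open Module

variable {K G V W : Type*} [Field K] [Group G] [AddCommGroup V] [Module K V] [AddCommGroup W]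
  [Module K W] {ρ : Representation K G V} {σ : Representation K G W}

theorem isConj_character_eq {g h : G} (hgh : IsConj g h) : ρ.character g = ρ.character h := by
  obtain ⟨c, rfl⟩ := isConj_iff.1 hgh
  exact (Representation.char_conj ρ g c).symm

theorem character_mul_of_eq_smul_one {g : G} {c : K} (hg : ρ g = c • 1) (h : G) :
    ρ.character (g * h) = c * ρ.character h := by
  simp only [Representation.character, map_mul, hg, smul_mul_assoc, one_mul, map_smul, smul_eq_mul]

theorem character_eq_zero_of_isConj {ι : Type*} [Fintype ι] [Nonempty ι] [CharZero K]
    {ρ : Representation K G V} {f : ι → G} (hf : ∑ i, ρ (f i) = 0) {g : G}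
    (hg : ∀ i, IsConj g (f i * g)) : ρ.character g = 0 := by
  have : (Fintype.card ι : K) * ρ.character g = 0 := by
    calc (Fintype.card ι : K) * ρ.character g = ∑ i, ρ.character (f i * g) := by
          rw [← Finset.sum_congr rfl fun i _ => isConj_character_eq (hg i), Finset.sum_const,
            Finset.card_univ, nsmul_eq_mul]
      _ = LinearMap.trace K V ((∑ i, ρ (f i)) * ρ g) := by
          simp only [Representation.character, Finset.sum_mul, map_sum, map_mul]
      _ = 0 := by rw [hf, zero_mul, map_zero]
  exact (mul_eq_zero.1 this).resolve_left (Nat.cast_ne_zero.2 Fintype.card_ne_zero)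

variable [FiniteDimensional K V]

theorem exists_eq_smul_one_of_commute [IsAlgClosed K] [ρ.IsIrreducible] {f : Module.End K V}
    (hf : ∀ g, Commute f (ρ g)) : ∃ c : K, f = c • 1 := by
  obtain ⟨c, hc⟩ := Representation.IsIrreducible.algebraMap_intertwiningMap_bijective_of_isAlgClosed
    (ρ := ρ) |>.2 ⟨f, fun g => (hf g).eq⟩
  exact ⟨c, LinearMap.ext fun v => (DFunLike.congr_fun hc v).symm⟩

theorem sum_eq_zero_or_forall_eq_one {A : Type*} [AddCommGroup A] [Fintype A] [IsAlgClosed K]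
    [ρ.IsIrreducible] {P : AddChar A (Module.End K V)} (hP : ∀ g, Commute (∑ a, P a) (ρ g)) :
    ∑ a, P a = 0 ∨ ∀ a, P a = 1 := by
  obtain ⟨c, hc⟩ := exists_eq_smul_one_of_commute hP
  refine or_iff_not_imp_left.2 fun ne_zero a => ?_
  have absorb : P a * ∑ b, P b = ∑ b, P b := by
    simp only [Finset.mul_sum, ← P.map_add_eq_mul]
    exact Equiv.sum_comp (Equiv.addLeft a) P
  rw [hc] at absorb ne_zero
  rw [mul_smul_comm, mul_one] at absorb
  exact smul_right_injective _ (fun h => ne_zero (by rw [h, zero_smul])) absorb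

theorem isIrreducible_of_character_eq [Finite G] [CharZero K] [IsAlgClosed K]
    [FiniteDimensional K W] [ρ.IsIrreducible] (h : ρ.character = σ.character) :
    σ.IsIrreducible := by
  have := Fintype.ofFinite G
  have := invertibleOfNonzero (Nat.cast_ne_zero.2 Nat.card_pos.ne' : (Nat.card G : K) ≠ 0)
  have finrank_hom := Representation.card_inv_mul_sum_char_mul_char_eq_finrank ρ σ
  rw [← h, Representation.card_inv_mul_sum_char_mul_char_eq_finrank ρ ρ,
    Representation.IsIrreducible.finrank_intertwiningMap_self, Nat.cast_inj] at finrank_hom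
  have : Nontrivial (ρ.IntertwiningMap σ) := nontrivial_of_finrank_pos (R := K) (by omega)
  obtain ⟨f, hf⟩ := exists_ne (0 : ρ.IntertwiningMap σ)
  have injective := (Representation.IsIrreducible.injective_or_eq_zero f).resolve_right hf
  have finrank_eq : finrank K V = finrank K W := by
    have := congrFun h 1
    rw [Representation.char_one, Representation.char_one] at this
    exact_mod_cast this
  have surjective := (LinearMap.injective_iff_surjective_of_finrank_eq_finrank
    (f := f.toLinearMap) finrank_eq).1 injective
  have simple := (Representation.irreducible_iff_isSimpleModule_asModule ρ).1 inferInstance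
  rw [Representation.irreducible_iff_isSimpleModule_asModule]
  exact IsSimpleModule.congr (LinearEquiv.ofBijective
    (Representation.IntertwiningMap.equivLinearMapAsModule ρ σ f) ⟨injective, surjective⟩).symm

theorem commute_sum_of_semiconjBy {ι R : Type*} [Fintype ι] [Semiring R] {u : R} {f : ι → R}
    (e : ι ≃ ι) (h : ∀ i, SemiconjBy u (f i) (f (e i))) : Commute u (∑ i, f i) := by
  rw [Commute, SemiconjBy, Finset.mul_sum, Finset.sum_mul, ← e.sum_comp fun i => f i * u]
  exact Finset.sum_congr rfl fun i _ => (h i).eq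

theorem exists_sum_mul_character_eq [Fintype G] [CharZero K] (ψ : G →* K)
    (ρ : Representation K G V) :
    ∃ m : ℕ, ∑ g, ψ g⁻¹ * ρ.character g = Nat.card G * m := by
  let ε : Representation K G K := (Algebra.lmul K K : K →* Module.End K K).comp ψ
  have character_ε (g : G) : ε.character g = ψ g :=
    (Algebra.trace_apply K (ψ g)).symm.trans (Algebra.trace_self_apply (ψ g))
  have card_ne_zero : (Nat.card G : K) ≠ 0 := Nat.cast_ne_zero.2 Nat.card_pos.ne'
  have := invertibleOfNonzero card_ne_zero
  refine ⟨finrank K (ε.IntertwiningMap ρ), ?_⟩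
  rw [← Representation.card_inv_mul_sum_char_mul_char_eq_finrank, mul_inv_cancel_left₀ card_ne_zero]
  simp only [character_ε, mul_comm]

theorem exists_sq_eq_one_of_sum_sq_eq_one {ι : Type*} [Fintype ι] {m : ι → ℤ}
    (h : ∑ i, m i ^ 2 = 1) : ∃ i, m i ^ 2 = 1 ∧ ∀ j, j ≠ i → m j = 0 := by
  classical
  obtain ⟨i, -, hi⟩ := Finset.exists_ne_zero_of_sum_ne_zero (h.trans_ne one_ne_zero)
  have one_le : 1 ≤ m i ^ 2 := Int.add_one_le_of_lt ((sq_nonneg _).lt_of_ne' hi)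
  rw [← Finset.add_sum_erase _ _ (Finset.mem_univ i)] at h
  have nonneg : 0 ≤ ∑ j ∈ Finset.univ.erase i, m j ^ 2 := Finset.sum_nonneg fun j _ => sq_nonneg _
  refine ⟨i, by omega, fun j hj => ?_⟩
  have := (Finset.sum_eq_zero_iff_of_nonneg fun j _ => sq_nonneg (m j)).1
    (show ∑ j ∈ Finset.univ.erase i, m j ^ 2 = 0 by omega) j (by simpa using hj)
  exact pow_eq_zero_iff two_ne_zero |>.1 this

variable {C : Type*} [CommGroup C] [Fintype C]

theorem eq_sum_of_fourier {f : C → ℂ} {m : AddChar (Additive C) ℂ → ℂ}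
    (hm : ∀ ψ, ∑ g : C, ψ (.ofMul g⁻¹) * f g = Fintype.card C * m ψ) (g : C) :
    f g = ∑ ψ, m ψ * ψ (.ofMul g) := by
  classical
  have card_ne_zero : (Fintype.card C : ℂ) ≠ 0 := Nat.cast_ne_zero.2 Fintype.card_ne_zero
  refine mul_left_cancel₀ card_ne_zero ?_
  calc Fintype.card C * f g = ∑ h, (if g * h⁻¹ = 1 then (Fintype.card C : ℂ) else 0) * f h := by
        simp [mul_inv_eq_one]
    _ = ∑ h, (∑ ψ : AddChar (Additive C) ℂ, ψ (.ofMul (g * h⁻¹))) * f h := by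
        refine Finset.sum_congr rfl fun h _ => ?_
        rw [AddChar.sum_apply_eq_ite]
        simp only [ofMul_eq_zero, Fintype.card_additive]
    _ = ∑ ψ : AddChar (Additive C) ℂ, (∑ h, ψ (.ofMul h⁻¹) * f h) * ψ (.ofMul g) := by
        simp only [Finset.sum_mul]
        rw [Finset.sum_comm]
        refine Finset.sum_congr rfl fun ψ _ => Finset.sum_congr rfl fun h _ => ?_
        rw [ofMul_mul, ψ.map_add_eq_mul]
        ring
    _ = Fintype.card C * ∑ ψ, m ψ * ψ (.ofMul g) := by
        simp only [hm, Finset.mul_sum, mul_assoc]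

/-- A function with integral Fourier coefficients whose values at `g` and `g⁻¹` are inverse to each
other is a linear character up to sign: by Parseval, the squares of its coefficients sum to `1`. -/
theorem pow_card_eq_one_of_fourier_integral {f : C → ℂ} (hf : ∀ g, f g * f g⁻¹ = 1)
    (even_card : Even (Fintype.card C))
    (integral : ∀ ψ : C →* ℂ, ∃ m : ℤ, ∑ g, ψ g⁻¹ * f g = Fintype.card C * m) (g : C) :
    f g ^ Fintype.card C = 1 := by
  classical
  have card_ne_zero : (Fintype.card C : ℂ) ≠ 0 := Nat.cast_ne_zero.2 Fintype.card_ne_zero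
  have integral' (ψ : AddChar (Additive C) ℂ) :
      ∃ m : ℤ, ∑ g : C, ψ (.ofMul g⁻¹) * f g = Fintype.card C * m := integral ψ.toMonoidHom
  choose m hm using integral'
  have inversion := eq_sum_of_fourier (m := fun ψ => m ψ) hm
  have parseval : ∑ ψ, m ψ ^ 2 = 1 := by
    have : (Fintype.card C : ℂ) * ∑ ψ, (m ψ : ℂ) ^ 2 = Fintype.card C * 1 := by
      calc (Fintype.card C : ℂ) * ∑ ψ, (m ψ : ℂ) ^ 2
          = ∑ ψ, ∑ g, m ψ * ψ (.ofMul g⁻¹) * f g := by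
            simp only [mul_assoc, ← Finset.mul_sum, hm]
            rw [Finset.mul_sum]
            exact Finset.sum_congr rfl fun ψ _ => by ring
        _ = ∑ g, f g⁻¹ * f g := by
            rw [Finset.sum_comm]
            simp only [inversion _⁻¹, Finset.sum_mul]
        _ = Fintype.card C * 1 := by
            simp [mul_comm (f _⁻¹), hf]
    exact_mod_cast mul_left_cancel₀ card_ne_zero this
  obtain ⟨ψ, hψ, eq_zero⟩ := exists_sq_eq_one_of_sum_sq_eq_one parseval
  have eq_mul : f g = m ψ * ψ (.ofMul g) := by
    rw [inversion, Finset.sum_eq_single ψ (fun χ _ hχ => by simp [eq_zero χ hχ]) (by simp)]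
  rw [eq_mul, mul_pow, ← ψ.map_nsmul_eq_pow, ← ofMul_pow, pow_card_eq_one, ofMul_one,
    ψ.map_zero_eq_one, mul_one]
  obtain ⟨n, hn⟩ := even_card
  rw [hn, ← two_mul, pow_mul]
  exact_mod_cast congrArg (· ^ n) hψ |>.trans (one_pow n)

end Character

/-! ### The relations of the Borel subgroup of `SU₃` -/

section UnitaryBorel

open Module

variable {F G : Type*} [Field F] [StarRing F] [Group G]

/-- The skew-Hermitian pairing on `F` which describes the extension of `F` by the root subgroup
`skewAdjoint F` in the unipotent radical of the Borel subgroup of `SU₃`. -/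
def skewPairing (a d : F) : skewAdjoint F :=
  ⟨(d * star a - a * star d) / 2, by
    rw [skewAdjoint.mem_iff, star_div₀, star_sub, star_mul, star_mul, star_star, star_star,
      star_ofNat, ← neg_div, neg_sub]⟩

/-- The relations of the Borel subgroup of `SU₃` with respect to `*` on `F`: `t` parametrizes the
torus, `x` the center of the unipotent radical, and `v` a transversal of this center. -/
structure IsUnitaryBorel (x : AddChar (skewAdjoint F) G) (v : F → G) (t : Fˣ →* G) : Prop where
  commute : ∀ b a, Commute (x b) (v a)
  mul_transversal : ∀ a d, v a * v d = x (skewPairing a d) * v (a + d)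
  torus_root : ∀ τ b, SemiconjBy (t τ) (x b) (x (τ • b))
  torus_transversal : ∀ τ a, SemiconjBy (t τ) (v a) (v ((τ ^ 2 / star τ) • a))
  exists_eq : ∀ g, ∃ b a τ, g = x b * v a * t τ

theorem skewPairing_mul_self (a : F) {r : F} (hr : star r = r) : skewPairing a (r * a) = 0 :=
  Subtype.ext <| show (r * a * star a - a * star (r * a)) / 2 = 0 by
    rw [star_mul, hr]
    ring

theorem skewPairing_swap (a d : F) : skewPairing a d = -skewPairing d a :=
  Subtype.ext <| show (d * star a - a * star d) / 2 = -((a * star d - d * star a) / 2) by ring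

theorem exists_add_self_skewPairing_eq (h2 : (2 : F) ≠ 0) {a : F} (ha : a ≠ 0)
    (c : skewAdjoint F) : ∃ d, skewPairing d a + skewPairing d a = c := by
  have star_c : star (c : F) = -c := c.2
  have star_a := star_ne_zero.2 ha
  refine ⟨-c / (2 * star a), Subtype.ext ?_⟩
  change (a * star (-(c : F) / (2 * star a)) - -c / (2 * star a) * star a) / 2
    + (a * star (-(c : F) / (2 * star a)) - -c / (2 * star a) * star a) / 2 = c
  rw [star_div₀, star_neg, star_c, star_mul, star_star, star_ofNat]
  field_simp
  ring

theorem exists_sub_units_smul_eq [Finite F] {τ : Fˣ} (hτ : τ * star τ ≠ 1) (c : skewAdjoint F) :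
    ∃ d : skewAdjoint F, d - τ • d = c := by
  let f : skewAdjoint F →+ skewAdjoint F :=
    AddMonoidHom.id _ - DistribSMul.toAddMonoidHom (skewAdjoint F) τ
  refine Finite.surjective_of_injective ((injective_iff_map_eq_zero f).2 fun d hd => ?_) c
  have fixed : (d : F) = (τ * star τ : Fˣ) * d := by
    rw [← coe_units_smul]
    exact congrArg Subtype.val (sub_eq_zero.1 hd)
  by_contra hd0
  have hd0' : (d : F) ≠ 0 := fun h => hd0 (Subtype.ext h)
  exact hτ (Units.ext (mul_right_cancel₀ hd0' (fixed.symm.trans (one_mul _).symm)))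

namespace IsUnitaryBorel

variable {x : AddChar (skewAdjoint F) G} {v : F → G} {t : Fˣ →* G} (hB : IsUnitaryBorel x v t)
include hB

theorem transversal_zero : v 0 = 1 := by
  have pairing_zero : skewPairing (0 : F) 0 = 0 := by
    simpa only [mul_zero] using skewPairing_mul_self (0 : F) (star_zero F)
  have := hB.mul_transversal 0 0
  rwa [add_zero, pairing_zero, x.map_zero_eq_one, one_mul, mul_eq_left] at this

theorem inv_transversal (a : F) : (v a)⁻¹ = v (-a) := by
  refine inv_eq_of_mul_eq_one_right ?_
  rw [hB.mul_transversal, ← neg_one_mul a, skewPairing_mul_self _ (by simp), x.map_zero_eq_one,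
    neg_one_mul, add_neg_cancel, hB.transversal_zero, one_mul]

theorem transversal_mul_comm (d a : F) :
    v d * v a = x (skewPairing d a + skewPairing d a) * (v a * v d) := by
  rw [hB.mul_transversal, hB.mul_transversal, ← mul_assoc, ← x.map_add_eq_mul, add_comm a d,
    skewPairing_swap a d, add_neg_cancel_right]

theorem torus_transversal_unitary {τ : Fˣ} (hτ : τ * star τ = 1) (a : F) :
    SemiconjBy (t τ) (v a) (v (τ ^ 3 * a)) := by
  have : τ ^ 2 / star τ = τ ^ 3 := by
    rw [← inv_eq_of_mul_eq_one_right hτ, div_inv_eq_mul, ← pow_succ]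
  simpa only [this, Units.smul_def, smul_eq_mul, Units.val_pow_eq_pow_val] using
    hB.torus_transversal τ a

theorem commute_torus_root {τ : Fˣ} (hτ : τ * star τ = 1) (b : skewAdjoint F) :
    Commute (t τ) (x b) := by
  have := hB.torus_root τ b
  rwa [units_smul_eq_of_mul_star_eq_one hτ] at this

theorem commute_of_generators {K V : Type*} [Field K] [AddCommGroup V] [Module K V]
    {ρ : Representation K G V} {u : Module.End K V} (hx : ∀ b, Commute u (ρ (x b)))
    (hv : ∀ a, Commute u (ρ (v a))) (ht : ∀ τ, Commute u (ρ (t τ))) (g : G) :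
    Commute u (ρ g) := by
  obtain ⟨b, a, τ, rfl⟩ := hB.exists_eq g
  rw [map_mul, map_mul]
  exact ((hx b).mul_right (hv a)).mul_right (ht τ)

theorem isConj_root_mul_of_ne_one [Finite F] {τ : Fˣ} (hτ : τ * star τ ≠ 1)
    (b c : skewAdjoint F) (a : F) : IsConj (x b * v a * t τ) (x c * (x b * v a * t τ)) := by
  obtain ⟨d, rfl⟩ := exists_sub_units_smul_eq hτ c
  refine isConj_iff.2 ⟨x d, ?_⟩
  rw [← x.map_neg_eq_inv]
  have move : t τ * x (-d) = x (-(τ • d)) * t τ := by rw [hB.torus_root τ (-d), smul_neg]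
  have comm : v a * x (-(τ • d)) = x (-(τ • d)) * v a := ((hB.commute _ a).eq).symm
  calc x d * (x b * v a * t τ) * x (-d) = x d * x b * (v a * x (-(τ • d))) * t τ := by
        simp only [mul_assoc, move]
    _ = x (d + b + -(τ • d)) * v a * t τ := by
        rw [comm, x.map_add_eq_mul, x.map_add_eq_mul]
        simp only [mul_assoc]
    _ = x (d - τ • d) * (x b * v a * t τ) := by
        rw [show d + b + -(τ • d) = d - τ • d + b by abel, x.map_add_eq_mul]
        simp only [mul_assoc]

theorem isConj_root_mul_transversal (h2 : (2 : F) ≠ 0) {a : F} (ha : a ≠ 0)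
    (b c : skewAdjoint F) : IsConj (x b * v a) (x c * (x b * v a)) := by
  obtain ⟨d, rfl⟩ := exists_add_self_skewPairing_eq h2 ha c
  refine isConj_iff.2 ⟨v d, ?_⟩
  have comm : v d * x b = x b * v d := ((hB.commute b d).eq).symm
  rw [mul_inv_eq_iff_eq_mul]
  calc v d * (x b * v a) = x b * (v d * v a) := by rw [← mul_assoc, comm, mul_assoc]
    _ = x b * x (skewPairing d a + skewPairing d a) * (v a * v d) := by
        rw [hB.transversal_mul_comm, mul_assoc]
    _ = x (skewPairing d a + skewPairing d a) * (x b * v a) * v d := by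
        rw [← x.map_add_eq_mul, add_comm, x.map_add_eq_mul]
        simp only [mul_assoc]

theorem isConj_root_mul_torus [Fintype F] {q : ℕ} (hF : IsFrobeniusStar F q) {b c : skewAdjoint F}
    (hb : b ≠ 0) (hc : c ≠ 0) (τ : Fˣ) : IsConj (x b * t τ) (x c * t τ) := by
  have hb' : (b : F) ≠ 0 := fun h => hb (Subtype.ext h)
  have hc' : (c : F) ≠ 0 := fun h => hc (Subtype.ext h)
  have star_quotient : star (Units.mk0 (c / b : F) (div_ne_zero hc' hb')) =
      Units.mk0 (c / b : F) (div_ne_zero hc' hb') :=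
    Units.ext <| show star (c / b : F) = c / b by
      rw [star_div₀, show star (c : F) = -c from c.2, show star (b : F) = -b from b.2,
        neg_div_neg_eq]
  obtain ⟨κ, hκ⟩ := hF.exists_mul_star_eq star_quotient
  have smul_b : κ • b = c := Subtype.ext (by
    rw [coe_units_smul, hκ, Units.val_mk0, div_mul_cancel₀ _ hb'])
  refine isConj_iff.2 ⟨t κ, mul_inv_eq_iff_eq_mul.2 ?_⟩
  rw [← mul_assoc, hB.torus_root κ b, smul_b, mul_assoc, mul_assoc, ← map_mul, ← map_mul, mul_comm]

theorem exists_isConj_root_mul_torus {τ : Fˣ} (hτ : τ * star τ = 1) (hτ3 : τ ^ 3 ≠ 1)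
    (b : skewAdjoint F) (a : F) : ∃ c, IsConj (x b * v a * t τ) (x c * t τ) := by
  have ne_zero : (τ : F) ^ 3 - 1 ≠ 0 := sub_ne_zero.2 fun h => hτ3 (Units.ext (by simpa using h))
  let d := a / ((τ : F) ^ 3 - 1)
  have cancel : d + a = (τ : F) ^ 3 * d := by
    simp only [d]
    field_simp
    ring
  have comm : v d * x b = x b * v d := ((hB.commute b d).eq).symm
  refine ⟨b + skewPairing d a, isConj_iff.2 ⟨v d, mul_inv_eq_iff_eq_mul.2 ?_⟩⟩
  calc v d * (x b * v a * t τ) = x b * (v d * v a) * t τ := by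
        rw [← mul_assoc, ← mul_assoc, comm, mul_assoc (x b)]
    _ = x b * x (skewPairing d a) * (v (τ ^ 3 * d) * t τ) := by
        rw [hB.mul_transversal, cancel]
        simp only [mul_assoc]
    _ = x (b + skewPairing d a) * t τ * v d := by
        rw [← hB.torus_transversal_unitary hτ, x.map_add_eq_mul]
        simp only [mul_assoc]

theorem isConj_transversal_mul_torus_neg_one (h2 : (2 : F) ≠ 0) (a : F) :
    IsConj (t (-1)) (v a * t (-1)) := by
  refine isConj_iff.2 ⟨v (a / 2), ?_⟩
  have star_neg_one : (-1 : Fˣ) * star (-1) = 1 := Units.ext (by simp)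
  have move : t (-1) * v (-(a / 2)) = v (a / 2) * t (-1) := by
    rw [(hB.torus_transversal_unitary star_neg_one _).eq]
    congr 2
    simp [Odd.neg_one_pow (by decide : Odd 3)]
  have double : v (a / 2) * v (a / 2) = v a := by
    have pairing_zero := skewPairing_mul_self (a / 2) (star_one F)
    have halves : a / 2 + a / 2 = a := by field_simp; ring
    rw [one_mul] at pairing_zero
    rw [hB.mul_transversal, pairing_zero, x.map_zero_eq_one, one_mul, halves]
  rw [hB.inv_transversal, mul_assoc, move, ← mul_assoc, double]

theorem commute_root_conj {τ : Fˣ} (hτ : τ * star τ = 1) (b : skewAdjoint F) (a : F) :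
    Commute (x b) (MulAut.conj (v a) (t τ)) :=
  ((hB.commute b a).mul_right (hB.commute_torus_root hτ b).symm).mul_right
    (hB.commute b a).inv_right

theorem transversal_conj {τ : Fˣ} (hτ : τ * star τ = 1) (d a : F) :
    MulAut.conj (v d) (MulAut.conj (v a) (t τ)) = MulAut.conj (v (d + a)) (t τ) := by
  rw [← MulAut.mul_apply, ← map_mul, hB.mul_transversal, map_mul, MulAut.mul_apply,
    MulAut.conj_apply, mul_inv_eq_iff_eq_mul]
  exact hB.commute_root_conj hτ _ _

theorem torus_conj (κ τ : Fˣ) (a : F) :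
    MulAut.conj (t κ) (MulAut.conj (v a) (t τ)) =
      MulAut.conj (v ((κ ^ 2 / star κ) • a)) (t τ) := by
  rw [← MulAut.mul_apply, ← map_mul, hB.torus_transversal, map_mul, MulAut.mul_apply,
    MulAut.conj_apply (t κ), ← map_mul, ← map_inv, ← map_mul, mul_comm κ, mul_inv_cancel_right]

theorem conj_mul_torus_inv {τ : Fˣ} (hτ : τ * star τ = 1) (a : F) :
    ∃ b, MulAut.conj (v a) (t τ) * t τ⁻¹ = x b * v ((1 - τ ^ 3) * a) := by
  refine ⟨skewPairing a (τ ^ 3 * -a), ?_⟩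
  rw [MulAut.conj_apply, hB.inv_transversal, mul_assoc (v a), hB.torus_transversal_unitary hτ,
    mul_assoc, mul_assoc, ← map_mul, mul_inv_cancel, map_one, mul_one, hB.mul_transversal]
  congr 2
  ring

end IsUnitaryBorel

end UnitaryBorel

section BorelCharacter

open Module

variable {F G V : Type*} [Field F] [StarRing F] [Fintype F] [Group G] [AddCommGroup V]
  [Module ℂ V] {x : AddChar (skewAdjoint F) G} {v : F → G} {t : Fˣ →* G}
  {ρ : Representation ℂ G V} {q : ℕ}

namespace IsUnitaryBorel

variable (hB : IsUnitaryBorel x v t)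
include hB

theorem commute_sum_root (g : G) : Commute (∑ b, ρ (x b)) (ρ g) := by
  refine hB.commute_of_generators (fun b => ?_) (fun a => ?_) (fun τ => ?_) g
  · exact .sum_left _ _ _ fun c _ => by
      rw [Commute, SemiconjBy, ← map_mul ρ, ← map_mul ρ, ← x.map_add_eq_mul, add_comm,
        x.map_add_eq_mul]
  · exact .sum_left _ _ _ fun c _ => (hB.commute c a).map ρ
  · exact (commute_sum_of_semiconjBy (MulAction.toPerm τ) fun b => (hB.torus_root τ b).map ρ).symm

theorem commute_sum_transversal (hx : ∀ b, ρ (x b) = 1) (g : G) :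
    Commute (∑ a, ρ (v a)) (ρ g) := by
  refine hB.commute_of_generators (fun b => ?_) (fun d => ?_) (fun τ => ?_) g
  · rw [hx]
    exact Commute.one_right _
  · refine .sum_left _ _ _ fun a _ => ?_
    rw [Commute, SemiconjBy, ← map_mul, ← map_mul, hB.transversal_mul_comm, map_mul, hx, one_mul]
  · exact (commute_sum_of_semiconjBy (MulAction.toPerm (τ ^ 2 / star τ : Fˣ)) fun a =>
      (hB.torus_transversal τ a).map ρ).symm

theorem character_eq_zero_of_mul_star_ne_one (hx : ∑ b, ρ (x b) = 0) (b : skewAdjoint F) (a : F)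
    {τ : Fˣ} (hτ : τ * star τ ≠ 1) : ρ.character (x b * v a * t τ) = 0 :=
  character_eq_zero_of_isConj hx fun c => hB.isConj_root_mul_of_ne_one hτ b c a

theorem character_root_mul_transversal (h2 : (2 : F) ≠ 0) (hx : ∑ b, ρ (x b) = 0)
    (b : skewAdjoint F) {a : F} (ha : a ≠ 0) : ρ.character (x b * v a) = 0 :=
  character_eq_zero_of_isConj hx fun c => hB.isConj_root_mul_transversal h2 ha b c

theorem character_root_mul_torus (hF : IsFrobeniusStar F q) (hx : ∑ b, ρ (x b) = 0)
    {b : skewAdjoint F} (hb : b ≠ 0) (τ : Fˣ) :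
    ((q : ℂ) - 1) * ρ.character (x b * t τ) = -ρ.character (t τ) := by
  classical
  have card_eq : Fintype.card (skewAdjoint F) = q := by
    rw [← Nat.card_eq_fintype_card, hF.card_skewAdjoint]
  have sum_eq_zero : ∑ c, ρ.character (x c * t τ) = 0 := by
    calc ∑ c, ρ.character (x c * t τ) = LinearMap.trace ℂ V ((∑ c, ρ (x c)) * ρ (t τ)) := by
          simp only [Representation.character, Finset.sum_mul, map_sum, map_mul]
      _ = 0 := by rw [hx, zero_mul, map_zero]
  rw [← Finset.add_sum_erase _ _ (Finset.mem_univ 0), x.map_zero_eq_one, one_mul,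
    Finset.sum_congr rfl fun c hc => isConj_character_eq
      (hB.isConj_root_mul_torus hF (Finset.ne_of_mem_erase hc) hb τ), Finset.sum_const,
    Finset.card_erase_of_mem (Finset.mem_univ _), Finset.card_univ, card_eq, nsmul_eq_mul,
    Nat.cast_sub hF.one_lt.le, Nat.cast_one] at sum_eq_zero
  exact eq_neg_of_add_eq_zero_right sum_eq_zero

theorem commute_sum_conj {τ : Fˣ} (hτ : τ * star τ = 1) (g : G) :
    Commute (∑ a, ρ (MulAut.conj (v a) (t τ))) (ρ g) := by
  refine hB.commute_of_generators (fun b => ?_) (fun d => ?_) (fun κ => ?_) g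
  · exact .sum_left _ _ _ fun a _ => (hB.commute_root_conj hτ b a).symm.map ρ
  · exact (commute_sum_of_semiconjBy (Equiv.addLeft d) fun a =>
      SemiconjBy.map (mul_inv_eq_iff_eq_mul.1 (hB.transversal_conj hτ d a)) ρ).symm
  · exact (commute_sum_of_semiconjBy (MulAction.toPerm (κ ^ 2 / star κ : Fˣ)) fun a =>
      SemiconjBy.map (mul_inv_eq_iff_eq_mul.1 (hB.torus_conj κ τ a)) ρ).symm

variable [FiniteDimensional ℂ V] [ρ.IsIrreducible]

/-- If the root subgroup acted trivially, then so would the transversal, or the involution would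
have trace zero. -/
theorem sum_root_eq_zero (h2 : (2 : F) ≠ 0) (ne_zero : ρ.character (t (-1)) ≠ 0)
    (sq_ne : ρ.character (t (-1)) ^ 2 ≠ ρ.character 1 ^ 2) : ∑ b, ρ (x b) = 0 := by
  refine (sum_eq_zero_or_forall_eq_one (P := ρ.compAddChar x) hB.commute_sum_root).resolve_right
    fun hx => ?_
  let P : AddChar F (Module.End ℂ V) :=
    { toFun a := ρ (v a)
      map_zero_eq_one' := by rw [hB.transversal_zero, map_one]
      map_add_eq_mul' a d := by
        rw [← map_mul, hB.mul_transversal, map_mul]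
        exact ((congrArg (· * ρ (v (a + d))) (hx _)).trans (one_mul _)).symm }
  rcases sum_eq_zero_or_forall_eq_one (P := P) (hB.commute_sum_transversal hx) with hv | hv
  · exact ne_zero (character_eq_zero_of_isConj hv (hB.isConj_transversal_mul_torus_neg_one h2))
  · have commute (g : G) : Commute (ρ (t (-1))) (ρ g) := by
      refine hB.commute_of_generators (fun b => ?_) (fun a => ?_) (fun τ => ?_) g
      · rw [show ρ (x b) = 1 from hx b]
        exact Commute.one_right _
      · rw [show ρ (v a) = 1 from hv a]
        exact Commute.one_right _
      · exact ((Commute.all (-1) τ).map t).map ρ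
    obtain ⟨c, hc⟩ := exists_eq_smul_one_of_commute commute
    refine sq_ne ?_
    have char_sq : ρ.character 1 = c * (c * ρ.character 1) := by
      rw [← character_mul_of_eq_smul_one hc, ← character_mul_of_eq_smul_one hc, mul_one, ← map_mul,
        neg_one_mul, neg_neg, map_one]
    calc ρ.character (t (-1)) ^ 2 = (c * ρ.character 1) ^ 2 := by
          rw [← character_mul_of_eq_smul_one hc, mul_one]
      _ = ρ.character 1 * (c * (c * ρ.character 1)) := by ring
      _ = ρ.character 1 ^ 2 := by rw [← char_sq, sq]

/-- The conjugates of `t τ` by the transversal sum up to a scalar, which is computed from the trace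
of this sum and from the trace of its product with `t τ⁻¹`. -/
theorem character_mul_character_inv (hF : IsFrobeniusStar F q) (hx : ∑ b, ρ (x b) = 0) {τ : Fˣ}
    (hτ : τ * star τ = 1) (hτ3 : τ ^ 3 ≠ 1) :
    (q : ℂ) ^ 2 * (ρ.character (t τ) * ρ.character (t τ⁻¹)) = ρ.character 1 ^ 2 := by
  obtain ⟨c, hc⟩ := exists_eq_smul_one_of_commute (hB.commute_sum_conj (ρ := ρ) hτ)
  have card_eq : (Fintype.card F : ℂ) = (q : ℂ) ^ 2 := by rw [hF.card_eq, Nat.cast_pow]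
  have trace_sum (g : G) : ∑ a, ρ.character (MulAut.conj (v a) (t τ) * g) = c * ρ.character g := by
    calc ∑ a, ρ.character (MulAut.conj (v a) (t τ) * g)
        = LinearMap.trace ℂ V ((∑ a, ρ (MulAut.conj (v a) (t τ))) * ρ g) := by
          simp only [Representation.character, Finset.sum_mul, map_sum, map_mul]
      _ = c * ρ.character g := by
          rw [hc, smul_mul_assoc, one_mul, map_smul, smul_eq_mul, Representation.character]
  have trace_one : (q : ℂ) ^ 2 * ρ.character (t τ) = c * ρ.character 1 := by
    have character_conj (a : F) :
        ρ.character (MulAut.conj (v a) (t τ) * 1) = ρ.character (t τ) := by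
      rw [mul_one, MulAut.conj_apply, Representation.char_conj]
    rw [← trace_sum, Finset.sum_congr rfl fun a _ => character_conj a, Finset.sum_const,
      Finset.card_univ, nsmul_eq_mul, card_eq]
  have trace_inv : c * ρ.character (t τ⁻¹) = ρ.character 1 := by
    rw [← trace_sum, Finset.sum_eq_single 0 (fun a _ ha => ?_) (by simp), hB.transversal_zero,
      map_one, MulAut.one_apply, ← map_mul, mul_inv_cancel, map_one]
    obtain ⟨b, hb⟩ := hB.conj_mul_torus_inv hτ a
    rw [hb]
    exact hB.character_root_mul_transversal hF.two_ne_zero hx b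
      (mul_ne_zero (sub_ne_zero.2 fun h => hτ3 (Units.ext (by simpa using h.symm))) ha)
  rw [← mul_assoc, trace_one, mul_right_comm, trace_inv, sq]

omit [Fintype F] in
theorem exists_torus_eq_smul_one {τ : Fˣ} (hτ : τ * star τ = 1) (hτ3 : τ ^ 3 = 1) :
    ∃ c : ℂ, ρ (t τ) = c • 1 := by
  refine exists_eq_smul_one_of_commute (hB.commute_of_generators (fun b => ?_) (fun a => ?_)
    fun κ => ((Commute.all τ κ).map t).map ρ)
  · exact (hB.commute_torus_root hτ b).map ρ
  · have := hB.torus_transversal_unitary hτ a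
    rw [← Units.val_pow_eq_pow_val, hτ3, Units.val_one, one_mul] at this
    exact SemiconjBy.map this ρ

theorem exists_character_eq (hF : IsFrobeniusStar F q) (hx : ∑ b, ρ (x b) = 0) {τ : Fˣ}
    (hτ : τ * star τ = 1) (b : skewAdjoint F) (a : F)
    (ne_zero : ρ.character (x b * v a * t τ) ≠ 0) :
    ∃ c, ρ.character (x b * v a * t τ) = ρ.character (x c * t τ) := by
  by_cases hτ3 : τ ^ 3 = 1
  · obtain ⟨c, hc⟩ := hB.exists_torus_eq_smul_one (ρ := ρ) hτ hτ3
    have ha : a = 0 := by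
      by_contra ha
      refine ne_zero ?_
      rw [Representation.char_mul_comm, character_mul_of_eq_smul_one hc,
        hB.character_root_mul_transversal hF.two_ne_zero hx b ha, mul_zero]
    exact ⟨b, by rw [ha, hB.transversal_zero, mul_one]⟩
  · obtain ⟨c, hc⟩ := hB.exists_isConj_root_mul_torus hτ hτ3 b a
    exact ⟨c, isConj_character_eq hc⟩

end IsUnitaryBorel

end BorelCharacter

section TorusCharacter

open Module

variable {F G V : Type*} [Field F] [StarRing F] [Fintype F] [Group G] [AddCommGroup V]
  [Module ℂ V] [FiniteDimensional ℂ V] {x : AddChar (skewAdjoint F) G} {v : F → G} {t : Fˣ →* G}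
  {ρ : Representation ℂ G V} {q : ℕ}

open Classical in
/-- The values of the character of `ρ` on the unitary torus, rescaled so that they become, up to a
global sign, the values of a linear character. -/
def torusValue (ρ : Representation ℂ G V) (t : Fˣ →* G) (q : ℕ) (τ : Fˣ) : ℂ :=
  if τ ^ 3 = 1 then ρ.character (t τ) / (q * (q - 1)) else -ρ.character (t τ) / (q - 1)

omit [StarRing F] [Fintype F] [FiniteDimensional ℂ V] in
theorem exists_torusValue_eq_rat_mul (hq : 1 < q) (τ : Fˣ) :
    ∃ r : ℚ, r ≠ 0 ∧ torusValue ρ t q τ = r * ρ.character (t τ) := by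
  have q_ne_zero : (q : ℚ) ≠ 0 := Nat.cast_ne_zero.2 (by omega)
  have pred_ne_zero : (q : ℚ) - 1 ≠ 0 := sub_ne_zero.2 (Nat.cast_ne_one.2 hq.ne')
  unfold torusValue
  split_ifs
  · refine ⟨((q : ℚ) * (q - 1))⁻¹, inv_ne_zero (mul_ne_zero q_ne_zero pred_ne_zero), ?_⟩
    push_cast
    ring
  · refine ⟨-((q : ℚ) - 1)⁻¹, neg_ne_zero.2 (inv_ne_zero pred_ne_zero), ?_⟩
    push_cast
    ring

namespace IsUnitaryBorel

variable (hB : IsUnitaryBorel x v t) (hF : IsFrobeniusStar F q) (hx : ∑ b, ρ (x b) = 0)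
include hB hF hx

omit [FiniteDimensional ℂ V] in
theorem sum_addChar_mul_character_root {l : AddChar (skewAdjoint F) ℂ} (hl : l ≠ 0) (τ : Fˣ) :
    ((q : ℂ) - 1) * ∑ b, l (-b) * ρ.character (x b * t τ) = q * ρ.character (t τ) := by
  have sum_l : ∑ b, l (-b) = 0 :=
    (Equiv.sum_comp (Equiv.neg _) l).trans (AddChar.sum_eq_zero_iff_ne_zero.2 hl)
  calc ((q : ℂ) - 1) * ∑ b, l (-b) * ρ.character (x b * t τ)
      = ∑ b, l (-b) * ((q - 1) * ρ.character (x b * t τ) + ρ.character (t τ)) := by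
        simp only [mul_add, Finset.sum_add_distrib, ← Finset.sum_mul, sum_l, zero_mul, add_zero,
          Finset.mul_sum, mul_left_comm]
    _ = q * ρ.character (t τ) := by
        rw [Finset.sum_eq_single 0 (fun b _ hb => ?_) (by simp)]
        · rw [neg_zero, l.map_zero_eq_one, x.map_zero_eq_one, one_mul, one_mul]
          ring
        · rw [hB.character_root_mul_torus hF hx hb, neg_add_cancel, mul_zero]

theorem exists_sum_unitary_mul_character_eq (ψ : unitary Fˣ →* ℂ) :
    ∃ m : ℕ, ∑ τ : unitary Fˣ, ψ τ⁻¹ * ρ.character (t τ) = (q - 1) * ((q + 1) * m) := by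
  have q_ne_zero : (q : ℂ) ≠ 0 := Nat.cast_ne_zero.2 (by have := hF.one_lt; omega)
  have : Nontrivial (AddChar (skewAdjoint F) ℂ) := by
    rw [← Fintype.one_lt_card_iff_nontrivial, AddChar.card_eq, ← Nat.card_eq_fintype_card,
      hF.card_skewAdjoint]
    exact hF.one_lt
  obtain ⟨l, hl⟩ := exists_ne (0 : AddChar (skewAdjoint F) ℂ)
  let φ : Multiplicative (skewAdjoint F) × unitary Fˣ →* G :=
    x.toMonoidHom.noncommCoprod (t.comp (unitary Fˣ).subtype) fun b τ =>
      (hB.commute_torus_root (Unitary.mem_iff_self_mul_star.1 τ.2) b.toAdd).symm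
  let σ : Representation ℂ (Multiplicative (skewAdjoint F) × unitary Fˣ) V := ρ.comp φ
  obtain ⟨m, hm⟩ := exists_sum_mul_character_eq (l.toMonoidHom.coprod ψ) σ
  refine ⟨m, mul_left_cancel₀ q_ne_zero ?_⟩
  have card_eq : (Nat.card (Multiplicative (skewAdjoint F) × unitary Fˣ) : ℂ) = q * (q + 1) := by
    rw [Nat.card_prod, hF.card_unitary]
    exact_mod_cast congrArg (· * (q + 1)) hF.card_skewAdjoint
  calc (q : ℂ) * ∑ τ : unitary Fˣ, ψ τ⁻¹ * ρ.character (t τ)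
      = ∑ τ : unitary Fˣ, ψ τ⁻¹ * ((q - 1) * ∑ b, l (-b) * ρ.character (x b * t τ)) := by
        simp only [hB.sum_addChar_mul_character_root hF hx hl, Finset.mul_sum, mul_left_comm]
    _ = (q - 1) * ∑ g, l.toMonoidHom.coprod ψ g⁻¹ * σ.character g := by
        rw [Fintype.sum_prod_type_right, Finset.mul_sum]
        refine Finset.sum_congr rfl fun τ _ => ?_
        rw [mul_left_comm, Finset.mul_sum]
        refine congrArg _ (Fintype.sum_equiv Multiplicative.ofAdd _ _ fun b => ?_)
        rw [← mul_assoc, mul_comm (ψ _)]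
        exact congrArg (_ * ρ.character ·) rfl
    _ = q * ((q - 1) * ((q + 1) * m)) := by
        rw [hm, card_eq]
        ring

variable [ρ.IsIrreducible] (hdeg : ρ.character 1 = q * (q - 1))
include hdeg

theorem torusValue_mul_torusValue_inv {τ : Fˣ} (hτ : τ * star τ = 1) :
    torusValue ρ t q τ * torusValue ρ t q τ⁻¹ = 1 := by
  have q_ne_zero : (q : ℂ) ≠ 0 := Nat.cast_ne_zero.2 (by have := hF.one_lt; omega)
  have pred_ne_zero : (q : ℂ) - 1 ≠ 0 := sub_ne_zero.2 (Nat.cast_ne_one.2 hF.one_lt.ne')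
  unfold torusValue
  by_cases hτ3 : τ ^ 3 = 1
  · obtain ⟨c, hc⟩ := hB.exists_torus_eq_smul_one (ρ := ρ) hτ hτ3
    have mul_eq : ρ.character (t τ) * ρ.character (t τ⁻¹) = ρ.character 1 ^ 2 := by
      have char_τ := character_mul_of_eq_smul_one hc 1
      have char_one := character_mul_of_eq_smul_one hc (t τ⁻¹)
      rw [mul_one] at char_τ
      rw [← map_mul, mul_inv_cancel, map_one] at char_one
      rw [char_τ, mul_right_comm, ← char_one, sq]
    rw [if_pos hτ3, if_pos (by rw [inv_pow, hτ3, inv_one]), div_mul_div_comm, mul_eq, hdeg]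
    field_simp
  · have mul_eq := hB.character_mul_character_inv hF hx hτ hτ3
    rw [hdeg, mul_pow] at mul_eq
    rw [if_neg hτ3, if_neg (by rwa [inv_pow, inv_eq_one]), div_mul_div_comm, neg_mul_neg,
      mul_left_cancel₀ (pow_ne_zero 2 q_ne_zero) mul_eq]
    field_simp

omit hx in
open Classical in
theorem exists_sum_cube_eq (ψ : unitary Fˣ →* ℂ) :
    ∃ m : ℕ, ∑ τ ∈ Finset.univ.filter (fun τ : unitary Fˣ => (τ : Fˣ) ^ 3 = 1),
      ψ τ⁻¹ * (ρ.character (t τ) / (q * (q - 1))) = m := by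
  have deg_ne_zero : ρ.character 1 ≠ 0 := by
    rw [hdeg]
    exact mul_ne_zero (Nat.cast_ne_zero.2 (by have := hF.one_lt; omega))
      (sub_ne_zero.2 (Nat.cast_ne_one.2 hF.one_lt.ne'))
  let C : Subgroup (unitary Fˣ) := (powMonoidHom 3).ker
  have mem_C (τ : unitary Fˣ) : (τ : Fˣ) ^ 3 = 1 ↔ τ ∈ C := by
    rw [MonoidHom.mem_ker, powMonoidHom_apply, Subtype.ext_iff]
    rfl
  have character_mul (τ : C) (g : G) : ρ.character (t (τ : unitary Fˣ) * g) / ρ.character 1 =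
      ρ.character (t (τ : unitary Fˣ)) / ρ.character 1 * (ρ.character g / ρ.character 1) := by
    obtain ⟨c, hc⟩ := hB.exists_torus_eq_smul_one (ρ := ρ)
      (Unitary.mem_iff_self_mul_star.1 τ.1.2) ((mem_C τ).2 τ.2)
    have char_τ := character_mul_of_eq_smul_one hc 1
    rw [mul_one] at char_τ
    rw [character_mul_of_eq_smul_one hc, char_τ, mul_div_cancel_right₀ _ deg_ne_zero, mul_div_assoc]
  let f : C →* ℂ :=
    { toFun τ := ψ (τ : unitary Fˣ)⁻¹ * (ρ.character (t (τ : unitary Fˣ)) / ρ.character 1)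
      map_one' := by
        rw [Subgroup.coe_one, inv_one, map_one, Submonoid.coe_one, map_one, one_mul,
          div_self deg_ne_zero]
      map_mul' τ κ := by
        rw [Subgroup.coe_mul, _root_.mul_inv_rev, map_mul, Submonoid.coe_mul, map_mul,
          character_mul]
        ring }
  refine ⟨if f = 1 then Fintype.card C else 0, ?_⟩
  rw [← sum_hom_units, ← hdeg, Finset.sum_subtype _ (p := (· ∈ C)) (by simp [mem_C])]
  rfl

theorem exists_sum_mul_torusValue_eq (ψ : unitary Fˣ →* ℂ) :
    ∃ m : ℤ, ∑ τ : unitary Fˣ, ψ τ⁻¹ * torusValue ρ t q τ = Fintype.card (unitary Fˣ) * m := by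
  classical
  have q_ne_zero : (q : ℂ) ≠ 0 := Nat.cast_ne_zero.2 (by have := hF.one_lt; omega)
  have pred_ne_zero : (q : ℂ) - 1 ≠ 0 := sub_ne_zero.2 (Nat.cast_ne_one.2 hF.one_lt.ne')
  obtain ⟨m, hm⟩ := hB.exists_sum_unitary_mul_character_eq hF hx ψ
  obtain ⟨s, hs⟩ := hB.exists_sum_cube_eq hF hdeg ψ
  have card_eq : (Fintype.card (unitary Fˣ) : ℂ) = q + 1 := by
    rw [← Nat.card_eq_fintype_card, hF.card_unitary, Nat.cast_succ]
  have split (τ : Fˣ) : torusValue ρ t q τ = -(ρ.character (t τ) / (q - 1)) +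
      (q + 1) * if τ ^ 3 = 1 then ρ.character (t τ) / (q * (q - 1)) else 0 := by
    unfold torusValue
    split_ifs
    · field_simp
      ring
    · ring
  refine ⟨s - m, ?_⟩
  calc ∑ τ : unitary Fˣ, ψ τ⁻¹ * torusValue ρ t q τ
      = -((∑ τ : unitary Fˣ, ψ τ⁻¹ * ρ.character (t τ)) / (q - 1)) + (q + 1) *
          ∑ τ ∈ Finset.univ.filter (fun τ : unitary Fˣ => (τ : Fˣ) ^ 3 = 1),
            ψ τ⁻¹ * (ρ.character (t τ) / (q * (q - 1))) := by
        rw [Finset.sum_filter, Finset.sum_div, Finset.mul_sum, ← Finset.sum_neg_distrib,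
          ← Finset.sum_add_distrib]
        refine Finset.sum_congr rfl fun τ _ => ?_
        rw [split]
        split_ifs <;> ring
    _ = Fintype.card (unitary Fˣ) * ((s - m : ℤ) : ℂ) := by
        rw [hm, hs, card_eq, mul_div_cancel_left₀ _ pred_ne_zero]
        push_cast
        ring

theorem torusValue_pow_card {τ : Fˣ} (hτ : τ * star τ = 1) : torusValue ρ t q τ ^ (q + 1) = 1 := by
  have card_eq : Fintype.card (unitary Fˣ) = q + 1 := by
    rw [← Nat.card_eq_fintype_card, hF.card_unitary]
  have coe_inv (κ : unitary Fˣ) : ((κ⁻¹ : unitary Fˣ) : Fˣ) = (κ : Fˣ)⁻¹ :=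
    eq_inv_of_mul_eq_one_right (Unitary.mem_iff_self_mul_star.1 κ.2)
  have := pow_card_eq_one_of_fourier_integral (f := fun τ : unitary Fˣ => torusValue ρ t q τ)
    (fun κ => by
      rw [coe_inv]
      exact hB.torusValue_mul_torusValue_inv hF hx hdeg (Unitary.mem_iff_self_mul_star.1 κ.2))
    (by rw [card_eq]; exact hF.odd.add_one) (hB.exists_sum_mul_torusValue_eq hF hx hdeg)
    ⟨τ, Unitary.mem_iff_self_mul_star.2 hτ⟩
  rwa [card_eq] at this

omit hdeg in
theorem exists_torusValue_sq_ne_one {g : G} (hg : (ρ.character g).im ≠ 0) :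
    ∃ τ : Fˣ, τ * star τ = 1 ∧ torusValue ρ t q τ ^ 2 ≠ 1 := by
  obtain ⟨b, a, τ, rfl⟩ := hB.exists_eq g
  have char_ne_zero : ρ.character (x b * v a * t τ) ≠ 0 := fun h => hg (by rw [h, Complex.zero_im])
  have hτ : τ * star τ = 1 := by
    by_contra hτ
    exact char_ne_zero (hB.character_eq_zero_of_mul_star_ne_one hx b a hτ)
  refine ⟨τ, hτ, fun h => hg ?_⟩
  obtain ⟨c, hc⟩ := hB.exists_character_eq hF hx hτ b a char_ne_zero
  have torus_real : (ρ.character (t τ)).im = 0 := by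
    obtain ⟨r, hr, hτr⟩ := exists_torusValue_eq_rat_mul (ρ := ρ) (t := t) hF.one_lt τ
    have character_eq : ρ.character (t τ) = ((r⁻¹ : ℝ) : ℂ) * torusValue ρ t q τ := by
      rw [hτr]
      push_cast
      rw [inv_mul_cancel_left₀ (Rat.cast_ne_zero.2 hr)]
    rw [character_eq, Complex.im_ofReal_mul]
    rcases mul_self_eq_one_iff.1 ((sq _).symm.trans h) with h | h <;> simp [h]
  rw [hc]
  by_cases hc0 : c = 0
  · rwa [hc0, x.map_zero_eq_one, one_mul]
  · have scaled := congrArg Complex.im (hB.character_root_mul_torus hF hx hc0 τ)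
    rw [Complex.neg_im, torus_real, neg_zero, show (q : ℂ) - 1 = ((q - 1 : ℝ) : ℂ) by simp,
      Complex.im_ofReal_mul] at scaled
    exact (mul_eq_zero.1 scaled).resolve_left (sub_ne_zero.2 (Nat.cast_ne_one.2 hF.one_lt.ne'))

end IsUnitaryBorel

end TorusCharacter

/-! ### The Borel subgroup of `SU₃(q)` -/

section BorelSubgroup

variable {p k : ℕ} {F : Type} [Field F]

theorem Om_eq : Om F = !![0, 0, 1; 0, 1, 0; 1, 0, 0] := by
  ext i j
  fin_cases i <;> fin_cases j <;> rfl

omit [Field F] in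
theorem conjTranspose_fin_three [Star F] (a b c d e f g h i : F) :
    !![a, b, c; d, e, f; g, h, i]ᴴ =
      !![star a, star d, star g; star b, star e, star h; star c, star f, star i] := by
  ext i j
  fin_cases i <;> fin_cases j <;> rfl

variable [Fintype F] [ExpChar F p]

/-- The star ring structure `y ↦ y ^ q` on the field with `q ^ 2` elements, where `q = p ^ k`. -/
abbrev frobeniusStarRing (hF : Fintype.card F = (p ^ k) ^ 2) : StarRing F where
  star := iterateFrobenius F p k
  star_involutive y := by
    rw [iterateFrobenius_def, iterateFrobenius_def, ← pow_mul, ← sq, ← hF, FiniteField.pow_card]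
  star_mul y z := by rw [map_mul, mul_comm]
  star_add := map_add _

theorem isFrobeniusStar_frobeniusStarRing (hodd : Odd (p ^ k)) (one_lt : 1 < p ^ k)
    (hF : Fintype.card F = (p ^ k) ^ 2) :
    letI := frobeniusStarRing hF
    IsFrobeniusStar F (p ^ k) :=
  letI := frobeniusStarRing hF
  ⟨hodd, one_lt, hF, iterateFrobenius_def p k⟩

/-- The matrix underlying an element of the Borel subgroup. -/
def toMatrix (g : Borel p k F) : Matrix (Fin 3) (Fin 3) F :=
  g.1.1.1

omit [Fintype F] in
theorem toMatrix_injective : Function.Injective (toMatrix : Borel p k F → _) := fun _ _ h =>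
  Subtype.ext (Subtype.ext (Subtype.ext h))

omit [Fintype F] in
theorem toMatrix_mul (g h : Borel p k F) : toMatrix (g * h) = toMatrix g * toMatrix h :=
  rfl

variable [StarRing F]

theorem transpose_Phi (hF : IsFrobeniusStar F (p ^ k)) (M : Matrix (Fin 3) (Fin 3) F) :
    (Phi p k F M)ᵀ = Mᴴ :=
  Matrix.ext fun i j => (iterateFrobenius_def p k (M j i)).trans (hF.star_eq _).symm

/-- The element of the Borel subgroup with given entries. -/
def borelMk (hF : IsFrobeniusStar F (p ^ k)) (a b c d e f : F) (det_eq : a * d * f = 1)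
    (unitary : !![a, b, c; 0, d, e; 0, 0, f]ᴴ * Om F * !![a, b, c; 0, d, e; 0, 0, f] = Om F) :
    Borel p k F :=
  ⟨⟨⟨!![a, b, c; 0, d, e; 0, 0, f], by simpa [det_fin_three] using det_eq⟩,
    show (Phi p k F _)ᵀ * _ * _ = _ by rw [transpose_Phi hF, unitary]⟩, by
    intro i j hij
    fin_cases i <;> fin_cases j <;> first | rfl | exact absurd hij (by decide)⟩

variable (hF : IsFrobeniusStar F (p ^ k))

/-- The root subgroup: the center of the unipotent radical of the Borel subgroup. -/
def rootHom : AddChar (skewAdjoint F) (Borel p k F) where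
  toFun b := borelMk hF 1 0 b 1 0 1 (by simp) (by
    simp [conjTranspose_fin_three, Om_eq, show star (b : F) = -b from b.2])
  map_zero_eq_one' := toMatrix_injective (Matrix.one_fin_three).symm
  map_add_eq_mul' b c := toMatrix_injective (show !![_, _, _; _, _, _; _, _, _] =
      !![_, _, _; _, _, _; _, _, _] * !![_, _, _; _, _, _; _, _, _] by
    rw [mul_fin_three]
    simp [add_comm])

/-- A transversal of the root subgroup in the unipotent radical; its corner entry is chosen so
that the transversal is closed under inversion. -/
def transversal (a : F) : Borel p k F :=
  borelMk hF 1 a (-(a * star a) / 2) 1 (-star a) 1 (by simp) (by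
    have := hF.two_ne_zero
    rw [conjTranspose_fin_three, Om_eq, mul_fin_three, mul_fin_three]
    simp only [star_one, mul_zero, star_zero, add_zero, mul_one, zero_mul, mul_neg, neg_zero,
      zero_add, one_mul, neg_add_cancel, star_div₀, star_neg, star_mul', star_star, star_ofNat,
      add_neg_cancel, neg_mul, neg_neg]
    field_simp
    ring_nf)

/-- The maximal torus of the Borel subgroup. -/
def torusHom : Fˣ →* Borel p k F where
  toFun τ := borelMk hF τ 0 0 (star (τ : F) / τ) 0 (star (τ : F))⁻¹ (by
    have := τ.ne_zero
    have := star_ne_zero.2 τ.ne_zero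
    field_simp) (by
    have := τ.ne_zero
    have := star_ne_zero.2 τ.ne_zero
    rw [conjTranspose_fin_three, Om_eq, mul_fin_three, mul_fin_three]
    simp [star_div₀])
  map_one' := toMatrix_injective (show !![_, _, _; _, _, _; _, _, _] = (1 : Matrix _ _ F) by
    simp [Matrix.one_fin_three])
  map_mul' τ κ := toMatrix_injective (show !![_, _, _; _, _, _; _, _, _] =
      !![_, _, _; _, _, _; _, _, _] * !![_, _, _; _, _, _; _, _, _] by
    simp [mul_comm, mul_div_mul_comm])

theorem toMatrix_rootHom (b : skewAdjoint F) :
    toMatrix (rootHom hF b) = !![1, 0, (b : F); 0, 1, 0; 0, 0, 1] :=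
  rfl

theorem toMatrix_transversal (a : F) : toMatrix (transversal hF a) =
    !![1, a, -(a * star a) / 2; 0, 1, -star a; 0, 0, 1] :=
  rfl

theorem toMatrix_torusHom (τ : Fˣ) : toMatrix (torusHom hF τ) =
    !![(τ : F), 0, 0; 0, star (τ : F) / τ, 0; 0, 0, (star (τ : F))⁻¹] :=
  rfl

theorem commute_rootHom_transversal (b : skewAdjoint F) (a : F) :
    Commute (rootHom hF b) (transversal hF a) := toMatrix_injective <| by
  rw [toMatrix_mul, toMatrix_mul, toMatrix_rootHom, toMatrix_transversal, mul_fin_three,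
    mul_fin_three]
  simp [add_comm]

theorem transversal_mul_transversal (a d : F) : transversal hF a * transversal hF d =
    rootHom hF (skewPairing a d) * transversal hF (a + d) := toMatrix_injective <| by
  have := hF.two_ne_zero
  have corner : -(a * star a) / 2 + (-(a * star d) + -(d * star d) / 2) =
      skewPairing a d + -((a + d) * (star a + star d)) / 2 := by
    change _ = (d * star a - a * star d) / 2 + _
    field_simp
    ring
  simp only [toMatrix_mul, toMatrix_rootHom, toMatrix_transversal, mul_fin_three]
  simp [corner, add_comm]

theorem torusHom_rootHom (τ : Fˣ) (b : skewAdjoint F) :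
    SemiconjBy (torusHom hF τ) (rootHom hF b) (rootHom hF (τ • b)) := toMatrix_injective <| by
  have := τ.ne_zero
  have := star_ne_zero.2 τ.ne_zero
  simp only [toMatrix_mul, toMatrix_rootHom, toMatrix_torusHom, mul_fin_three, coe_units_smul]
  simp only [mul_one, mul_zero, add_zero, zero_add, zero_mul, one_mul, Units.val_mul,
    Units.coe_star]
  field_simp

theorem torusHom_transversal (τ : Fˣ) (a : F) : SemiconjBy (torusHom hF τ) (transversal hF a)
    (transversal hF ((τ ^ 2 / star τ) • a)) := toMatrix_injective <| by
  have := τ.ne_zero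
  have := star_ne_zero.2 τ.ne_zero
  simp only [toMatrix_mul, toMatrix_transversal, toMatrix_torusHom, mul_fin_three, Units.smul_def]
  simp only [mul_one, mul_zero, add_zero, mul_neg, zero_mul, neg_zero, zero_add, one_mul,
    Units.val_div_eq_div_val, Units.val_pow_eq_pow_val, Units.coe_star, smul_eq_mul, star_mul',
    star_div₀, star_pow, star_star, neg_mul]
  field_simp

include hF in
theorem exists_toMatrix_eq (g : Borel p k F) : ∃ (τ : Fˣ) (b c : F),
    toMatrix g = !![(τ : F), b, c; 0, star (τ : F) / τ, -star b / τ; 0, 0, (star (τ : F))⁻¹] ∧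
      star c * τ + b * star b + c * star (τ : F) = 0 := by
  have triangular : (toMatrix g).BlockTriangular id := g.2
  obtain ⟨a, b, c, d, e, f, hg⟩ :
      ∃ a b c d e f, toMatrix g = !![a, b, c; 0, d, e; 0, 0, f] := by
    have eta := eta_fin_three (toMatrix g)
    rw [triangular (show (0 : Fin 3) < 1 by decide), triangular (show (0 : Fin 3) < 2 by decide),
      triangular (show (1 : Fin 3) < 2 by decide)] at eta
    exact ⟨_, _, _, _, _, _, eta⟩
  have det_eq : a * d * f = 1 := by
    have : (toMatrix g).det = 1 := g.1.1.2
    simpa [hg, det_fin_three] using this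
  have unitary : (toMatrix g)ᴴ * Om F * toMatrix g = Om F := by
    rw [← transpose_Phi hF]
    exact g.1.2
  rw [hg, conjTranspose_fin_three, Om_eq, mul_fin_three, mul_fin_three] at unitary
  have eq₀₂ : star a * f = 1 := by simpa using congrFun₂ unitary 0 2
  have eq₁₂ : star d * e + star b * f = 0 := by simpa using congrFun₂ unitary 1 2
  have eq₂₂ : star f * c + star e * e + star c * f = 0 := by simpa using congrFun₂ unitary 2 2
  have ha : a ≠ 0 := by
    rintro rfl
    simp at det_eq
  have hf : f = (star a)⁻¹ := eq_inv_of_mul_eq_one_right eq₀₂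
  have star_a := star_ne_zero.2 ha
  have hd : d = star a / a := by
    rw [hf] at det_eq
    field_simp at det_eq ⊢
    linear_combination det_eq
  have he : e = -star b / a := by
    rw [hf, hd, star_div₀, star_star] at eq₁₂
    field_simp at eq₁₂ ⊢
    linear_combination eq₁₂
  refine ⟨Units.mk0 a ha, b, c, by rw [hg, hf, hd, he, Units.val_mk0], ?_⟩
  rw [hf, he, star_div₀, star_inv₀, star_neg, star_star, star_star] at eq₂₂
  field_simp at eq₂₂
  rw [Units.val_mk0]
  linear_combination eq₂₂

theorem exists_root_mul_transversal_mul_torus_eq (g : Borel p k F) :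
    ∃ b a τ, g = rootHom hF b * transversal hF a * torusHom hF τ := by
  have h2 := hF.two_ne_zero
  obtain ⟨τ, b, c, hg, hc⟩ := exists_toMatrix_eq hF g
  have hτ := τ.ne_zero
  have hτ' := star_ne_zero.2 hτ
  have skew : star (c * star (τ : F) + b * star b / 2) = -(c * star (τ : F) + b * star b / 2) := by
    rw [star_add, star_div₀, star_mul', star_mul', star_star, star_star, star_ofNat]
    field_simp
    linear_combination 2 * hc
  refine ⟨⟨_, skew⟩, b * τ / star (τ : F), τ, toMatrix_injective ?_⟩
  rw [hg]
  simp only [toMatrix_mul, toMatrix_rootHom, toMatrix_transversal, toMatrix_torusHom, mul_fin_three]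
  simp only [mul_one, mul_zero, add_zero, one_mul, star_div₀, star_mul', star_star, mul_neg,
    zero_mul, neg_zero, zero_add, neg_mul, EmbeddingLike.apply_eq_iff_eq, vecCons_inj, and_true,
    true_and]
  field_simp
  simp only [true_and, and_true]
  ring

theorem isUnitaryBorel : IsUnitaryBorel (rootHom hF) (transversal hF) (torusHom hF) where
  commute := commute_rootHom_transversal hF
  mul_transversal := transversal_mul_transversal hF
  torus_root := torusHom_rootHom hF
  torus_transversal := torusHom_transversal hF
  exists_eq := exists_root_mul_transversal_mul_torus_eq hF

theorem eq_torusHom_neg_one {g : Borel p k F} (hg : toMatrix g = diagonal ![-1, 1, -1]) :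
    g = torusHom hF (-1) := toMatrix_injective <| by
  rw [hg, toMatrix_torusHom, diagonal_fin_three]
  simp

end BorelSubgroup

/-! ### Unitary discriminants -/

section MatrixRepresentation

variable {K G ι : Type*} [Field K] [Group G] [Fintype ι] [DecidableEq ι]

/-- The representation on column vectors given by a matrix representation. -/
def matrixRep (r : G →* Matrix ι ι K) : Representation K G (ι → K) :=
  ((Matrix.toLinAlgEquiv' : Matrix ι ι K ≃ₐ[K] _) : Matrix ι ι K →* _).comp r

theorem matrixRep_apply (r : G →* Matrix ι ι K) (g : G) (v : ι → K) :
    matrixRep r g v = r g *ᵥ v := rfl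

theorem character_matrixRep (r : G →* Matrix ι ι K) (g : G) :
    (matrixRep r).character g = (r g).trace :=
  Matrix.trace_toLin'_eq (r g)

theorem IsIrredRep.isIrreducible {G : Type} [Group G] {n : ℕ} {ρ : G →* GL (Fin n) ℂ}
    (hρ : IsIrredRep ρ) : (matrixRep ((Units.coeHom _).comp ρ)).IsIrreducible where
  exists_pair_ne := by
    have : Nonempty (Fin n) := ⟨⟨0, hρ.1⟩⟩
    refine ⟨⊥, ⊤, fun h => bot_ne_top (α := Submodule ℂ (Fin n → ℂ)) ?_⟩
    exact congrArg Subrepresentation.toSubmodule h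
  eq_bot_or_eq_top W :=
    (hρ.2 W.toSubmodule fun g _ hv => W.apply_mem_toSubmodule g hv).imp
      (fun h => Subrepresentation.toSubmodule_injective h)
      (fun h => Subrepresentation.toSubmodule_injective h)

omit [Fintype ι] [DecidableEq ι] in
theorem exists_matrix_map_eq (L : Subfield K) {M : Matrix ι ι K} (hM : ∀ i j, M i j ∈ L) :
    ∃ N : Matrix ι ι L, N.map L.subtype = M :=
  ⟨Matrix.of fun i j => ⟨M i j, hM i j⟩, rfl⟩

theorem exists_monoidHom_map_eq (L : Subfield K) {R : G →* Matrix ι ι K}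
    (hR : ∀ g i j, R g i j ∈ L) : ∃ r : G →* Matrix ι ι L,
      L.subtype.mapMatrix.toMonoidHom.comp r = R := by
  choose r hr using fun g => exists_matrix_map_eq L (hR g)
  have injective : Function.Injective (L.subtype.mapMatrix : Matrix ι ι L →+* Matrix ι ι K) :=
    Matrix.map_injective L.subtype.injective
  refine ⟨⟨⟨r, injective ?_⟩, fun g h => injective ?_⟩, MonoidHom.ext hr⟩
  · rw [map_one, RingHom.mapMatrix_apply, hr, map_one]
  · simp only [map_mul, RingHom.mapMatrix_apply, hr]

/-- The sesquilinear form on column vectors with Gram matrix `H`. -/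
def sesqForm [StarRing K] (H : Matrix ι ι K) : (ι → K) →ₗ⋆[K] (ι → K) →ₗ[K] K :=
  Matrix.toLinearMapₛₗ₂ (starRingEnd K) (Pi.basisFun K ι) (Pi.basisFun K ι) H

section Form

variable [StarRing K] {H : Matrix ι ι K}

theorem toMatrix₂_sesqForm :
    LinearMap.toMatrix₂ (Pi.basisFun K ι) (Pi.basisFun K ι) (sesqForm H) = H :=
  LinearMap.toMatrix₂_toLinearMapₛₗ₂ ..

theorem sesqForm_apply (v w : ι → K) : sesqForm H v w = star v ⬝ᵥ (H *ᵥ w) := by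
  rw [apply_eq_star_dotProduct_toMatrix₂_mulVec (Pi.basisFun K ι), toMatrix₂_sesqForm]
  rfl

theorem isUnitary_matrixRep {r : G →* Matrix ι ι K} {g : G} (h : (r g)ᴴ * H * r g = H) :
    IsUnitary (sesqForm H) (matrixRep r g) := fun v w => by
  rw [sesqForm_apply, sesqForm_apply, matrixRep_apply, matrixRep_apply, star_mulVec,
    ← dotProduct_mulVec, mulVec_mulVec, mulVec_mulVec, h]

theorem isSymm_sesqForm (h : H.IsHermitian) : (sesqForm H).IsSymm :=
  (LinearMap.isSymm_iff_isHermitian_toMatrix (Pi.basisFun K ι)).2 (by rwa [toMatrix₂_sesqForm])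

end Form

section Invariant

open scoped ComplexOrder

variable {R : G →* Matrix ι ι ℂ} {H : Matrix ι ι ℂ}

theorem conjTranspose_eq_of_invariant (hH : IsUnit H.det) (hR : ∀ g, (R g)ᴴ * H * R g = H)
    (g : G) : (R g)ᴴ = H * R g⁻¹ * H⁻¹ := by
  have := congrArg (· * R g⁻¹ * H⁻¹) (hR g)
  simp only [Matrix.mul_assoc, ← map_mul, mul_inv_cancel, map_one, Matrix.one_mul] at this
  simp only [← this, Matrix.mul_assoc, Matrix.mul_nonsing_inv _ hH, Matrix.mul_one]

theorem star_trace_eq_of_invariant (hH : IsUnit H.det) (hR : ∀ g, (R g)ᴴ * H * R g = H) (g : G) :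
    star (R g).trace = (R g⁻¹).trace := by
  rw [← Matrix.trace_conjTranspose, conjTranspose_eq_of_invariant hH hR, Matrix.trace_mul_comm,
    ← Matrix.mul_assoc, Matrix.nonsing_inv_mul _ hH, Matrix.one_mul]

/-- By Schur's lemma `H` is a scalar multiple of the positive definite form `∑ g, (R g)ᴴ * R g`. -/
theorem eq_zero_of_invariant_of_isotropic [Finite G] [(matrixRep R).IsIrreducible]
    (hH : IsUnit H.det) (hR : ∀ g, (R g)ᴴ * H * R g = H) {v : ι → ℂ}
    (hv : star v ⬝ᵥ (H *ᵥ v) = 0) : v = 0 := by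
  have := Fintype.ofFinite G
  set P := ∑ g, (R g)ᴴ * R g with hP
  have P_invariant (g : G) : (R g)ᴴ * P * R g = P := by
    simp only [hP, Finset.mul_sum, Finset.sum_mul]
    refine Fintype.sum_equiv (Equiv.mulRight g) _ _ fun h => ?_
    rw [Equiv.coe_mulRight, map_mul, Matrix.conjTranspose_mul]
    simp only [Matrix.mul_assoc]
  have commute (g : G) : Commute (H⁻¹ * P) (R g) := by
    have P_eq := P_invariant g⁻¹
    rw [conjTranspose_eq_of_invariant hH hR, inv_inv] at P_eq
    rw [Commute, SemiconjBy]
    nth_rw 1 [← P_eq]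
    simp only [Matrix.mul_assoc, ← map_mul, inv_mul_cancel, map_one, Matrix.mul_one]
    rw [← Matrix.mul_assoc H⁻¹, nonsing_inv_mul _ hH, Matrix.one_mul]
  obtain ⟨c, hc⟩ := exists_eq_smul_one_of_commute (ρ := matrixRep R)
    fun g => (commute g).map (Matrix.toLinAlgEquiv' : Matrix ι ι ℂ ≃ₐ[ℂ] _)
  have P_eq : P *ᵥ v = c • (H *ᵥ v) := by
    have : H⁻¹ *ᵥ (P *ᵥ v) = c • v := by
      rw [mulVec_mulVec]
      exact LinearMap.congr_fun hc v
    rw [← mulVec_smul, ← this, mulVec_mulVec, mul_nonsing_inv _ hH, one_mulVec]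
  have sum_eq_zero : ∑ g, star (R g *ᵥ v) ⬝ᵥ (R g *ᵥ v) = 0 := by
    calc ∑ g, star (R g *ᵥ v) ⬝ᵥ (R g *ᵥ v) = star v ⬝ᵥ (P *ᵥ v) := by
          simp only [hP, sum_mulVec, dotProduct_sum, ← mulVec_mulVec, star_mulVec,
            ← dotProduct_mulVec]
      _ = 0 := by rw [P_eq, dotProduct_smul, hv, smul_zero]
  have := (Finset.sum_eq_zero_iff_of_nonneg fun g _ => dotProduct_star_self_nonneg _).1
    sum_eq_zero 1 (Finset.mem_univ 1)
  rwa [map_one, one_mulVec, dotProduct_star_self_eq_zero] at this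

end Invariant

end MatrixRepresentation

section UnitaryDiscriminant

open ComplexConjugate

variable {G : Type} [Group G] {χ : G → ℂ}

theorem IsIrrChar.isIrreducible_matrixRep [Finite G] (hχ : IsIrrChar χ) {n : ℕ}
    {ρ : G →* GL (Fin n) ℂ} (hρ : χ = charOf ρ) :
    (matrixRep ((Units.coeHom _).comp ρ)).IsIrreducible := by
  obtain ⟨m, σ, hσ, rfl⟩ := hχ
  have := hσ.isIrreducible
  refine isIrreducible_of_character_eq (ρ := matrixRep ((Units.coeHom _).comp σ)) ?_
  ext g
  rw [character_matrixRep, character_matrixRep]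
  exact congrFun hρ g

theorem conj_mem_charField (h : ∀ g, conj (χ g) = χ g⁻¹) {z : ℂ} (hz : z ∈ charField χ) :
    conj z ∈ charField χ := by
  have : charField χ ≤ (charField χ).comap (starRingEnd ℂ) := by
    refine Subfield.closure_le.2 ?_
    rintro _ ⟨g, rfl⟩
    change conj (χ g) ∈ charField χ
    rw [h]
    exact Subfield.subset_closure ⟨g⁻¹, rfl⟩
  exact this hz

theorem NotReal.exists_im_ne_zero (h : NotReal χ) : ∃ g, (χ g).im ≠ 0 := by
  by_contra! hχ
  refine h (Subfield.closure_le.2 ?_)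
  rintro _ ⟨g, rfl⟩
  exact Subfield.subset_closure ⟨(χ g).re, Complex.ext rfl (hχ g).symm⟩

/-- The restriction of complex conjugation to a subfield that it preserves. -/
abbrev conjStarRing (L : Subfield ℂ) (hL : ∀ z ∈ L, conj z ∈ L) : StarRing L where
  star z := ⟨conj (z : ℂ), hL z z.2⟩
  star_involutive _ := Subtype.ext (Complex.conj_conj _)
  star_mul a b := Subtype.ext ((map_mul (starRingEnd ℂ) (a : ℂ) b).trans (mul_comm _ _))
  star_add a b := Subtype.ext (map_add (starRingEnd ℂ) (a : ℂ) b)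

theorem map_conjTranspose_of_star_eq {ι : Type*} {L : Subfield ℂ} [StarRing L]
    (star_eq : ∀ z : L, (star z : L) = conj (z : ℂ)) (M : Matrix ι ι L) :
    Mᴴ.map L.subtype = (M.map L.subtype)ᴴ := by
  ext i j
  exact star_eq (M j i)

theorem isAnisotropicHermitian_sesqForm [Finite G] {n : ℕ} {L : Subfield ℂ} [StarRing L]
    (star_eq : ∀ z : L, (star z : L) = conj (z : ℂ)) {r : G →* Matrix (Fin n) (Fin n) L}
    [(matrixRep (L.subtype.mapMatrix.toMonoidHom.comp r)).IsIrreducible]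
    {H : Matrix (Fin n) (Fin n) L} (hdet : IsUnit H.det) (hH : H.IsHermitian)
    (hr : ∀ g, (r g)ᴴ * H * r g = H) : IsAnisotropicHermitian (sesqForm H) := by
  refine ⟨isSymm_sesqForm hH, fun v hv => ?_⟩
  have := eq_zero_of_invariant_of_isotropic (R := L.subtype.mapMatrix.toMonoidHom.comp r)
    (H := L.subtype.mapMatrix H) (v := L.subtype ∘ v) ?_ ?_ ?_
  · exact funext fun i => Subtype.ext (congrFun this i)
  · rw [← RingHom.map_det]
    exact hdet.map L.subtype
  · intro g
    have := congrArg L.subtype.mapMatrix (hr g)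
    rwa [map_mul, map_mul, RingHom.mapMatrix_apply, map_conjTranspose_of_star_eq star_eq] at this
  · have := congrArg L.subtype hv
    rw [sesqForm_apply, RingHom.map_dotProduct, map_zero] at this
    have star_map : L.subtype ∘ star v = star (L.subtype ∘ v) := funext fun i => star_eq (v i)
    have mulVec_map : L.subtype ∘ (H *ᵥ v) = L.subtype.mapMatrix H *ᵥ (L.subtype ∘ v) :=
      funext (RingHom.map_mulVec L.subtype H v)
    rwa [star_map, mulVec_map] at this

theorem hasUnitaryDisc_of_hasDisc [Finite G] (hχ : IsIrrChar χ) {d : ℤ}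
    (h : ∀ [StarRing (charField χ)],
      (∀ z : charField χ, (star z : charField χ) = conj (z : ℂ)) →
      ∀ {n : ℕ} (ρ : Representation (charField χ) G (Fin n → charField χ))
        (B : (Fin n → charField χ) →ₗ⋆[charField χ] (Fin n → charField χ) →ₗ[charField χ]
          charField χ), (∀ g, ρ.character g = χ g) → IsAnisotropicHermitian B →
        (∀ g, IsUnitary B (ρ g)) → HasDisc B ((-1) ^ (n * (n - 1) / 2) * d)) :
    HasUnitaryDisc χ d := by
  intro n ρ hρ hR H hH det_unit hermitian invariant
  let R : G →* Matrix (Fin n) (Fin n) ℂ := (Units.coeHom _).comp ρ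
  have conj_eq (g : G) : conj (χ g) = χ g⁻¹ := by
    rw [hρ]
    exact star_trace_eq_of_invariant (R := R) det_unit invariant g
  let := conjStarRing (charField χ) fun z => conj_mem_charField conj_eq
  have star_eq (z : charField χ) : (star z : charField χ) = conj (z : ℂ) := rfl
  obtain ⟨r, hr⟩ := exists_monoidHom_map_eq (charField χ) (R := R) hR
  obtain ⟨N, rfl⟩ := exists_matrix_map_eq (charField χ) hH
  have injective : Function.Injective fun M : Matrix (Fin n) (Fin n) (charField χ) =>
      M.map (charField χ).subtype := Matrix.map_injective (charField χ).subtype.injective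
  have det_eq : (N.det : ℂ) = (N.map (charField χ).subtype).det :=
    RingHom.map_det (charField χ).subtype N
  have r_map (g : G) : (r g).map (charField χ).subtype = ρ g := DFunLike.congr_fun hr g
  have N_hermitian : N.IsHermitian := injective hermitian
  have N_invariant (g : G) : (r g)ᴴ * N * r g = N := injective <| by
    simp only [Matrix.map_mul, map_conjTranspose_of_star_eq star_eq, r_map, invariant g]
  have : (matrixRep ((charField χ).subtype.mapMatrix.toMonoidHom.comp r)).IsIrreducible :=
    hr ▸ hχ.isIrreducible_matrixRep hρ
  have character_eq (g : G) : (((matrixRep r).character g : charField χ) : ℂ) = χ g := by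
    rw [character_matrixRep]
    exact (AddMonoidHom.map_trace (charField χ).subtype (r g)).trans
      ((congrArg Matrix.trace (r_map g)).trans (congrFun hρ g).symm)
  have N_det : IsUnit N.det := by
    rw [isUnit_iff_ne_zero] at det_unit ⊢
    exact fun h0 => det_unit (by rw [← det_eq, h0]; rfl)
  obtain ⟨z, hz, hdet⟩ := (h star_eq (matrixRep r) (sesqForm N) character_eq
    (isAnisotropicHermitian_sesqForm (r := r) star_eq N_det N_hermitian N_invariant)
    fun g => isUnitary_matrixRep (N_invariant g)).normEquiv_det (Pi.basisFun _ _)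
  refine ⟨z, z.2, fun h0 => hz (Subtype.ext h0), ?_⟩
  rw [toMatrix₂_sesqForm] at hdet
  rw [← det_eq, hdet]
  push_cast
  rw [← mul_assoc, ← mul_assoc _ _ (d : ℂ), ← mul_pow, neg_one_mul, neg_neg, one_pow, one_mul]
  rfl

end UnitaryDiscriminant

section Discriminant

open Module ComplexConjugate

theorem mod_four_eq_three_and_odd_of_pow {p k : ℕ} (hp : Odd p) (h : p ^ k % 4 = 3) :
    p % 4 = 3 ∧ Odd k := by
  have hp4 : p % 4 = 1 ∨ p % 4 = 3 := Nat.odd_mod_four_iff.1 (Nat.odd_iff.1 hp)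
  obtain ⟨c, rfl | rfl⟩ := k.even_or_odd'
  · rcases hp4 with hp4 | hp4 <;> norm_num [pow_mul, Nat.pow_mod, hp4] at h
  · refine ⟨hp4.resolve_left fun hp1 => ?_, odd_two_mul_add_one c⟩
    norm_num [Nat.pow_mod, hp1] at h

theorem mod_two_eq_of_mod_four_eq_three {q k d m : ℕ} {ε : ℤ} (hq : q % 4 = 3) (hk : Odd k)
    (hd : 4 * (d : ℤ) = (q - 1) * (q + ε)) (hm : (q : ℤ) + ε ≡ 2 * m [ZMOD 4]) :
    d % 2 = k * m % 2 := by
  obtain ⟨c, rfl⟩ : ∃ c, q = 4 * c + 3 := ⟨q / 4, by omega⟩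
  obtain ⟨l, rfl⟩ := hk
  obtain ⟨r, hr⟩ := Int.modEq_iff_dvd.1 hm
  have d_eq : (d : ℤ) = m + 2 * (c * (m - 2 * r) - r) := by
    rw [show ((4 * c + 3 : ℕ) : ℤ) + ε = 2 * (m - 2 * r) by linarith] at hd
    push_cast at hd
    linarith
  rw [show (2 * l + 1) * m = m + 2 * (l * m) by ring]
  omega

theorem neg_one_pow_mul_pred_choose_two {R : Type*} [Ring R] {q : ℕ} (hq : Odd q) :
    (-1 : R) ^ (q * (q - 1) * (q * (q - 1) - 1) / 2) = (-1) ^ ((q - 1) / 2) := by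
  obtain ⟨c, rfl⟩ := hq
  obtain rfl | hc := c.eq_zero_or_pos
  · simp
  have odd_mul_pred : Odd ((2 * c + 1) * (2 * ((2 * c + 1) * c) - 1)) :=
    (odd_two_mul_add_one c).mul
      (Nat.Even.sub_odd (by nlinarith) (even_two_mul _) odd_one)
  rw [Nat.add_sub_cancel, mul_left_comm, mul_assoc 2, Nat.mul_div_cancel_left _ two_pos,
    Nat.mul_div_cancel_left _ two_pos, mul_right_comm, mul_comm, pow_mul', odd_mul_pred.neg_one_pow]

namespace IsRootTorusAction

open LinearMap

variable {L V F : Type*} [Field L] [StarRing L] [AddCommGroup V] [Module L V] [Field F]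
  [StarRing F] {B : V →ₗ⋆[L] V →ₗ[L] L} {X : AddChar (skewAdjoint F) (Module.End L V)}
  {T : Representation L Fˣ V} [Fintype F] [CharZero L] [FiniteDimensional L V] {p k : ℕ}
  [Fact p.Prime] [CharP F p]

theorem hasDisc_pow (h : IsRootTorusAction B X T) (hB : IsAnisotropicHermitian B)
    (hF : IsFrobeniusStar F (p ^ k)) (hodd : Odd p) {w : L} (hw : w * star w = 1)
    (hw_pow : w ^ (p ^ k + 1) = 1) (hw_sq : w ^ 2 ≠ 1)
    (hdim : finrank L V = p ^ k * (p ^ k - 1)) {ε : ℤ}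
    (htr : trace L V (T (-1)) = ε * ((p ^ k : ℕ) - 1)) {m : ℕ}
    (hm : (p ^ k : ℕ) + ε ≡ 2 * m [ZMOD 4]) : HasDisc B (((p ^ k : ℕ) : L) ^ m) := by
  have hk := hF.one_lt
  have p_ne_zero : (p : L) ≠ 0 := Nat.cast_ne_zero.2 (NeZero.ne p)
  have T_sq : T (-1) ^ 2 = 1 := by rw [← map_pow, neg_one_sq, map_one]
  have finrank_eq : 2 * (finrank L (ker (T (-1) - 1)) : ℤ) =
      ((p ^ k : ℕ) - 1) * ((p ^ k : ℕ) + ε) := by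
    have := finrank_ker_sub_one T_sq
    rw [hdim, htr, Nat.cast_mul, Nat.cast_sub hk.le, Nat.cast_one] at this
    rw [← Int.cast_inj (α := L)]
    push_cast at this ⊢
    rw [this]
    ring
  have q_ne_one : ((p ^ k : ℕ) : ℤ) - 1 ≠ 0 := by omega
  rcases Nat.odd_mod_four_iff.1 (Nat.odd_iff.1 hF.odd) with hq | hq
  · obtain ⟨d, hd, hdisc⟩ := h.hasDisc_of_mod_four_eq_one hB hF hodd hw hw_pow hw_sq hq
    have two_mul_d : 2 * (d : ℤ) = (p ^ k : ℕ) + ε := mul_left_cancel₀ q_ne_one <| by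
      rw [← finrank_eq, hd, Nat.cast_mul, Nat.cast_sub hk.le, Nat.cast_one]
      ring
    refine hdisc.congr (normEquiv_pow_of_mod_two (by exact_mod_cast pow_ne_zero k p_ne_zero)
      (star_natCast _) ?_)
    rw [← two_mul_d, Int.ModEq] at hm
    omega
  · obtain ⟨hp, hk_odd⟩ := mod_four_eq_three_and_odd_of_pow hodd hq
    obtain ⟨d, hd, hdisc⟩ := h.hasDisc_of_mod_four_eq_three hB hF hodd hw hw_pow hw_sq hp
    have four_mul_d : 4 * (d : ℤ) = ((p ^ k : ℕ) - 1) * ((p ^ k : ℕ) + ε) := by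
      rw [← finrank_eq, hd, Nat.cast_mul, ← mul_assoc]
      rfl
    rw [Nat.cast_pow, ← pow_mul]
    exact hdisc.congr (normEquiv_pow_of_mod_two p_ne_zero (star_natCast p)
      (mod_two_eq_of_mod_four_eq_three hq hk_odd four_mul_d hm))

end IsRootTorusAction

section Field

variable {L V F G : Type*} [Field L] [CharZero L] [AddCommGroup V] [Module L V]
  [FiniteDimensional L V] [StarRing L] [Field F] [StarRing F] [Fintype F] [Group G]
  {B : V →ₗ⋆[L] V →ₗ[L] L} {x : AddChar (skewAdjoint F) G} {v : F → G} {t : Fˣ →* G}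
  {ρ : Representation L G V}

omit [StarRing L] in
theorem eq_zero_of_sum_character_eq_zero {A : Type*} [Group A] [Fintype A]
    {ρ : Representation L A V} (h : ∑ a, ρ.character a = 0) {v : V} (hv : ∀ a, ρ a v = v) :
    v = 0 := by
  have : Invertible (Nat.card A : L) := invertibleOfNonzero (Nat.cast_ne_zero.2 Nat.card_pos.ne')
  have finrank_eq := ρ.card_inv_mul_sum_char_eq_finrank
  rw [h, mul_zero, eq_comm, Nat.cast_eq_zero, Submodule.finrank_eq_zero] at finrank_eq
  exact (Submodule.mem_bot L).1 (finrank_eq ▸ hv)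

theorem IsUnitaryBorel.isRootTorusAction (hB : IsUnitaryBorel x v t)
    (hρ : ∀ g, IsUnitary B (ρ g)) (hx : ∑ b, ρ.character (x b) = 0) :
    IsRootTorusAction B (ρ.compAddChar x) (ρ.comp t) where
  isUnitary_root b := hρ (x b)
  isUnitary_torus τ := hρ (t τ)
  semiconjBy τ b := (hB.torus_root τ b).map ρ
  eq_zero_of_fixed _ hv :=
    eq_zero_of_sum_character_eq_zero (A := Multiplicative (skewAdjoint F))
      (ρ := ρ.comp x.toMonoidHom)
      ((Fintype.sum_equiv Multiplicative.toAdd _ _ fun _ => rfl).trans hx) hv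

end Field

variable {F G : Type} [Field F] [StarRing F] [Fintype F] [Group G] {x : AddChar (skewAdjoint F) G}
  {v : F → G} {t : Fˣ →* G} {χ : G → ℂ} {q : ℕ}

namespace IsUnitaryBorel

variable (hB : IsUnitaryBorel x v t) (hF : IsFrobeniusStar F q) {ε : ℤ} (hε : ε ^ 2 = 1)
include hB hF hε

theorem sum_irrChar_root_eq_zero {n : ℕ} {ρ : Representation ℂ G (Fin n → ℂ)} [ρ.IsIrreducible]
    (hdeg : ρ.character 1 = q * (q - 1)) (htr : ρ.character (t (-1)) = ε * (q - 1)) :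
    ∑ b, ρ (x b) = 0 := by
  have pred_ne_zero : (q : ℂ) - 1 ≠ 0 := sub_ne_zero.2 (Nat.cast_ne_one.2 hF.one_lt.ne')
  have ε_sq : (ε : ℂ) ^ 2 = 1 := by exact_mod_cast hε
  refine hB.sum_root_eq_zero hF.two_ne_zero ?_ ?_
  · rw [htr]
    refine mul_ne_zero (fun h0 => ?_) pred_ne_zero
    norm_num [h0] at ε_sq
  · rw [htr, hdeg, mul_pow, mul_pow, ε_sq]
    intro h
    have := mul_right_cancel₀ (pow_ne_zero 2 pred_ne_zero) h
    exact (one_lt_pow₀ hF.one_lt two_ne_zero).ne (by exact_mod_cast this)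

theorem exists_root_of_unity_mem_charField [Finite G] (hχ : IsIrrChar χ) (hnr : NotReal χ)
    (hdeg : χ 1 = q * (q - 1)) (htr : χ (t (-1)) = ε * (q - 1)) :
    ∑ b, χ (x b) = 0 ∧
      ∃ w ∈ charField χ, w * conj w = 1 ∧ w ^ (q + 1) = 1 ∧ w ^ 2 ≠ 1 := by
  obtain ⟨g, hg⟩ := hnr.exists_im_ne_zero
  obtain ⟨n, r, -, hr⟩ := id hχ
  let ρ := matrixRep ((Units.coeHom _).comp r)
  have : ρ.IsIrreducible := hχ.isIrreducible_matrixRep hr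
  have character_eq : ρ.character = χ := funext fun g => by
    rw [hr]
    exact character_matrixRep _ g
  rw [← character_eq] at hdeg htr hg
  have sum_eq := hB.sum_irrChar_root_eq_zero hF hε hdeg htr
  obtain ⟨τ, hτ, value_sq⟩ := hB.exists_torusValue_sq_ne_one hF sum_eq hg
  have value_pow := hB.torusValue_pow_card hF sum_eq hdeg hτ
  obtain ⟨s, -, value_eq⟩ := exists_torusValue_eq_rat_mul (ρ := ρ) (t := t) hF.one_lt τ
  refine ⟨?_, torusValue ρ t q τ, ?_, ?_, value_pow, value_sq⟩
  · rw [← character_eq]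
    exact (map_sum (LinearMap.trace ℂ _) _ _).symm.trans (by rw [sum_eq, map_zero])
  · rw [value_eq, character_eq]
    exact mul_mem (SubfieldClass.ratCast_mem _ s) (Subfield.subset_closure ⟨_, rfl⟩)
  · rw [Complex.mul_conj, Complex.normSq_eq_norm_sq,
      Complex.norm_eq_one_of_pow_eq_one value_pow q.succ_ne_zero, one_pow, Complex.ofReal_one]

omit hF in
theorem hasUnitaryDisc [Finite G] {p k : ℕ} [Fact p.Prime] [CharP F p]
    (hF : IsFrobeniusStar F (p ^ k)) (hodd : Odd p) (hχ : IsIrrChar χ) (hnr : NotReal χ)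
    (hdeg : χ 1 = (p ^ k : ℕ) * ((p ^ k : ℕ) - 1))
    (htr : χ (t (-1)) = ε * ((p ^ k : ℕ) - 1)) {m : ℕ}
    (hm : (p ^ k : ℕ) + ε ≡ 2 * m [ZMOD 4]) :
    HasUnitaryDisc χ (((-1) ^ ((p ^ k - 1) / 2) * (p ^ k : ℕ) ^ m : ℤ) : ℂ) := by
  obtain ⟨sum_eq, w, hw, w_conj, w_pow, w_sq⟩ :=
    hB.exists_root_of_unity_mem_charField hF hε hχ hnr hdeg htr
  refine hasUnitaryDisc_of_hasDisc hχ fun star_eq n ρ B character_eq hanis hunit => ?_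
  have hn : n = p ^ k * (p ^ k - 1) := by
    have := character_eq 1
    rw [ρ.char_one, finrank_fin_fun, hdeg] at this
    have hk := hF.one_lt
    have : (n : ℂ) = ((p ^ k * (p ^ k - 1) : ℕ) : ℂ) := by
      rw [Nat.cast_mul, Nat.cast_sub hk.le, Nat.cast_one]
      exact this
    exact_mod_cast this
  have root_action : IsRootTorusAction B (ρ.compAddChar x) (ρ.comp t) :=
    hB.isRootTorusAction hunit <| Subtype.ext <| by
      rw [AddSubmonoidClass.coe_finsetSum]
      exact (Finset.sum_congr rfl fun b _ => character_eq (x b)).trans sum_eq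
  have := root_action.hasDisc_pow hanis hF hodd (w := ⟨w, hw⟩) (m := m) (ε := ε)
    (Subtype.ext <| by rw [Subfield.coe_mul, star_eq]; exact w_conj)
    (Subtype.ext w_pow) (fun h => w_sq (congrArg Subtype.val h)) (by rw [finrank_fin_fun, hn])
    (Subtype.ext <| (character_eq _).trans (by rw [htr]; push_cast; rfl)) hm
  have signs : (-1 : charField χ) ^ (n * (n - 1) / 2) *
      (((-1) ^ ((p ^ k - 1) / 2) * (p ^ k : ℕ) ^ m : ℤ) : charField χ) = (p ^ k : ℕ) ^ m := by
    rw [hn, neg_one_pow_mul_pred_choose_two hF.odd]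
    push_cast
    rw [← mul_assoc, ← mul_pow, neg_one_mul, neg_neg, one_pow, one_mul]
  rwa [signs]

end IsUnitaryBorel

end Discriminant

/-- unitary discriminants of the degree `q²-q` characters of the
Borel subgroup of `SU₃(q)`, `q` odd, in terms of the value at `t₀ = diag(-1,1,-1)`. -/
theorem stmt12 (p k q : ℕ) (hp : p.Prime) (hpodd : Odd p) (hk : 0 < k) (hq : q = p ^ k)
    (F : Type) [Field F] [Fintype F] [ExpChar F p] (hF : Fintype.card F = q ^ 2)
    (t₀ : ↥(Borel p k F))
    (ht₀ : (((t₀ : ↥(SU3 p k F)) : Matrix.SpecialLinearGroup (Fin 3) F) :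
      Matrix (Fin 3) (Fin 3) F) = Matrix.diagonal ![-1, 1, -1])
    (ϑ : ↥(Borel p k F) → ℂ) (hϑ : IsIrrChar ϑ)
    (hdeg : ϑ 1 = ((q ^ 2 - q : ℕ) : ℂ))
    (hnr : NotReal ϑ) :
    (ϑ t₀ = (q : ℂ) - 1 →
      (q % 4 = 1 → HasUnitaryDisc ϑ (q : ℂ)) ∧
      (q % 4 = 3 → HasUnitaryDisc ϑ (-1 : ℂ))) ∧
    (ϑ t₀ = -((q : ℂ) - 1) →
      (q % 4 = 1 → HasUnitaryDisc ϑ (1 : ℂ)) ∧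
      (q % 4 = 3 → HasUnitaryDisc ϑ (-(q : ℂ)))) := by
  subst hq
  have : Fact p.Prime := ⟨hp⟩
  have : CharP F p := by
    cases ‹ExpChar F p› with
    | zero => exact absurd hp Nat.not_prime_one
    | prime => assumption
  let := frobeniusStarRing hF
  have one_lt : 1 < p ^ k := Nat.one_lt_pow hk.ne' hp.one_lt
  have frob := isFrobeniusStar_frobeniusStarRing hpodd.pow one_lt hF
  rw [sq, ← Nat.mul_sub_one, Nat.cast_mul, Nat.cast_pred (by omega)] at hdeg
  obtain rfl := eq_torusHom_neg_one frob ht₀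
  have disc {ε : ℤ} {m : ℕ} (hε : ε ^ 2 = 1)
      (htr : ϑ (torusHom frob (-1)) = ε * ((p ^ k : ℕ) - 1))
      (hm : ((p ^ k : ℕ) + ε) % 4 = 2 * m % 4) :=
    (isUnitaryBorel frob).hasUnitaryDisc hε frob hpodd hϑ hnr hdeg htr hm
  have sign_one (h : p ^ k % 4 = 1) : (-1 : ℤ) ^ ((p ^ k - 1) / 2) = 1 :=
    Even.neg_one_pow (Nat.even_iff.2 (by omega))
  have sign_three (h : p ^ k % 4 = 3) : (-1 : ℤ) ^ ((p ^ k - 1) / 2) = -1 :=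
    Odd.neg_one_pow (Nat.odd_iff.2 (by omega))
  refine ⟨fun htr => ⟨fun h => ?_, fun h => ?_⟩, fun htr => ⟨fun h => ?_, fun h => ?_⟩⟩
  · simpa [sign_one h] using disc (m := 1) (one_pow 2) (by simpa using htr) (by omega)
  · simpa [sign_three h] using disc (m := 0) (one_pow 2) (by simpa using htr) (by omega)
  · simpa [sign_one h] using disc (m := 0) neg_one_sq (by simpa using htr) (by omega)
  · simpa [sign_three h] using disc (m := 1) neg_one_sq (by simpa using htr) (by omega)

end Paper
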